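/- Fix k ∈ ℕ and real numbers m_ρ, m^I_1,...,m^I_k, m^D_1,...,m^D_k. Then lim_{n→∞} ( P_n[ρ̃_∞(σ) < m_ρ and Ĩ_j(σ) > m^I_j and D̃_j(σ) > m^D_j for all j ∈ {1,...,k}] − P_n[ρ̃_∞(σ) < m_ρ]·P_n[Ĩ_j(σ) > m^I_j and D̃_j(σ) > m^D_j for all j ∈ {1,...,k}] ) = 0. -/

import Mathlib

open scoped BigOperators Classical
open Finset Filter

/-- Probability of an event under the uniform measure on `S_n`. -/
noncomputable def Pn {n : ℕ} (p : Equiv.Perm (Fin n) → Prop) : ℝ :=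
  ((Finset.univ.filter p).card : ℝ) / (Fintype.card (Equiv.Perm (Fin n)) : ℝ)

/-- Spearman's uniform metric `ρ_∞(σ) = max_i |σ(i) − i|` (as a natural number). -/
def rhoInf {n : ℕ} (σ : Equiv.Perm (Fin n)) : ℕ :=
  Finset.univ.sup fun i : Fin n => (((σ i : ℕ) : ℤ) - ((i : ℕ) : ℤ)).natAbs

/-- Normalized Spearman's uniform metric `ρ̃_∞ = (n − ρ_∞)/√n`. -/
noncomputable def rhoInfTilde {n : ℕ} (σ : Equiv.Perm (Fin n)) : ℝ :=
  ((n : ℝ) - (rhoInf σ : ℝ)) / Real.sqrt n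

/-- The maximum cardinality of a union of `j` increasing subsequences of `σ`.
By Greene's theorem this equals `I_1(σ) + ⋯ + I_j(σ)`, the sum of the lengths of the
first `j` rows of the RSK Young diagram of `σ`. -/
noncomputable def maxIncUnion {n : ℕ} (j : ℕ) (σ : Equiv.Perm (Fin n)) : ℕ :=
  Finset.univ.sup fun c : Fin j → Finset (Fin n) =>
    if ∀ t : Fin j, StrictMonoOn (fun i => σ i) ((c t : Finset (Fin n)) : Set (Fin n))
    then (Finset.univ.biUnion c).card else 0

/-- The maximum cardinality of a union of `j` decreasing subsequences of `σ`.
By Greene's theorem this equals `D_1(σ) + ⋯ + D_j(σ)`, the sum of the lengths of the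
first `j` columns of the RSK Young diagram of `σ`. -/
noncomputable def maxDecUnion {n : ℕ} (j : ℕ) (σ : Equiv.Perm (Fin n)) : ℕ :=
  Finset.univ.sup fun c : Fin j → Finset (Fin n) =>
    if ∀ t : Fin j, StrictAntiOn (fun i => σ i) ((c t : Finset (Fin n)) : Set (Fin n))
    then (Finset.univ.biUnion c).card else 0

/-- `I_j(σ)`, the length of the `j`-th row of the RSK Young diagram of `σ`, defined
via Greene's theorem by the partial-sum relation. -/
noncomputable def rowLen {n : ℕ} (j : ℕ) (σ : Equiv.Perm (Fin n)) : ℕ :=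
  maxIncUnion j σ - maxIncUnion (j - 1) σ

/-- `D_j(σ)`, the length of the `j`-th column of the RSK Young diagram of `σ`, defined
via Greene's theorem by the partial-sum relation. -/
noncomputable def colLen {n : ℕ} (j : ℕ) (σ : Equiv.Perm (Fin n)) : ℕ :=
  maxDecUnion j σ - maxDecUnion (j - 1) σ

/-- The normalized row length `Ĩ_j = (I_j − 2√n)/n^{1/6}`. -/
noncomputable def rowLenTilde {n : ℕ} (j : ℕ) (σ : Equiv.Perm (Fin n)) : ℝ :=
  ((rowLen j σ : ℝ) - 2 * Real.sqrt n) / (n : ℝ) ^ ((1 : ℝ) / 6)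

/-- The normalized column length `D̃_j = (D_j − 2√n)/n^{1/6}`. -/
noncomputable def colLenTilde {n : ℕ} (j : ℕ) (σ : Equiv.Perm (Fin n)) : ℝ :=
  ((colLen j σ : ℝ) - 2 * Real.sqrt n) / (n : ℝ) ^ ((1 : ℝ) / 6)

/-!
By Greene's theorem the rows `I_j` are the row lengths of the Robinson–Schensted shape, which
follows the Plancherel measure. Let `v` be the probability that Plancherel growth adds box `n + 1`
to a given row. Cauchy–Schwarz gives `√(n + 1) * v ≤ 1`, and near equality the law of that row is
almost invariant under a unit shift, so that it puts little mass on any bounded window. Summing over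
`n`, the mean of `(I_1 + ⋯ + I_k) / √n` is at most `2 k`; comparison of squares shows that it
converges to some `c`.

If `c < 2 k`, a variance bound makes the event that all `Ĩ_j > m_j` asymptotically negligible. If
`c = 2 k`, then `√n * v → 1` for each of the first `k` rows, and a row, or by reversal a column, is
within a bounded distance of its threshold with probability tending to `0`. Whether `ρ̃_∞ < m` is
decided by the points of `σ` whose index and value are within `O(√n)` of the ends; their number is
bounded in mean. Removing such a point by a transposition changes every row and column by a bounded
amount, so, up to a negligible set, the rows and columns do not see these points.
-/

/-! ### Standard Young tableaux and Plancherel growth -/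

section PiAntidiag

variable {ι : Type*} [DecidableEq ι] {s : Finset ι} {n : ℕ} {i : ι}

lemma sub_single_add_single {f : ι → ℕ} (h : 0 < f i) : f - Pi.single i 1 + Pi.single i 1 = f := by
  funext j
  by_cases hj : j = i
  · subst hj; simp [Nat.sub_add_cancel h]
  · simp [hj]

lemma add_single_mem_piAntidiag {f : ι → ℕ} (hf : f ∈ piAntidiag s n) (hi : i ∈ s) :
    f + Pi.single i 1 ∈ piAntidiag s (n + 1) := by
  rw [mem_piAntidiag] at hf ⊢
  refine ⟨by simp [sum_add_distrib, hf.1, hi], fun j hj => ?_⟩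
  by_cases hji : j = i
  · exact hji ▸ hi
  · exact hf.2 j (by simpa [hji] using hj)

lemma sub_single_mem_piAntidiag {f : ι → ℕ} (hf : f ∈ piAntidiag s (n + 1)) (hi : 0 < f i) :
    f - Pi.single i 1 ∈ piAntidiag s n := by
  rw [mem_piAntidiag] at hf ⊢
  refine ⟨?_, fun j hj => hf.2 j fun h0 => hj (by simp [h0])⟩
  have hsum := hf.1
  rw [← sub_single_add_single hi] at hsum
  simpa [sum_add_distrib, hf.2 i hi.ne'] using hsum

variable {M : Type*} [AddCommMonoid M]

lemma sum_piAntidiag_succ_filter_pos (hi : i ∈ s) (φ : (ι → ℕ) → M) :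
    ∑ μ ∈ piAntidiag s (n + 1) with 0 < μ i, φ μ = ∑ ν ∈ piAntidiag s n, φ (ν + Pi.single i 1) := by
  refine sum_bij' (fun μ _ => μ - Pi.single i 1) (fun ν _ => ν + Pi.single i 1) ?_ ?_ ?_ ?_ ?_
  · intro μ h
    exact sub_single_mem_piAntidiag (mem_filter.1 h).1 (mem_filter.1 h).2
  · intro ν h
    exact mem_filter.2 ⟨add_single_mem_piAntidiag h hi, by simp⟩
  · intro μ h
    exact sub_single_add_single (mem_filter.1 h).2
  · intro ν _
    exact add_tsub_cancel_right ν _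
  · intro μ h
    rw [sub_single_add_single (mem_filter.1 h).2]

lemma sum_piAntidiag_succ_sum_sub_single (G : (ι → ℕ) → ι → M) :
    ∑ μ ∈ piAntidiag s (n + 1), ∑ i ∈ s, (if 0 < μ i then G (μ - Pi.single i 1) i else 0) =
      ∑ ν ∈ piAntidiag s n, ∑ i ∈ s, G ν i := by
  rw [sum_comm, sum_comm (s := piAntidiag s n)]
  refine sum_congr rfl fun i hi => ?_
  rw [← sum_filter, sum_piAntidiag_succ_filter_pos hi]
  simp only [add_tsub_cancel_right]

end PiAntidiag

/-- The indicator of row `l`: adding it to a shape `λ : ℕ → ℕ`, given by its row lengths, adds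
a box to row `l`. Rows are numbered from `0`. -/
abbrev rowBox (l : ℕ) : ℕ → ℕ := Pi.single l 1

/-- The number of standard Young tableaux with `n` boxes, row lengths `μ` and at most `B` rows,
defined by the branching rule. It vanishes unless `μ` is a partition of `n` with at most `B`
rows. -/
noncomputable def sytCount (B : ℕ) : ℕ → (ℕ → ℕ) → ℕ
  | 0, μ => if μ = 0 then 1 else 0
  | n + 1, μ =>
    if Antitone μ then ∑ l ∈ range B, if 0 < μ l then sytCount B n (μ - rowBox l) else 0 else 0

section Branching

variable {B n l m : ℕ} {f : ℕ → ℕ}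

lemma sytCount_succ_of_antitone (hf : Antitone f) :
    sytCount B (n + 1) f = ∑ l ∈ range B, if 0 < f l then sytCount B n (f - rowBox l) else 0 := by
  rw [sytCount, if_pos hf]

lemma sytCount_succ_of_not_antitone (hf : ¬ Antitone f) : sytCount B (n + 1) f = 0 := by
  rw [sytCount, if_neg hf]

lemma antitone_and_mem_of_sytCount_ne_zero :
    ∀ {n : ℕ} {f : ℕ → ℕ}, sytCount B n f ≠ 0 → Antitone f ∧ f ∈ piAntidiag (range B) n
  | 0, f, h => by
    obtain rfl : f = 0 := by by_contra hf; exact h (if_neg hf)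
    exact ⟨antitone_const, by simp⟩
  | n + 1, f, h => by
    have hf : Antitone f := by
      by_contra hf
      exact h (sytCount_succ_of_not_antitone hf)
    rw [sytCount_succ_of_antitone hf] at h
    obtain ⟨l, hl, hne⟩ := exists_ne_zero_of_sum_ne_zero h
    have hpos : 0 < f l := by by_contra h0; exact hne (if_neg h0)
    rw [if_pos hpos] at hne
    refine ⟨hf, ?_⟩
    simpa only [sub_single_add_single hpos] using
      add_single_mem_piAntidiag (antitone_and_mem_of_sytCount_ne_zero hne).2 hl

lemma antitone_of_sytCount_ne_zero (h : sytCount B n f ≠ 0) : Antitone f :=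
  (antitone_and_mem_of_sytCount_ne_zero h).1

lemma antitone_nat_iff_succ_le : Antitone f ↔ ∀ i, f (i + 1) ≤ f i :=
  ⟨fun h i => h i.le_succ, antitone_nat_of_succ_le⟩

lemma antitone_add_rowBox_zero (hf : Antitone f) : Antitone (f + rowBox 0) :=
  antitone_nat_of_succ_le fun i => by
    have := hf (Nat.le_add_right i 1)
    simp [Pi.single_apply]
    omega

lemma antitone_add_rowBox_succ_iff (hf : Antitone f) :
    Antitone (f + rowBox (l + 1)) ↔ f (l + 1) < f l := by
  refine ⟨fun h => by simpa [Pi.single_apply] using h l.le_succ, fun h => ?_⟩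
  refine antitone_nat_of_succ_le fun i => ?_
  have := hf (Nat.le_add_right i 1)
  simp only [Pi.add_apply, Pi.single_apply, add_left_inj]
  split_ifs <;> first | omega | (subst_vars; omega)

lemma pos_and_antitone_sub_rowBox_iff (hf : Antitone f) :
    0 < f l ∧ Antitone (f - rowBox l) ↔ f (l + 1) < f l := by
  constructor
  · rintro ⟨hpos, h⟩
    have := h (Nat.le_add_right l 1)
    simp at this
    omega
  · refine fun h => ⟨by omega, antitone_nat_of_succ_le fun i => ?_⟩
    have := hf (Nat.le_add_right i 1)
    simp only [Pi.sub_apply, Pi.single_apply]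
    split_ifs <;> first | omega | (subst_vars; omega)

lemma apply_eq_zero_of_antitone_of_mem_piAntidiag (hf : Antitone f)
    (hmem : f ∈ piAntidiag (range (B + 1)) n) (hn : n ≤ B) : f B = 0 := by
  by_contra hB
  have hsum : ∑ i ∈ range (B + 1), 1 ≤ ∑ i ∈ range (B + 1), f i := sum_le_sum fun i hi => by
    have := hf (mem_range_succ_iff.1 hi)
    omega
  rw [(mem_piAntidiag.1 hmem).1] at hsum
  simp at hsum
  omega

lemma card_addable_eq_card_removable_add_one (hn : n < B) (hf : Antitone f)
    (hmem : f ∈ piAntidiag (range B) n) :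
    #{l ∈ range B | Antitone (f + rowBox l)} =
      #{l ∈ range B | 0 < f l ∧ Antitone (f - rowBox l)} + 1 := by
  obtain ⟨B, rfl⟩ : ∃ B', B = B' + 1 := ⟨B - 1, by omega⟩
  have hlast := apply_eq_zero_of_antitone_of_mem_piAntidiag hf hmem (by omega)
  simp only [pos_and_antitone_sub_rowBox_iff hf, card_filter]
  rw [sum_range_succ', sum_range_succ]
  simp only [antitone_add_rowBox_succ_iff hf, if_pos (antitone_add_rowBox_zero hf)]
  simp [hlast]

lemma antitone_of_antitone_sub_rowBox_add_rowBox (hf : Antitone f) (hlm : l ≠ m) (hm : 0 < f m)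
    (h : Antitone (f - rowBox m + rowBox l)) :
    Antitone (f + rowBox l) ∧ Antitone (f - rowBox m) := by
  rw [antitone_nat_iff_succ_le] at h hf
  refine ⟨antitone_nat_of_succ_le fun i => ?_, antitone_nat_of_succ_le fun i => ?_⟩
  all_goals
    have h1 := h i
    have h2 := hf i
    simp only [Pi.add_apply, Pi.sub_apply, Pi.single_apply] at *
    split_ifs at * <;> omega

lemma sytCount_add_rowBox_eq (hf : Antitone f) (hl : l ∈ range B) :
    sytCount B (n + 1) (f + rowBox l) = (if Antitone (f + rowBox l) then sytCount B n f else 0) +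
      ∑ m ∈ range B, if l ≠ m ∧ 0 < f m then sytCount B n (f - rowBox m + rowBox l) else 0 := by
  by_cases hadd : Antitone (f + rowBox l)
  · rw [sytCount_succ_of_antitone hadd, if_pos hadd, ← add_sum_erase _ _ hl,
      ← add_sum_erase (range B) (fun m => if l ≠ m ∧ 0 < f m then _ else _) hl]
    simp only [Pi.add_apply, Pi.single_eq_same, Nat.succ_pos, if_true, add_tsub_cancel_right,
      ne_eq, not_true, false_and, if_false, zero_add]
    congr 1
    refine sum_congr rfl fun m hm => ?_
    have hne : m ≠ l := ne_of_mem_erase hm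
    by_cases hpos : 0 < f m
    · have hcomm : f + rowBox l - rowBox m = f - rowBox m + rowBox l := by
        funext i
        simp only [Pi.add_apply, Pi.sub_apply, Pi.single_apply]
        split_ifs <;> (subst_vars; omega)
      simp [hne, hne.symm, hpos, hcomm]
    · simp [hne, hpos]
  · rw [sytCount_succ_of_not_antitone hadd, if_neg hadd, zero_add]
    refine (sum_eq_zero fun m _ => ite_eq_right_iff.2 fun h => ?_).symm
    by_contra hne
    exact hadd
      (antitone_of_antitone_sub_rowBox_add_rowBox hf h.1 h.2 (antitone_of_sytCount_ne_zero hne)).1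

lemma sum_sytCount_sub_rowBox_add_rowBox (hf : Antitone f) (hm : m ∈ range B) (hpos : 0 < f m) :
    (if Antitone (f - rowBox m) then
        ∑ l ∈ range B, sytCount B (n + 1) (f - rowBox m + rowBox l) else 0) =
      (if Antitone (f - rowBox m) then sytCount B (n + 1) f else 0) +
        ∑ l ∈ range B, if l ≠ m then sytCount B (n + 1) (f - rowBox m + rowBox l) else 0 := by
  by_cases hsub : Antitone (f - rowBox m)
  · simp only [if_pos hsub]
    rw [← add_sum_erase _ _ hm, ← add_sum_erase (range B) (fun l => if l ≠ m then _ else _) hm]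
    simp only [sub_single_add_single hpos, ne_eq, not_true, if_false, zero_add]
    congr 1
    exact sum_congr rfl fun l hl => (if_pos (ne_of_mem_erase hl)).symm
  · simp only [if_neg hsub, zero_add]
    refine (sum_eq_zero fun l _ => ite_eq_right_iff.2 fun h => ?_).symm
    by_contra hne
    exact hsub
      (antitone_of_antitone_sub_rowBox_add_rowBox hf h hpos (antitone_of_sytCount_ne_zero hne)).2

lemma sum_sytCount_zero_add_rowBox (hB : 0 < B) :
    ∑ l ∈ range B, sytCount B 1 (0 + rowBox l) = 1 := by
  have hzero : Antitone (0 : ℕ → ℕ) := antitone_const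
  rw [sum_eq_single_of_mem 0 (mem_range.2 hB)]
  · rw [sytCount_succ_of_antitone (antitone_add_rowBox_zero hzero),
      sum_eq_single_of_mem 0 (mem_range.2 hB)]
    · simp [sytCount]
    · intro l _ hl
      simp [hl]
  · refine fun l _ hl => sytCount_succ_of_not_antitone fun h => ?_
    simpa [Ne.symm hl] using h l.zero_le

/-- The upper branching rule, by induction from `DU - UD = 1`. -/
lemma sum_sytCount_add_rowBox :
    ∀ {n : ℕ}, n < B → ∀ {f : ℕ → ℕ}, Antitone f → f ∈ piAntidiag (range B) n →
      ∑ l ∈ range B, sytCount B (n + 1) (f + rowBox l) = (n + 1) * sytCount B n f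
  | 0, hn, f, _, hmem => by
    obtain rfl : f = 0 := by simpa using hmem
    simpa [sytCount] using sum_sytCount_zero_add_rowBox hn
  | n + 1, hn, f, hf, hmem => by
    have hdown : ∀ m ∈ range B, (if 0 < f m then (n + 1) * sytCount B n (f - rowBox m) else 0) =
        (if 0 < f m ∧ Antitone (f - rowBox m) then sytCount B (n + 1) f else 0) +
          ∑ l ∈ range B,
            if l ≠ m ∧ 0 < f m then sytCount B (n + 1) (f - rowBox m + rowBox l) else 0 := by
      intro m hm
      by_cases hpos : 0 < f m
      · simp only [hpos, if_true, true_and, and_true]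
        rw [← sum_sytCount_sub_rowBox_add_rowBox hf hm hpos]
        split_ifs with hsub
        · exact (sum_sytCount_add_rowBox (by omega) hsub (sub_single_mem_piAntidiag hmem hpos)).symm
        · have hzero : sytCount B n (f - rowBox m) = 0 := by
            by_contra hne
            exact hsub (antitone_of_sytCount_ne_zero hne)
          rw [hzero, mul_zero]
      · simp [hpos]
    have hexpand : (n + 1) * sytCount B (n + 1) f =
        ∑ m ∈ range B, if 0 < f m then (n + 1) * sytCount B n (f - rowBox m) else 0 := by
      simp only [sytCount_succ_of_antitone hf, mul_sum, mul_ite, mul_zero]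
    rw [sum_congr rfl hdown, sum_add_distrib, ← sum_filter, sum_const, smul_eq_mul] at hexpand
    rw [sum_congr rfl fun l hl => sytCount_add_rowBox_eq hf hl, sum_add_distrib, ← sum_filter,
      sum_const, smul_eq_mul, sum_comm, card_addable_eq_card_removable_add_one hn hf hmem]
    linarith

end Branching

/-- The expectation of `φ` under the Plancherel measure, which weights a shape `ν` with `n` boxes
by `sytCount B n ν ^ 2 / n!`. It is a probability measure for `n ≤ B`. -/
noncomputable def plancherelMean (B n : ℕ) (φ : (ℕ → ℕ) → ℝ) : ℝ :=
  (∑ ν ∈ piAntidiag (range B) n, φ ν * (sytCount B n ν : ℝ) ^ 2) / (n.factorial : ℝ)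

/-- The probability that the Plancherel growth process adds its `(n + 1)`-st box to row `i`. It
moves from `ν` to `ν + rowBox i` with probability
`sytCount B (n + 1) (ν + rowBox i) / ((n + 1) * sytCount B n ν)`. -/
noncomputable def rowGrowth (B n i : ℕ) : ℝ :=
  (∑ ν ∈ piAntidiag (range B) n, (sytCount B n ν : ℝ) * sytCount B (n + 1) (ν + rowBox i)) /
    ((n + 1).factorial : ℝ)

section Plancherel

variable {B n i k : ℕ} {ν : ℕ → ℕ}

lemma sum_mul_sytCount_succ (F : (ℕ → ℕ) → ℝ)
    (hF : ∀ μ, ¬ Antitone μ → F μ = 0) :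
    ∑ μ ∈ piAntidiag (range B) (n + 1), sytCount B (n + 1) μ * F μ =
      ∑ ν ∈ piAntidiag (range B) n, sytCount B n ν * ∑ l ∈ range B, F (ν + rowBox l) := by
  simp only [mul_sum]
  rw [← sum_piAntidiag_succ_sum_sub_single fun ν l => sytCount B n ν * F (ν + rowBox l)]
  refine sum_congr rfl fun μ _ => ?_
  by_cases hμ : Antitone μ
  · rw [sytCount_succ_of_antitone hμ, Nat.cast_sum, sum_mul]
    refine sum_congr rfl fun l _ => ?_
    split_ifs with hpos
    · rw [sub_single_add_single hpos]
    · simp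
  · rw [hF μ hμ, mul_zero]
    refine (sum_eq_zero fun l _ => ite_eq_right_iff.2 fun hpos => ?_).symm
    rw [sub_single_add_single hpos, hF μ hμ, mul_zero]

lemma sum_mul_sytCount_succ_sq (φ : (ℕ → ℕ) → ℝ) :
    ∑ μ ∈ piAntidiag (range B) (n + 1), φ μ * (sytCount B (n + 1) μ : ℝ) ^ 2 =
      ∑ ν ∈ piAntidiag (range B) n, sytCount B n ν *
        ∑ l ∈ range B, φ (ν + rowBox l) * sytCount B (n + 1) (ν + rowBox l) := by
  rw [← sum_mul_sytCount_succ fun μ => φ μ * sytCount B (n + 1) μ]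
  · exact sum_congr rfl fun μ _ => by ring
  · intro μ hμ
    simp [sytCount_succ_of_not_antitone hμ]

lemma sytCount_mul_sum_sytCount_add_rowBox (hn : n < B) (hν : ν ∈ piAntidiag (range B) n) :
    (sytCount B n ν : ℝ) * ∑ l ∈ range B, (sytCount B (n + 1) (ν + rowBox l) : ℝ) =
      (n + 1) * (sytCount B n ν : ℝ) ^ 2 := by
  by_cases hzero : sytCount B n ν = 0
  · simp [hzero]
  · have := sum_sytCount_add_rowBox hn (antitone_of_sytCount_ne_zero hzero) hν
    rw [← Nat.cast_sum, this]
    push_cast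
    ring

lemma sum_sytCount_sq :
    ∀ n ≤ B, ∑ ν ∈ piAntidiag (range B) n, (sytCount B n ν : ℝ) ^ 2 = (n.factorial : ℝ)
  | 0, _ => by simp [sytCount]
  | n + 1, h => by
    have hstep := sum_mul_sytCount_succ_sq (B := B) (n := n) fun _ => 1
    simp only [one_mul] at hstep
    rw [hstep, sum_congr rfl fun ν hν => sytCount_mul_sum_sytCount_add_rowBox h hν, ← mul_sum,
      sum_sytCount_sq n (by omega), Nat.factorial_succ]
    push_cast
    ring

lemma plancherelMean_succ_row (hn : n < B) (hi : i < B) (g : ℕ → ℝ) :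
    plancherelMean B (n + 1) (fun μ => g (μ i)) = plancherelMean B n (fun ν => g (ν i)) +
      (∑ ν ∈ piAntidiag (range B) n, (g (ν i + 1) - g (ν i)) *
        ((sytCount B n ν : ℝ) * sytCount B (n + 1) (ν + rowBox i))) /
          ((n + 1).factorial : ℝ) := by
  have hstep : ∀ ν ∈ piAntidiag (range B) n,
      sytCount B n ν * ∑ l ∈ range B, g ((ν + rowBox l) i) * sytCount B (n + 1) (ν + rowBox l) =
        (n + 1) * (g (ν i) * (sytCount B n ν : ℝ) ^ 2) + (g (ν i + 1) - g (ν i)) *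
          ((sytCount B n ν : ℝ) * sytCount B (n + 1) (ν + rowBox i)) := by
    intro ν hν
    rw [mul_left_comm, ← sytCount_mul_sum_sytCount_add_rowBox hn hν,
      ← add_sum_erase _ _ (mem_range.2 hi), ← add_sum_erase (range B) _ (mem_range.2 hi)]
    have hother : ∑ l ∈ (range B).erase i,
        g ((ν + rowBox l) i) * (sytCount B (n + 1) (ν + rowBox l) : ℝ) =
          g (ν i) * ∑ l ∈ (range B).erase i, (sytCount B (n + 1) (ν + rowBox l) : ℝ) := by
      rw [mul_sum]
      refine sum_congr rfl fun l hl => ?_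
      simp [(ne_of_mem_erase hl).symm]
    rw [hother]
    simp only [Pi.add_apply, Pi.single_eq_same]
    ring
  simp only [plancherelMean]
  rw [sum_mul_sytCount_succ_sq, sum_congr rfl hstep, sum_add_distrib, add_div, ← mul_sum,
    Nat.factorial_succ]
  push_cast
  rw [mul_div_mul_left _ _ (by positivity)]

lemma sum_sytCount_add_rowBox_sq_le (hn : n < B) (hi : i < B) :
    ∑ ν ∈ piAntidiag (range B) n, (sytCount B (n + 1) (ν + rowBox i) : ℝ) ^ 2 ≤
      ((n + 1).factorial : ℝ) := by
  rw [← sum_sytCount_sq (n + 1) hn,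
    ← sum_piAntidiag_succ_filter_pos (mem_range.2 hi) fun μ => (sytCount B (n + 1) μ : ℝ) ^ 2]
  exact sum_le_sum_of_subset_of_nonneg (filter_subset _ _) fun _ _ _ => by positivity

lemma rowGrowth_nonneg (B n i : ℕ) : 0 ≤ rowGrowth B n i := by
  unfold rowGrowth
  positivity

lemma sum_sqrt_plancherel_mul (B n i : ℕ) :
    ∑ ν ∈ piAntidiag (range B) n, (sytCount B n ν / √(n.factorial : ℝ)) *
      (sytCount B (n + 1) (ν + rowBox i) / √((n + 1).factorial : ℝ)) =
        √(n + 1) * rowGrowth B n i := by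
  have hfact : √((n + 1).factorial : ℝ) = √(n + 1) * √(n.factorial : ℝ) := by
    rw [Nat.factorial_succ, Nat.cast_mul, Real.sqrt_mul (by positivity), Nat.cast_succ]
  have hsq : ((n + 1).factorial : ℝ) = (√(n + 1) * √(n.factorial : ℝ)) ^ 2 := by
    rw [← hfact, Real.sq_sqrt (by positivity)]
  rw [rowGrowth, mul_div_assoc', mul_sum, sum_div, hfact, hsq]
  refine sum_congr rfl fun ν _ => ?_
  have : √(n.factorial : ℝ) ≠ 0 := by positivity
  have : √((n : ℝ) + 1) ≠ 0 := by positivity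
  field_simp

lemma sum_sqrt_plancherel_sq (hn : n ≤ B) :
    ∑ ν ∈ piAntidiag (range B) n, ((sytCount B n ν : ℝ) / √(n.factorial : ℝ)) ^ 2 = 1 := by
  simp only [div_pow, Real.sq_sqrt (Nat.cast_nonneg _)]
  rw [← sum_div, sum_sytCount_sq n hn]
  exact div_self (by positivity)

lemma sum_sqrt_plancherel_add_rowBox_sq_le (hn : n < B) (hi : i < B) :
    ∑ ν ∈ piAntidiag (range B) n,
      ((sytCount B (n + 1) (ν + rowBox i) : ℝ) / √((n + 1).factorial : ℝ)) ^ 2 ≤ 1 := by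
  simp only [div_pow, Real.sq_sqrt (Nat.cast_nonneg _)]
  rw [← sum_div]
  exact div_le_one_of_le₀ (sum_sytCount_add_rowBox_sq_le hn hi) (by positivity)

lemma sqrt_mul_rowGrowth_le_one (hn : n < B) (hi : i < B) : √(n + 1) * rowGrowth B n i ≤ 1 := by
  have hcs := sum_mul_sq_le_sq_mul_sq (piAntidiag (range B) n)
    (fun ν => sytCount B n ν / √(n.factorial : ℝ))
    (fun ν => sytCount B (n + 1) (ν + rowBox i) / √((n + 1).factorial : ℝ))
  rw [sum_sqrt_plancherel_mul, sum_sqrt_plancherel_sq hn.le, one_mul] at hcs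
  have := hcs.trans (sum_sqrt_plancherel_add_rowBox_sq_le hn hi)
  exact (abs_le_of_sq_le_sq' (by simpa using this) zero_le_one).2

/-- The number of standard tableaux of shape `ν + rowBox i + rowBox l` if `ν + rowBox i` is a
shape, and `0` otherwise: the weight of the two growth steps that add a box first to row `i` and
then to row `l`. -/
noncomputable def twoStepCount (B n : ℕ) (ν : ℕ → ℕ) (i l : ℕ) : ℝ :=
  if Antitone (ν + rowBox i) then (sytCount B (n + 2) (ν + rowBox i + rowBox l) : ℝ) else 0

lemma rowGrowth_eq_sum_twoStepCount (hn : n + 1 < B) (hi : i < B) :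
    rowGrowth B n i = (∑ ν ∈ piAntidiag (range B) n,
      (sytCount B n ν : ℝ) * ∑ l ∈ range B, twoStepCount B n ν i l) / ((n + 2).factorial : ℝ) := by
  have hup : ∀ ν ∈ piAntidiag (range B) n, ∑ l ∈ range B, twoStepCount B n ν i l =
      (n + 2) * sytCount B (n + 1) (ν + rowBox i) := by
    intro ν hν
    by_cases hadd : Antitone (ν + rowBox i)
    · simp only [twoStepCount, if_pos hadd]
      rw [← Nat.cast_sum, sum_sytCount_add_rowBox hn hadd
        (add_single_mem_piAntidiag hν (mem_range.2 hi))]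
      push_cast
      ring
    · simp [twoStepCount, hadd, sytCount_succ_of_not_antitone]
  rw [sum_congr rfl fun ν hν => by rw [hup ν hν, mul_left_comm], ← mul_sum, rowGrowth,
    Nat.factorial_succ (n + 1), Nat.cast_mul,
    show ((n + 1 + 1 : ℕ) : ℝ) = n + 2 by push_cast; ring, mul_div_mul_left _ _ (by positivity)]

lemma rowGrowth_succ_eq_sum_twoStepCount (B n i : ℕ) :
    rowGrowth B (n + 1) i = (∑ ν ∈ piAntidiag (range B) n,
      (sytCount B n ν : ℝ) * ∑ l ∈ range B, twoStepCount B n ν l i) / ((n + 2).factorial : ℝ) := by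
  have hsum := sum_mul_sytCount_succ (B := B) (n := n)
    (fun μ => if Antitone μ then (sytCount B (n + 2) (μ + rowBox i) : ℝ) else 0)
    fun μ hμ => if_neg hμ
  simp only [twoStepCount]
  rw [← hsum, rowGrowth]
  congr 1
  refine sum_congr rfl fun μ _ => ?_
  by_cases hμ : Antitone μ
  · rw [if_pos hμ]
  · simp [sytCount_succ_of_not_antitone hμ]

lemma twoStepCount_le_of_lt (hν : Antitone ν) {l : ℕ} (hil : i < l) :
    twoStepCount B n ν l i ≤ twoStepCount B n ν i l := by
  unfold twoStepCount
  split_ifs with hl hi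
  · rw [add_right_comm]
  · refine le_of_eq (Nat.cast_eq_zero.2 ?_)
    by_contra hne
    refine hi (antitone_nat_of_succ_le fun j => ?_)
    have h₁ := antitone_nat_iff_succ_le.1 hl j
    have h₂ := antitone_nat_iff_succ_le.1 (antitone_of_sytCount_ne_zero hne) j
    have h₃ := antitone_nat_iff_succ_le.1 hν j
    simp only [Pi.add_apply, Pi.single_apply] at *
    split_ifs at * <;> omega
  · positivity
  · exact le_rfl

/-- Two boxes added to the first `k` rows can be added in either order, while a box added below
row `k` never has to precede one added above. -/
lemma sum_rowGrowth_succ_le (hn : n + 1 < B) (hk : k ≤ B) :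
    ∑ i ∈ range k, rowGrowth B (n + 1) i ≤ ∑ i ∈ range k, rowGrowth B n i := by
  rw [sum_congr rfl fun i _ => rowGrowth_succ_eq_sum_twoStepCount B n i,
    sum_congr rfl fun i hi =>
      rowGrowth_eq_sum_twoStepCount hn ((mem_range.1 hi).trans_le hk)]
  simp only [← sum_div]
  refine div_le_div_of_nonneg_right ?_ (by positivity)
  rw [sum_comm, sum_comm (s := range k)]
  refine sum_le_sum fun ν _ => ?_
  simp only [← mul_sum]
  by_cases hzero : sytCount B n ν = 0
  · simp [hzero]
  have hν := antitone_of_sytCount_ne_zero hzero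
  refine mul_le_mul_of_nonneg_left ?_ (Nat.cast_nonneg _)
  simp only [← sum_range_add_sum_Ico _ hk, sum_add_distrib]
  refine add_le_add (sum_comm.le) (sum_le_sum fun i hi => sum_le_sum fun l hl => ?_)
  exact twoStepCount_le_of_lt hν ((mem_range.1 hi).trans_le (mem_Ico.1 hl).1)

end Plancherel

/-- Hellinger distance controls total variation. -/
lemma sum_sq_sub_sq_le_of_sum_sq_le_one {ι : Type*} {s t : Finset ι} (hts : t ⊆ s) {x y : ι → ℝ}
    (hx : ∀ i, 0 ≤ x i) (hy : ∀ i, 0 ≤ y i) (hx₁ : ∑ i ∈ s, x i ^ 2 ≤ 1)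
    (hy₁ : ∑ i ∈ s, y i ^ 2 ≤ 1) :
    ∑ i ∈ t, (x i ^ 2 - y i ^ 2) ≤ 2 * √(2 * (1 - ∑ i ∈ s, x i * y i)) := by
  have hle : ∑ i ∈ t, (x i ^ 2 - y i ^ 2) ≤ ∑ i ∈ s, |x i - y i| * (x i + y i) := by
    calc ∑ i ∈ t, (x i ^ 2 - y i ^ 2) ≤ ∑ i ∈ t, |x i - y i| * (x i + y i) := by
          refine sum_le_sum fun i _ => ?_
          rw [sq_sub_sq, mul_comm]
          gcongr
          · exact add_nonneg (hx i) (hy i)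
          · exact le_abs_self _
      _ ≤ ∑ i ∈ s, |x i - y i| * (x i + y i) :=
          sum_le_sum_of_subset_of_nonneg hts fun i _ _ =>
            mul_nonneg (abs_nonneg _) (add_nonneg (hx i) (hy i))
  have hdiff : ∑ i ∈ s, |x i - y i| ^ 2 ≤ 2 * (1 - ∑ i ∈ s, x i * y i) := by
    simp only [sq_abs, sub_sq, sum_sub_distrib, sum_add_distrib, mul_assoc, ← mul_sum]
    linarith
  have hsum : ∑ i ∈ s, (x i + y i) ^ 2 ≤ 2 ^ 2 := by
    have : ∑ i ∈ s, (x i + y i) ^ 2 ≤ ∑ i ∈ s, 2 * (x i ^ 2 + y i ^ 2) :=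
      sum_le_sum fun i _ => by nlinarith [sq_nonneg (x i - y i)]
    rw [← mul_sum, sum_add_distrib] at this
    linarith
  have hcs := Real.sum_mul_le_sqrt_mul_sqrt s (fun i => |x i - y i|) fun i => x i + y i
  calc _ ≤ √(∑ i ∈ s, |x i - y i| ^ 2) * √(∑ i ∈ s, (x i + y i) ^ 2) := hle.trans hcs
    _ ≤ √(2 * (1 - ∑ i ∈ s, x i * y i)) * √(2 ^ 2) := by gcongr
    _ = 2 * √(2 * (1 - ∑ i ∈ s, x i * y i)) := by rw [Real.sqrt_sq zero_le_two, mul_comm]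

section Atoms

variable {B n i : ℕ}

lemma plancherelMean_tail_sub_le (hn : n < B) (hi : i < B) (s : ℕ) :
    plancherelMean B n (fun ν => if s ≤ ν i then 1 else 0) -
      plancherelMean B (n + 1) (fun μ => if s + 1 ≤ μ i then 1 else 0) ≤
        2 * √(2 * (1 - √(n + 1) * rowGrowth B n i)) := by
  have hshift : ∑ μ ∈ piAntidiag (range B) (n + 1) with s + 1 ≤ μ i,
      (sytCount B (n + 1) μ : ℝ) ^ 2 =
        ∑ ν ∈ piAntidiag (range B) n with s ≤ ν i,
          (sytCount B (n + 1) (ν + rowBox i) : ℝ) ^ 2 := by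
    have := sum_piAntidiag_succ_filter_pos (n := n) (mem_range.2 hi)
      fun μ => if s + 1 ≤ μ i then (sytCount B (n + 1) μ : ℝ) ^ 2 else 0
    simp only [Pi.add_apply, Pi.single_eq_same, add_le_add_iff_right] at this
    rw [sum_filter (fun ν : ℕ → ℕ => s ≤ ν i), ← this, ← sum_filter, filter_filter]
    exact sum_congr (filter_congr fun μ _ => by omega) fun _ _ => rfl
  have hsq : ∀ (a : ℕ) (m : ℕ), (a : ℝ) ^ 2 / (m.factorial : ℝ) = (a / √(m.factorial : ℝ)) ^ 2 :=
    fun a m => by rw [div_pow, Real.sq_sqrt (Nat.cast_nonneg _)]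
  simp only [plancherelMean, ite_mul, one_mul, zero_mul, ← sum_filter]
  rw [hshift, sum_div, sum_div, ← sum_sub_distrib, ← sum_sqrt_plancherel_mul]
  simp only [hsq]
  exact sum_sq_sub_sq_le_of_sum_sq_le_one (filter_subset _ _) (fun _ => by positivity)
    (fun _ => by positivity) (sum_sqrt_plancherel_sq hn.le).le
    (sum_sqrt_plancherel_add_rowBox_sq_le hn hi)

/-- If `√(n + 1) * rowGrowth B n i` is close to its maximum `1`, then the law of row `i` is almost
invariant under a shift by one. -/
lemma plancherelMean_eq_le (hn : n < B) (hi : i < B) (s : ℕ) :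
    plancherelMean B n (fun ν => if ν i = s then 1 else 0) ≤
      rowGrowth B n i + 2 * √(2 * (1 - √(n + 1) * rowGrowth B n i)) := by
  have hsplit : plancherelMean B n (fun ν => if s ≤ ν i then 1 else 0) =
      plancherelMean B n (fun ν => if ν i = s then 1 else 0) +
        plancherelMean B n (fun ν => if s + 1 ≤ ν i then 1 else 0) := by
    simp only [plancherelMean]
    rw [← add_div, ← sum_add_distrib]
    congr 1
    refine sum_congr rfl fun ν _ => ?_
    split_ifs <;> first | omega | simp
  have hgrow : plancherelMean B (n + 1) (fun μ => if s + 1 ≤ μ i then 1 else 0) ≤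
      plancherelMean B n (fun ν => if s + 1 ≤ ν i then 1 else 0) + rowGrowth B n i := by
    rw [plancherelMean_succ_row hn hi fun t => if s + 1 ≤ t then 1 else 0, rowGrowth]
    refine add_le_add_right (div_le_div_of_nonneg_right (sum_le_sum fun ν _ => ?_)
      (by positivity)) _
    refine mul_le_of_le_one_left (by positivity) ?_
    split_ifs <;> norm_num
  linarith [plancherelMean_tail_sub_le hn hi s]

end Atoms

/-! ### Knuth relations preserve unions of increasing subsequences -/

/-- `s` is a union of `k` chains of `r`, encoded by a colouring with `k` colours whose colour
classes are chains. -/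
def IsUnionOfChains {α : Type*} (r : α → α → Prop) (k : ℕ) (s : Finset α) : Prop :=
  ∃ c : α → ℕ, (∀ a ∈ s, c a < k) ∧ ∀ a ∈ s, ∀ b ∈ s, a ≠ b → c a = c b → r a b ∨ r b a

namespace IsUnionOfChains

variable {α : Type*} {r r' : α → α → Prop} {k : ℕ} {s : Finset α}

lemma swap (h : IsUnionOfChains r k s) : IsUnionOfChains (Function.swap r) k s := by
  obtain ⟨c, hlt, hc⟩ := h
  exact ⟨c, hlt, fun a ha b hb hab heq => (hc a ha b hb hab heq).symm⟩

lemma mono (hr : ∀ a b, r a b → r' a b) (h : IsUnionOfChains r k s) : IsUnionOfChains r' k s := by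
  obtain ⟨c, hlt, hc⟩ := h
  exact ⟨c, hlt, fun a ha b hb hab heq => (hc a ha b hb hab heq).imp (hr _ _) (hr _ _)⟩

section Exchange

variable [IsStrictOrder α r] {x y z : α} {c : α → ℕ}

lemma replace_of_notMem [DecidableEq α] (hyz : r y z) (hyx : y ≠ x) (hx_le : ∀ a, r a x → r a y)
    (hxz_cov : ∀ a, r x a → ¬ r a z) (hx : x ∈ s) (hz : z ∈ s) (hy : y ∉ s) (hxz : c x = c z)
    (hlt : ∀ a ∈ s, c a < k) (hc : ∀ a ∈ s, ∀ b ∈ s, a ≠ b → c a = c b → r a b ∨ r b a) :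
    IsUnionOfChains (fun a b => r a b ∧ ¬ (a = x ∧ b = z)) k (insert y (s.erase x)) := by
  have hne : y ≠ z := ne_of_irrefl hyz
  have comparable_y : ∀ b ∈ s, b ≠ x → c b = c x → r b y ∨ r y b := by
    intro b hb hbx hbc
    rcases hc b hb x hx hbx hbc with h | h
    · exact Or.inl (hx_le b h)
    · rcases eq_or_ne b z with rfl | hbz
      · exact Or.inr hyz
      · exact Or.inr (_root_.trans hyz
          ((hc b hb z hz hbz (hbc.trans hxz)).resolve_left (hxz_cov b h)))
  refine ⟨Function.update c y (c x), fun a ha => ?_, fun a ha b hb hab hcab => ?_⟩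
  · rcases eq_or_ne a y with rfl | hay
    · simpa using hlt x hx
    · rw [Function.update_of_ne hay]
      exact hlt a (mem_of_mem_erase ((mem_insert.1 ha).resolve_left hay))
  · grind

lemma swap_tails_of_mem (hyz : r y z) (hyx : y ≠ x) (hx_le : ∀ a, r a x → r a y)
    (hy_le : ∀ b, r y b → r x b) (hxz_cov : ∀ a, r x a → ¬ r a z)
    (hx : x ∈ s) (hz : z ∈ s) (hy : y ∈ s) (hxz : c x = c z)
    (hlt : ∀ a ∈ s, c a < k) (hc : ∀ a ∈ s, ∀ b ∈ s, a ≠ b → c a = c b → r a b ∨ r b a) :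
    IsUnionOfChains (fun a b => r a b ∧ ¬ (a = x ∧ b = z)) k s := by
  have trans : ∀ a b c, r a b → r b c → r a c := fun _ _ _ => _root_.trans
  have irrefl : ∀ a, ¬ r a a := fun a => _root_.irrefl a
  have hcxy : c y ≠ c x := by
    intro h
    rcases hc y hy x hx hyx h with h' | h'
    · exact irrefl _ (hx_le y h')
    · exact hxz_cov y h' hyz
  have hxz' : r x z := hy_le z hyz
  have head_x : ∀ a ∈ s, c a = c x → ¬ (a = z ∨ r z a) → a = x ∨ r a x := by grind
  have head_y : ∀ a ∈ s, c a = c y → ¬ r y a → a = y ∨ r a y := by grind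
  have head_x_tail_y : ∀ a ∈ s, ∀ b ∈ s, c a = c x → ¬ (a = z ∨ r z a) → c b = c y → r y b →
      r a b ∧ b ≠ z := by
    intro a ha b _ hca hna hcb hyb
    rcases head_x a ha hca hna with rfl | h <;> grind
  have head_y_tail_x : ∀ a ∈ s, ∀ b ∈ s, c a = c y → ¬ r y a → c b = c x → (b = z ∨ r z b) →
      r a b ∧ a ≠ x := by
    intro a ha b _ hca hna hcb hzb
    rcases head_y a ha hca hna with rfl | h <;> grind
  have x_notMem_tail : ¬ (x = z ∨ r z x) := by grind
  refine ⟨fun a => if c a = c x ∧ (a = z ∨ r z a) then c y else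
    if c a = c y ∧ r y a then c x else c a, fun a ha => ?_, fun a ha b hb hab hcab => ?_⟩
  · dsimp only
    split_ifs <;> grind
  · dsimp only at hcab
    split_ifs at hcab <;> grind

lemma exchange [DecidableEq α] (hyz : r y z) (hyx : y ≠ x) (hx_le : ∀ a, r a x → r a y)
    (hy_le : ∀ b, r y b → r x b) (hxz_cov : ∀ a, r x a → ¬ r a z) (h : IsUnionOfChains r k s) :
    ∃ t, #t = #s ∧ t ⊆ insert y s ∧ IsUnionOfChains (fun a b => r a b ∧ ¬ (a = x ∧ b = z)) k t := by
  obtain ⟨c, hlt, hc⟩ := h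
  by_cases hmono : x ∈ s ∧ z ∈ s ∧ c x = c z
  · obtain ⟨hx, hz, hxz⟩ := hmono
    by_cases hy : y ∈ s
    · exact ⟨s, rfl, subset_insert _ _,
        swap_tails_of_mem hyz hyx hx_le hy_le hxz_cov hx hz hy hxz hlt hc⟩
    · refine ⟨insert y (s.erase x), ?_, insert_subset_insert _ (erase_subset _ _),
        replace_of_notMem hyz hyx hx_le hxz_cov hx hz hy hxz hlt hc⟩
      rw [card_insert_of_notMem (fun h => hy (mem_of_mem_erase h)), card_erase_add_one hx]
  · exact ⟨s, rfl, subset_insert _ _, c, hlt, by grind⟩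

end Exchange

end IsUnionOfChains

section PairSublist

variable {α : Type*} {l m : List α} {a b c p q x : α}

lemma pair_sublist_cons : [a, b].Sublist (x :: l) ↔ (a = x ∧ b ∈ l) ∨ [a, b].Sublist l := by
  rw [List.cons_sublist_cons', List.singleton_sublist, or_comm]

lemma pair_sublist_append :
    [a, b].Sublist (l ++ m) ↔ [a, b].Sublist l ∨ (a ∈ l ∧ b ∈ m) ∨ [a, b].Sublist m := by
  induction l with
  | nil => simp
  | cons x l ih => grind [pair_sublist_cons]

lemma left_mem_of_pair_sublist (h : [a, b].Sublist l) : a ∈ l := h.subset (by simp)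

lemma right_mem_of_pair_sublist (h : [a, b].Sublist l) : b ∈ l := h.subset (by simp)

lemma pair_sublist_trans (hl : l.Nodup) (hab : [a, b].Sublist l) (hbc : [b, c].Sublist l) :
    [a, c].Sublist l := by
  induction l with
  | nil => simp at hab
  | cons x l ih => grind [pair_sublist_cons, left_mem_of_pair_sublist, right_mem_of_pair_sublist]

lemma not_pair_sublist_swap (hl : l.Nodup) (hab : [a, b].Sublist l) : ¬ [b, a].Sublist l := by
  intro hba
  have := pair_sublist_trans hl hab hba
  exact List.nodup_iff_sublist.1 hl a this

lemma pair_sublist_of_pairwise_lt [LinearOrder α] (hl : l.Pairwise (· < ·)) (ha : a ∈ l)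
    (hb : b ∈ l) (hab : a < b) : [a, b].Sublist l := by
  induction l with
  | nil => simp at ha
  | cons x l ih =>
    rw [List.pairwise_cons] at hl
    rw [List.mem_cons] at ha hb
    rw [pair_sublist_cons]
    rcases ha with rfl | ha <;> rcases hb with rfl | hb
    · exact absurd hab (lt_irrefl _)
    · exact Or.inl ⟨rfl, hb⟩
    · exact absurd hab (hl.1 a ha).not_gt
    · exact Or.inr (ih hl.2 ha hb)

lemma pair_sublist_swap_iff (h : ¬ (a = p ∧ b = q)) (h' : ¬ (a = q ∧ b = p)) :
    [a, b].Sublist (l ++ p :: q :: m) ↔ [a, b].Sublist (l ++ q :: p :: m) := by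
  grind [pair_sublist_append, pair_sublist_cons]

lemma eq_or_pair_sublist_of_adjacent_right (hn : (l ++ p :: q :: m).Nodup)
    (h : [a, q].Sublist (l ++ p :: q :: m)) : a = p ∨ [a, p].Sublist (l ++ p :: q :: m) := by
  grind [pair_sublist_append, pair_sublist_cons, right_mem_of_pair_sublist]

lemma eq_or_pair_sublist_of_adjacent_left (hn : (l ++ p :: q :: m).Nodup)
    (h : [p, b].Sublist (l ++ p :: q :: m)) : b = q ∨ [q, b].Sublist (l ++ p :: q :: m) := by
  grind [pair_sublist_append, pair_sublist_cons, left_mem_of_pair_sublist]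

end PairSublist

section GreeneEquiv

variable {α : Type*} [LinearOrder α]

/-- `a < b`, and `a` stands to the left of `b` in the word `w`. The increasing subsequences of a
word without repeated letters are the chains of this relation. -/
def IncPair (w : List α) (a b : α) : Prop := a < b ∧ [a, b].Sublist w

/-- Some `m` letters of `w` form a union of `k` increasing subsequences of `w`. -/
def HasIncUnion (w : List α) (k m : ℕ) : Prop :=
  ∃ s : Finset α, (∀ a ∈ s, a ∈ w) ∧ #s = m ∧ IsUnionOfChains (IncPair w) k s

/-- `w` and `w'` are rearrangements of each other with the same Greene invariants in every
context. Knuth equivalent words have this property, and it is a congruence by definition. -/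
def GreeneEquiv (w w' : List α) : Prop :=
  w.Perm w' ∧ ∀ u v : List α, (u ++ w ++ v).Nodup →
    ∀ k m, HasIncUnion (u ++ w ++ v) k m ↔ HasIncUnion (u ++ w' ++ v) k m

namespace GreeneEquiv

variable {w w' w'' : List α}

lemma refl (w : List α) : GreeneEquiv w w := ⟨List.Perm.refl _, fun _ _ _ _ _ => Iff.rfl⟩

lemma symm (h : GreeneEquiv w w') : GreeneEquiv w' w :=
  ⟨h.1.symm, fun u v hn k m =>
    (h.2 u v (((h.1.append_left u).append_right v).nodup_iff.2 hn) k m).symm⟩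

lemma trans (h : GreeneEquiv w w') (h' : GreeneEquiv w' w'') : GreeneEquiv w w'' :=
  ⟨h.1.trans h'.1, fun u v hn k m => (h.2 u v hn k m).trans
    (h'.2 u v (((h.1.append_left u).append_right v).nodup_iff.1 hn) k m)⟩

lemma append (h : GreeneEquiv w w') (p q : List α) : GreeneEquiv (p ++ w ++ q) (p ++ w' ++ q) := by
  refine ⟨(h.1.append_left p).append_right q, fun u v hn k m => ?_⟩
  have := h.2 (u ++ p) (q ++ v) (by simpa [List.append_assoc] using hn) k m
  simpa [List.append_assoc] using this

lemma of_not_nodup (h : w.Perm w') (hn : ¬ w.Nodup) : GreeneEquiv w w' :=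
  ⟨h, fun _ _ h' => absurd h'.of_append_left.of_append_right hn⟩

end GreeneEquiv

variable {l m : List α} {p q x y z : α}

lemma isStrictOrder_incPair {w : List α} (hn : w.Nodup) : IsStrictOrder α (IncPair w) where
  irrefl a h := lt_irrefl a h.1
  trans _ _ _ h h' := ⟨h.1.trans h'.1, pair_sublist_trans hn h.2 h'.2⟩

lemma incPair_swap_iff (hpq : p < q) (hn : (l ++ p :: q :: m).Nodup) (a b : α) :
    IncPair (l ++ q :: p :: m) a b ↔ IncPair (l ++ p :: q :: m) a b ∧ ¬ (a = p ∧ b = q) := by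
  have hn' : (l ++ q :: p :: m).Nodup := ((List.Perm.swap p q m).append_left l).nodup_iff.2 hn
  unfold IncPair
  by_cases hpair : a = p ∧ b = q
  · obtain ⟨rfl, rfl⟩ := hpair
    have hswap : [b, a].Sublist (l ++ b :: a :: m) := by grind [pair_sublist_append]
    grind [not_pair_sublist_swap hn' hswap]
  · by_cases hpair' : a = q ∧ b = p
    · grind
    · grind [pair_sublist_swap_iff hpair hpair']

lemma HasIncUnion.of_swap (hpq : p < q) (hn : (l ++ p :: q :: m).Nodup) {k t : ℕ}
    (h : HasIncUnion (l ++ q :: p :: m) k t) : HasIncUnion (l ++ p :: q :: m) k t := by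
  obtain ⟨s, hs, hcard, hchain⟩ := h
  exact ⟨s, fun a ha => ((List.Perm.swap p q m).append_left l).mem_iff.1 (hs a ha), hcard,
    hchain.mono fun a b h => ((incPair_swap_iff hpq hn a b).1 h).1⟩

lemma greeneEquiv_yxz_yzx (hxy : x < y) (hyz : y < z) : GreeneEquiv [y, x, z] [y, z, x] := by
  refine ⟨List.Perm.cons _ (List.Perm.swap _ _ _), fun u v hn k m => ?_⟩
  rw [show u ++ [y, z, x] ++ v = (u ++ [y]) ++ z :: x :: v by simp]
  have e : u ++ [y, x, z] ++ v = (u ++ [y]) ++ x :: z :: v := by simp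
  rw [e] at hn ⊢
  refine ⟨?_, HasIncUnion.of_swap (hxy.trans hyz) hn⟩
  rintro ⟨s, hs, hcard, hchain⟩
  have := isStrictOrder_incPair hn
  have e' : (u ++ [y]) ++ x :: z :: v = u ++ y :: x :: (z :: v) := by simp
  obtain ⟨t, ht, hts, htchain⟩ := hchain.exchange (x := x) (y := y) (z := z)
    ⟨hyz, by simp⟩ hxy.ne'
    (fun a h => ⟨h.1.trans hxy, by
      rw [e'] at hn h ⊢
      exact (eq_or_pair_sublist_of_adjacent_right hn h.2).resolve_left (h.1.trans hxy).ne⟩)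
    (fun b h => ⟨hxy.trans h.1, by
      rw [e'] at hn h ⊢
      exact (eq_or_pair_sublist_of_adjacent_left hn h.2).resolve_left (hxy.trans h.1).ne'⟩)
    (fun a h h' => not_pair_sublist_swap hn h.2
      ((eq_or_pair_sublist_of_adjacent_right hn h'.2).resolve_left h.1.ne'))
  refine ⟨t, fun a ha => ?_, ht.trans hcard,
    htchain.mono fun a b h => (incPair_swap_iff (hxy.trans hyz) hn a b).2 h⟩
  grind

lemma greeneEquiv_xzy_zxy (hxy : x < y) (hyz : y < z) : GreeneEquiv [x, z, y] [z, x, y] := by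
  refine ⟨List.Perm.swap _ _ _, fun u v hn k m => ?_⟩
  rw [show u ++ [z, x, y] ++ v = u ++ z :: x :: (y :: v) by simp]
  have e : u ++ [x, z, y] ++ v = u ++ x :: z :: (y :: v) := by simp
  rw [e] at hn ⊢
  refine ⟨?_, HasIncUnion.of_swap (hxy.trans hyz) hn⟩
  rintro ⟨s, hs, hcard, hchain⟩
  have := isStrictOrder_incPair hn
  have e' : u ++ x :: z :: (y :: v) = (u ++ [x]) ++ z :: y :: v := by simp
  have : IsStrictOrder α (Function.swap (IncPair (u ++ x :: z :: (y :: v)))) := inferInstance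
  obtain ⟨t, ht, hts, htchain⟩ := hchain.swap.exchange (x := z) (y := y) (z := x)
    ⟨hxy, by simp⟩ hyz.ne
    (fun a h => ⟨hyz.trans h.1, by
      unfold Function.swap at h
      rw [e'] at hn h ⊢
      exact (eq_or_pair_sublist_of_adjacent_left hn h.2).resolve_left (hyz.trans h.1).ne'⟩)
    (fun b h => ⟨h.1.trans hyz, by
      unfold Function.swap at h
      rw [e'] at hn h ⊢
      exact (eq_or_pair_sublist_of_adjacent_right hn h.2).resolve_left (h.1.trans hyz).ne⟩)
    (fun a h h' => not_pair_sublist_swap hn h.2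
      ((eq_or_pair_sublist_of_adjacent_left hn h'.2).resolve_left h.1.ne))
  refine ⟨t, fun a ha => ?_, ht.trans hcard, htchain.swap.mono fun a b h =>
    (incPair_swap_iff (hxy.trans hyz) hn a b).2 ⟨h.1, fun h' => h.2 h'.symm⟩⟩
  grind

end GreeneEquiv

/-! ### Row insertion -/

section RowInsert

variable {α : Type*} [LinearOrder α]

/-- Schensted row insertion of `v` into `R`: the new row, and the entry bumped out of it. -/
def rowInsert : List α → α → List α × Option α
  | [], v => ([v], none)
  | r :: R, v => if v < r then (v :: R, some r) else (r :: (rowInsert R v).1, (rowInsert R v).2)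

variable {R R' : List α} {a b r v v' : α}

lemma rowInsert_perm (R : List α) (v : α) :
    (R ++ [v]).Perm ((rowInsert R v).2.toList ++ (rowInsert R v).1) := by
  induction R with
  | nil => simp [rowInsert]
  | cons r R ih =>
    simp only [rowInsert]
    split_ifs
    · simp
    · exact (List.Perm.cons r ih).trans List.perm_middle.symm

lemma lt_and_mem_of_rowInsert_eq_some (h : (rowInsert R v).2 = some b) : v < b ∧ b ∈ R := by
  induction R with
  | nil => simp [rowInsert] at h
  | cons r R ih => grind [rowInsert]

lemma exists_rowInsert_eq_cons_lt (h : (rowInsert R v).2 = some b) :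
    ∃ x t, (rowInsert R v).1 = x :: t ∧ x < b := by
  cases R with
  | nil => simp [rowInsert] at h
  | cons r R =>
    have hvb := (lt_and_mem_of_rowInsert_eq_some h).1
    grind [rowInsert]

lemma mem_or_eq_of_mem_rowInsert (h : a ∈ (rowInsert R v).1) : a ∈ R ∨ a = v := by
  have := (rowInsert_perm R v).mem_iff (a := a)
  simp only [List.mem_append, List.mem_singleton] at this
  exact this.2 (Or.inr h)

lemma pairwise_lt_rowInsert (hR : R.Pairwise (· < ·)) (hv : v ∉ R) :
    (rowInsert R v).1.Pairwise (· < ·) := by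
  induction R with
  | nil => simp [rowInsert]
  | cons r R ih =>
    rw [List.pairwise_cons] at hR
    rw [List.mem_cons, not_or] at hv
    simp only [rowInsert]
    split_ifs with h
    · exact List.pairwise_cons.2 ⟨fun a ha => h.trans (hR.1 a ha), hR.2⟩
    · refine List.pairwise_cons.2 ⟨fun a ha => ?_, ih hR.2 hv.2⟩
      rcases mem_or_eq_of_mem_rowInsert ha with ha | rfl
      · exact hR.1 a ha
      · exact lt_of_le_of_ne (not_lt.1 h) (Ne.symm hv.1)

lemma greeneEquiv_append_singleton_of_lt_head (hR : (r :: R).Pairwise (· < ·)) (hv : v < r) :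
    GreeneEquiv (r :: R ++ [v]) (r :: v :: R) := by
  induction R generalizing r with
  | nil => exact GreeneEquiv.refl _
  | cons s R ih =>
    have hsR := List.pairwise_cons.1 hR
    have hrs : r < s := hsR.1 s (by simp)
    have slide := (ih hsR.2 (hv.trans hrs)).append [r] []
    have knuth := (greeneEquiv_yxz_yzx hv hrs).symm.append [] R
    simp only [List.append_nil, List.nil_append, List.cons_append] at slide knuth ⊢
    exact slide.trans knuth

lemma greeneEquiv_rowInsert (hR : R.Pairwise (· < ·)) :
    GreeneEquiv (R ++ [v]) ((rowInsert R v).2.toList ++ (rowInsert R v).1) := by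
  by_cases hv : v ∈ R
  · exact GreeneEquiv.of_not_nodup (rowInsert_perm R v) (by grind)
  induction R with
  | nil => exact GreeneEquiv.refl _
  | cons r R ih =>
    have hrR := List.pairwise_cons.1 hR
    rw [List.mem_cons, not_or] at hv
    simp only [rowInsert]
    split_ifs with hvr
    · exact greeneEquiv_append_singleton_of_lt_head hR hvr
    · have tail := (ih hrR.2 hv.2).append [r] []
      rcases hbump : (rowInsert R v).2 with _ | b
      · rw [hbump] at tail
        simpa using tail
      · obtain ⟨y, t, hy, hyb⟩ := exists_rowInsert_eq_cons_lt hbump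
        have hry : r < y := by
          rcases mem_or_eq_of_mem_rowInsert (by rw [hy]; simp : y ∈ (rowInsert R v).1) with h | rfl
          · exact hrR.1 y h
          · exact lt_of_le_of_ne (not_lt.1 hvr) (Ne.symm hv.1)
        have knuth := (greeneEquiv_xzy_zxy hry hyb).append [] t
        rw [hbump] at tail
        simp only [hy, Option.toList_some, List.append_nil, List.nil_append, List.cons_append]
          at tail knuth ⊢
        exact tail.trans knuth

lemma rowInsert_injective (hR : R.Pairwise (· < ·)) (hR' : R'.Pairwise (· < ·))
    (hlen : R.length = R'.length) (h : rowInsert R v = rowInsert R' v') : R = R' ∧ v = v' := by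
  induction R generalizing R' with
  | nil =>
    obtain rfl : R' = [] := List.length_eq_zero_iff.1 hlen.symm
    simpa [rowInsert] using h
  | cons r R ih =>
    obtain ⟨r', R', rfl⟩ := List.exists_cons_of_ne_nil (by rintro rfl; simp at hlen : R' ≠ [])
    rw [List.pairwise_cons] at hR hR'
    simp only [rowInsert] at h
    split_ifs at h with hv hv' hv' <;> simp only [Prod.mk.injEq, List.cons.injEq] at h
    · grind
    · obtain ⟨y, t, hy, hyb⟩ := exists_rowInsert_eq_cons_lt h.2.symm
      exact absurd (hR.1 y (by simp [h.1.2, hy])) hyb.not_gt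
    · obtain ⟨y, t, hy, hyb⟩ := exists_rowInsert_eq_cons_lt h.2
      exact absurd (hR'.1 y (by simp [← h.1.2, hy])) hyb.not_gt
    · obtain ⟨rfl, rfl⟩ := ih hR.2 hR'.2 (by simpa using hlen) (Prod.ext h.1.2 h.2)
      exact ⟨by rw [h.1.1], rfl⟩

/-- Row insertion of the entry bumped out of the previous row, if there is one. -/
def rowInsertOption (R : List α) : Option α → List α × Option α
  | none => (R, none)
  | some v => rowInsert R v

variable {o o' : Option α}

lemma rowInsertOption_perm (R : List α) (o : Option α) :
    (R ++ o.toList).Perm ((rowInsertOption R o).2.toList ++ (rowInsertOption R o).1) := by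
  cases o with
  | none => simp [rowInsertOption]
  | some v => exact rowInsert_perm R v

lemma greeneEquiv_rowInsertOption (o : Option α) (hR : R.Pairwise (· < ·)) :
    GreeneEquiv (R ++ o.toList)
      ((rowInsertOption R o).2.toList ++ (rowInsertOption R o).1) := by
  cases o with
  | none => simpa [rowInsertOption] using GreeneEquiv.refl R
  | some v => exact greeneEquiv_rowInsert hR

lemma rowInsertOption_injective (hR : R.Pairwise (· < ·)) (hR' : R'.Pairwise (· < ·))
    (hlen : R.length = R'.length) (h : rowInsertOption R o = rowInsertOption R' o') :
    R = R' ∧ o = o' := by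
  have hcount : o.toList.length = o'.toList.length := by
    have := (rowInsertOption_perm R o).length_eq
    have := (rowInsertOption_perm R' o').length_eq
    grind
  rcases o with _ | v <;> rcases o' with _ | v'
  · exact ⟨congrArg Prod.fst h, rfl⟩
  · simp at hcount
  · simp at hcount
  · obtain ⟨hRR', rfl⟩ := rowInsert_injective hR hR' hlen h
    exact ⟨hRR', rfl⟩

end RowInsert

/-! ### Tableaux and Greene's theorem -/

section Tableau

variable {α : Type*} {T : ℕ → List α} {R S : List α} {a b v x y : α} {i j m : ℕ}

/-- The reading word of the first `m` rows of `T`, from the lowest row `T (m - 1)` up to `T 0`. -/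
def readingWord (T : ℕ → List α) : ℕ → List α
  | 0 => []
  | m + 1 => T m ++ readingWord T m

lemma mem_readingWord : a ∈ readingWord T m ↔ ∃ i < m, a ∈ T i := by
  induction m with
  | zero => simp [readingWord]
  | succ m ih => rw [readingWord, List.mem_append, ih, Nat.exists_lt_succ_right, or_comm]

variable [LinearOrder α]

/-- The entry that arrives in row `i` when `v` is inserted into the tableau `T` of rows. -/
def bumpedInto (T : ℕ → List α) (v : α) : ℕ → Option α
  | 0 => some v
  | i + 1 => (rowInsertOption (T i) (bumpedInto T v i)).2

/-- The tableau obtained by inserting `v` into `T`, row by row. -/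
def tableauInsert (T : ℕ → List α) (v : α) (i : ℕ) : List α :=
  (rowInsertOption (T i) (bumpedInto T v i)).1

/-- The number of entries of `R` that are less than `x`. -/
def countLT (R : List α) (x : α) : ℕ := R.countP (· < x)

/-- The number of entries of `R` that are at most `x`. -/
def countLE (R : List α) (x : α) : ℕ := R.countP (· ≤ x)

/-- `T` is a tableau with at most `m` nonempty rows and distinct entries. The field `column` says
that the columns are strictly increasing: an entry `x` in column `p` of row `i + 1` makes
`countLE (T (i + 1)) x = p + 1`, so the entry of row `i` in that column exists and is `< x`. -/
structure IsTableau (T : ℕ → List α) (m : ℕ) : Prop where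
  row : ∀ i, (T i).Pairwise (· < ·)
  column : ∀ i x, countLE (T (i + 1)) x ≤ countLT (T i) x
  eq_nil : ∀ i, m ≤ i → T i = []
  nodup : (readingWord T m).Nodup

lemma greeneEquiv_readingWord_append (hT : ∀ i, (T i).Pairwise (· < ·)) (v : α) (m : ℕ) :
    GreeneEquiv (readingWord T m ++ [v])
      ((bumpedInto T v m).toList ++ readingWord (tableauInsert T v) m) := by
  induction m with
  | zero => exact GreeneEquiv.refl _
  | succ m ih =>
    have upper := ih.append (T m) []
    have row := (greeneEquiv_rowInsertOption (bumpedInto T v m) (hT m)).append []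
      (readingWord (tableauInsert T v) m)
    simp only [readingWord, bumpedInto, tableauInsert, List.append_nil, List.nil_append,
      List.append_assoc] at upper row ⊢
    exact upper.trans row

lemma bumpedInto_succ_of_eq_nil (h : T i = []) : bumpedInto T v (i + 1) = none := by
  rw [bumpedInto, h]
  cases bumpedInto T v i <;> rfl

lemma countLT_le_countLE (R : List α) (x : α) : countLT R x ≤ countLE R x :=
  List.countP_mono_left fun a _ ha => by simpa using (by simpa using ha : a < x).le

lemma countLT_mono (R : List α) : Monotone (countLT R) := fun x y hxy =>
  List.countP_mono_left fun a _ ha => by simpa using (by simpa using ha : a < x).trans_le hxy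

lemma countLT_lt_countLE (hx : x ∈ R) : countLT R x < countLE R x := by
  induction R with
  | nil => simp at hx
  | cons r R ih =>
    have := countLT_le_countLE R x
    simp only [countLT, countLE, List.countP_cons, decide_eq_true_eq] at *
    grind

lemma countLE_le_countLT_of_lt (R : List α) (hxy : x < y) : countLE R x ≤ countLT R y :=
  List.countP_mono_left fun a _ ha => by simpa using (by simpa using ha : a ≤ x).trans_lt hxy

lemma countLT_lt_length (hx : x ∈ R) : countLT R x < R.length :=
  (countLT_lt_countLE hx).trans_le List.countP_le_length

lemma countLE_le_of_rowInsert_gap (hR : R.Pairwise (· < ·))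
    (h : ∀ b, (rowInsert R v).2 = some b → x < b) : countLE R x ≤ countLE R v := by
  induction R with
  | nil => simp [countLE]
  | cons r R ih =>
    rw [List.pairwise_cons] at hR
    simp only [rowInsert] at h
    split_ifs at h with hvr
    · have hxr := h r rfl
      have : countLE (r :: R) x = 0 := List.countP_eq_zero.2 (by grind)
      omega
    · have := ih hR.2 h
      simp only [countLE, List.countP_cons, decide_eq_true_eq] at *
      grind

lemma column_rowInsert (hS : S.Pairwise (· < ·)) (hcol : ∀ x, countLE S x ≤ countLT R x)
    (c : Option α) (x : α) :
    countLE (rowInsertOption S (rowInsertOption R c).2).1 x ≤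
      countLT (rowInsertOption R c).1 x := by
  rcases c with _ | v
  · exact hcol x
  have upper := (rowInsert_perm R v).countP_eq (· < x)
  have hcolx := hcol x
  simp only [rowInsertOption]
  rcases hbump : (rowInsert R v).2 with _ | o
  · simp only [hbump, countLT, countLE, List.countP_append, Option.toList_none,
      List.countP_nil] at *
    omega
  obtain ⟨hvo, hoR⟩ := lt_and_mem_of_rowInsert_eq_some hbump
  have lower := (rowInsert_perm S o).countP_eq (· ≤ x)
  by_cases hox : o < x ∧ ∀ q, (rowInsert S o).2 = some q → x < q
  · have gap := countLE_le_of_rowInsert_gap hS hox.2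
    have hcolo := hcol o
    have hstrict := (countLT_lt_countLE hoR).trans_le (countLE_le_countLT_of_lt R hox.1)
    simp only [hbump, countLT, countLE, List.countP_append, Option.toList_some,
      List.countP_singleton, decide_eq_true_eq] at *
    grind
  · rcases hbump' : (rowInsert S o).2 with _ | q <;>
    simp only [hbump, hbump', countLT, countLE, List.countP_append, Option.toList_some,
      List.countP_singleton, decide_eq_true_eq, Option.toList_none, List.countP_nil] at * <;>
    grind

namespace IsTableau

lemma lt_of_mem (h : IsTableau T m) (ha : a ∈ T i) : i < m := by
  by_contra hi
  simp [h.eq_nil i (not_lt.1 hi)] at ha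

lemma mem_readingWord_iff (h : IsTableau T m) : a ∈ readingWord T m ↔ ∃ i, a ∈ T i := by
  rw [mem_readingWord]
  exact ⟨fun ⟨i, _, hi⟩ => ⟨i, hi⟩, fun ⟨i, hi⟩ => ⟨i, h.lt_of_mem hi, hi⟩⟩

lemma nodup_readingWord (h : IsTableau T m) (j : ℕ) : (readingWord T j).Nodup := by
  rcases le_total m j with hj | hj
  · induction j, hj using Nat.le_induction with
    | base => exact h.nodup
    | succ j hj ih => simpa [readingWord, h.eq_nil j hj] using ih
  · induction hj using Nat.decreasingInduction with
    | self => exact h.nodup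
    | of_succ j _ ih => exact List.Nodup.of_append_right ih

lemma mono {m' : ℕ} (h : IsTableau T m) (hm : m ≤ m') : IsTableau T m' :=
  ⟨h.row, h.column, fun i hi => h.eq_nil i (hm.trans hi), h.nodup_readingWord m'⟩

lemma nodup_readingWord_append (h : IsTableau T m) (hv : v ∉ readingWord T m) (j : ℕ) :
    (readingWord T j ++ [v]).Nodup := by
  have hv' : v ∉ readingWord T j := fun hvj => by
    obtain ⟨i, _, hi⟩ := mem_readingWord.1 hvj
    exact hv (h.mem_readingWord_iff.2 ⟨i, hi⟩)
  exact (List.nodup_append_comm.2 (List.nodup_cons.2 ⟨hv', h.nodup_readingWord j⟩))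

lemma bumpedInto_notMem (h : IsTableau T m) (hv : v ∉ readingWord T m)
    (hx : bumpedInto T v i = some x) : x ∉ T i := by
  have hnodup := ((greeneEquiv_readingWord_append h.row v i).append (T i) []).1.nodup_iff.1
    (by simpa [readingWord] using h.nodup_readingWord_append hv (i + 1))
  rw [hx] at hnodup
  grind

lemma greeneEquiv_tableauInsert (h : IsTableau T m) :
    GreeneEquiv (readingWord T m ++ [v]) (readingWord (tableauInsert T v) (m + 1)) := by
  have hm : T m = [] := h.eq_nil m le_rfl
  have := greeneEquiv_readingWord_append h.row v (m + 1)
  rw [bumpedInto_succ_of_eq_nil hm] at this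
  simpa [readingWord, hm] using this

lemma insert (h : IsTableau T m) (hv : v ∉ readingWord T m) :
    IsTableau (tableauInsert T v) (m + 1) where
  row i := by
    unfold tableauInsert
    rcases hc : bumpedInto T v i with _ | x
    · exact h.row i
    · exact pairwise_lt_rowInsert (h.row i) (h.bumpedInto_notMem hv hc)
  column i x := column_rowInsert (h.row (i + 1)) (h.column i) (bumpedInto T v i) x
  eq_nil i hi := by
    obtain ⟨j, rfl⟩ : ∃ j, i = j + 1 := ⟨i - 1, by omega⟩
    unfold tableauInsert
    rw [bumpedInto_succ_of_eq_nil (h.eq_nil j (by omega)), h.eq_nil (j + 1) (by omega)]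
    rfl
  nodup := h.greeneEquiv_tableauInsert.1.nodup_iff.1 (h.nodup_readingWord_append hv m)

lemma antitone_countLT (h : IsTableau T m) (x : α) : Antitone fun i => countLT (T i) x :=
  antitone_nat_of_succ_le fun i => (countLT_le_countLE _ x).trans (h.column i x)

lemma antitone_length (h : IsTableau T m) : Antitone fun i => (T i).length := by
  refine antitone_nat_of_succ_le fun i => ?_
  rcases (T (i + 1)).toFinset.eq_empty_or_nonempty with hempty | hne
  · simp [List.toFinset_eq_empty_iff _ |>.1 hempty]
  · set x := (T (i + 1)).toFinset.max' hne
    have hall : countLE (T (i + 1)) x = (T (i + 1)).length :=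
      List.countP_eq_length.2 fun a ha => by
        simpa using le_max' _ a (List.mem_toFinset.2 ha)
    calc (T (i + 1)).length = countLE (T (i + 1)) x := hall.symm
      _ ≤ countLT (T i) x := h.column i x
      _ ≤ (T i).length := List.countP_le_length

lemma row_eq_of_mem (h : IsTableau T m) (hi : a ∈ T i) (hj : a ∈ T j) : i = j := by
  have not_lt : ∀ {i j}, a ∈ T i → a ∈ T j → ¬ i < j := by
    intro i j hi hj hij
    have := h.nodup_readingWord (j + 1)
    rw [readingWord, List.nodup_append] at this
    exact this.2.2 a hj a (mem_readingWord.2 ⟨i, hij, hi⟩) rfl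
  have := not_lt hi hj
  have := not_lt hj hi
  omega

end IsTableau

lemma pair_sublist_readingWord_of_mem_row (hi : i < m) (h : [a, b].Sublist (T i)) :
    [a, b].Sublist (readingWord T m) := by
  induction m with
  | zero => omega
  | succ m ih =>
    rw [readingWord, pair_sublist_append]
    rcases eq_or_ne i m with rfl | him
    · exact Or.inl h
    · exact Or.inr (Or.inr (ih (by omega)))

lemma pair_sublist_readingWord_of_lt (hj : j < m) (hij : i < j) (hb : b ∈ T j) (ha : a ∈ T i) :
    [b, a].Sublist (readingWord T m) := by
  induction m with
  | zero => omega
  | succ m ih =>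
    rw [readingWord, pair_sublist_append]
    rcases eq_or_ne j m with rfl | hjm
    · exact Or.inr (Or.inl ⟨hb, mem_readingWord.2 ⟨i, hij, ha⟩⟩)
    · exact Or.inr (Or.inr (ih (by omega)))

/-- The row of `T` containing `a` (and `0` if there is none). -/
noncomputable def rowIndex (T : ℕ → List α) (a : α) : ℕ := sInf {i | a ∈ T i}

/-- The column of `T` containing `a`, for an entry `a` of `T`. -/
noncomputable def columnIndex (T : ℕ → List α) (a : α) : ℕ := countLT (T (rowIndex T a)) a

namespace IsTableau

lemma mem_row_rowIndex (h : IsTableau T m) (ha : a ∈ readingWord T m) : a ∈ T (rowIndex T a) :=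
  Nat.sInf_mem (h.mem_readingWord_iff.1 ha)

lemma rowIndex_eq (h : IsTableau T m) (hi : a ∈ T i) : rowIndex T a = i :=
  h.row_eq_of_mem (h.mem_row_rowIndex (h.mem_readingWord_iff.2 ⟨i, hi⟩)) hi

lemma columnIndex_lt_length (h : IsTableau T m) (ha : a ∈ readingWord T m) :
    columnIndex T a < (T (rowIndex T a)).length :=
  countLT_lt_length (h.mem_row_rowIndex ha)

lemma eq_of_rowIndex_eq_of_columnIndex_eq (h : IsTableau T m) (ha : a ∈ readingWord T m)
    (hb : b ∈ readingWord T m) (hrow : rowIndex T a = rowIndex T b)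
    (hcol : columnIndex T a = columnIndex T b) : a = b := by
  have ha' := countLT_lt_countLE (h.mem_row_rowIndex ha)
  have hb' := countLT_lt_countLE (h.mem_row_rowIndex hb)
  unfold columnIndex at hcol
  rw [hrow] at ha' hcol
  rcases lt_trichotomy a b with hab | hab | hab
  · exact absurd (countLE_le_countLT_of_lt (T (rowIndex T b)) hab) (by omega)
  · exact hab
  · exact absurd (countLE_le_countLT_of_lt (T (rowIndex T b)) hab) (by omega)

lemma lt_of_columnIndex_eq_of_rowIndex_lt (h : IsTableau T m) (hb : b ∈ readingWord T m)
    (hcol : columnIndex T a = columnIndex T b) (hrow : rowIndex T a < rowIndex T b) : a < b := by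
  by_contra hba
  have hlt : countLT (T (rowIndex T a)) a < countLT (T (rowIndex T a)) a := by
    obtain ⟨i, hi⟩ : ∃ i, rowIndex T b = i + 1 := ⟨rowIndex T b - 1, by omega⟩
    calc countLT (T (rowIndex T a)) a = countLT (T (rowIndex T b)) b := hcol
      _ < countLE (T (rowIndex T b)) b := countLT_lt_countLE (h.mem_row_rowIndex hb)
      _ ≤ countLT (T i) b := by rw [hi]; exact h.column i b
      _ ≤ countLT (T (rowIndex T a)) b := h.antitone_countLT b (by omega)
      _ ≤ countLT (T (rowIndex T a)) a := countLT_mono _ (not_lt.1 hba)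
  exact lt_irrefl _ hlt

lemma not_incPair_of_columnIndex_eq (h : IsTableau T m) (ha : a ∈ readingWord T m)
    (hb : b ∈ readingWord T m) (hcol : columnIndex T a = columnIndex T b) :
    ¬ IncPair (readingWord T m) a b := by
  rintro ⟨hab, hpair⟩
  rcases lt_trichotomy (rowIndex T a) (rowIndex T b) with hrow | hrow | hrow
  · exact not_pair_sublist_swap h.nodup hpair (pair_sublist_readingWord_of_lt
      (h.lt_of_mem (h.mem_row_rowIndex hb)) hrow (h.mem_row_rowIndex hb) (h.mem_row_rowIndex ha))
  · exact hab.ne (h.eq_of_rowIndex_eq_of_columnIndex_eq ha hb hrow hcol)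
  · exact hab.not_gt (h.lt_of_columnIndex_eq_of_rowIndex_lt ha hcol.symm hrow)

variable {k t : ℕ} {s : Finset α}

lemma hasIncUnion (h : IsTableau T m) (k : ℕ) :
    HasIncUnion (readingWord T m) k (∑ i ∈ range k, (T i).length) := by
  have mem_union : ∀ {a}, a ∈ (range k).biUnion (fun i => (T i).toFinset) ↔
      ∃ i < k, a ∈ T i := by simp
  refine ⟨(range k).biUnion fun i => (T i).toFinset, fun a ha => ?_, ?_, rowIndex T,
    fun a ha => ?_, fun a ha b hb hab hrow => ?_⟩
  · obtain ⟨i, _, hi⟩ := mem_union.1 ha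
    exact h.mem_readingWord_iff.2 ⟨i, hi⟩
  · rw [card_biUnion]
    · exact sum_congr rfl fun i _ => List.toFinset_card_of_nodup ((h.row i).imp LT.lt.ne)
    · intro i _ j _ hij
      refine Finset.disjoint_left.2 fun a hi hj => hij ?_
      exact h.row_eq_of_mem (List.mem_toFinset.1 hi) (List.mem_toFinset.1 hj)
  · obtain ⟨i, hik, hi⟩ := mem_union.1 ha
    rwa [h.rowIndex_eq hi]
  · obtain ⟨i, _, hi⟩ := mem_union.1 ha
    obtain ⟨j, _, hj⟩ := mem_union.1 hb
    obtain rfl : i = j := by rwa [h.rowIndex_eq hi, h.rowIndex_eq hj] at hrow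
    have incPair : ∀ {a b}, a ∈ T i → b ∈ T i → a < b → IncPair (readingWord T m) a b :=
      fun ha hb hab => ⟨hab, pair_sublist_readingWord_of_mem_row (h.lt_of_mem ha)
        (pair_sublist_of_pairwise_lt (h.row i) ha hb hab)⟩
    exact hab.lt_or_gt.imp (incPair hi hj) (incPair hj hi)

lemma card_filter_columnIndex_le (h : IsTableau T m) (hs : ∀ a ∈ s, a ∈ readingWord T m)
    (hchain : IsUnionOfChains (IncPair (readingWord T m)) k s) (p : ℕ) :
    #{a ∈ s | columnIndex T a = p} ≤ #{i ∈ range k | p < (T i).length} := by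
  obtain ⟨c, hlt, hc⟩ := hchain
  by_cases hlong : ∀ i < k, p < (T i).length
  · rw [filter_true_of_mem fun i hi => hlong i (mem_range.1 hi)]
    refine card_le_card_of_injOn c (fun a ha => ?_) fun a ha b hb hab => ?_
    · simpa using hlt a (mem_filter.1 ha).1
    · obtain ⟨has, hap⟩ := mem_filter.1 ha
      obtain ⟨hbs, hbp⟩ := mem_filter.1 hb
      have hcol : columnIndex T a = columnIndex T b := hap.trans hbp.symm
      by_contra hne
      exact (hc a has b hbs hne hab).elim
        (h.not_incPair_of_columnIndex_eq (hs a has) (hs b hbs) hcol)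
        (h.not_incPair_of_columnIndex_eq (hs b hbs) (hs a has) hcol.symm)
  · push Not at hlong
    obtain ⟨i, hik, hi⟩ := hlong
    refine card_le_card_of_injOn (rowIndex T) (fun a ha => ?_) fun a ha b hb hab => ?_
    · obtain ⟨has, hap⟩ := mem_filter.1 ha
      have hlen := h.columnIndex_lt_length (hs a has)
      rw [mem_coe, mem_filter, mem_range, ← hap]
      refine ⟨lt_of_not_ge fun hge => ?_, hlen⟩
      have : (T (rowIndex T a)).length ≤ (T i).length := h.antitone_length (hik.le.trans hge)
      omega
    · obtain ⟨has, hap⟩ := mem_filter.1 ha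
      obtain ⟨hbs, hbp⟩ := mem_filter.1 hb
      exact h.eq_of_rowIndex_eq_of_columnIndex_eq (hs a has) (hs b hbs) hab (hap.trans hbp.symm)

lemma le_sum_length_of_hasIncUnion (h : IsTableau T m) (ht : HasIncUnion (readingWord T m) k t) :
    t ≤ ∑ i ∈ range k, (T i).length := by
  obtain ⟨s, hs, rfl, hchain⟩ := ht
  have columnIndex_lt : ∀ a ∈ s, columnIndex T a ∈ range (T 0).length := fun a ha =>
    mem_range.2 ((h.columnIndex_lt_length (hs a ha)).trans_le (h.antitone_length (Nat.zero_le _)))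
  calc #s = ∑ p ∈ range (T 0).length, #{a ∈ s | columnIndex T a = p} :=
        card_eq_sum_card_fiberwise columnIndex_lt
    _ ≤ ∑ p ∈ range (T 0).length, #{i ∈ range k | p < (T i).length} :=
        sum_le_sum fun p _ => h.card_filter_columnIndex_le hs hchain p
    _ = ∑ i ∈ range k, #{p ∈ range (T 0).length | p < (T i).length} := by
        simp only [card_filter]
        exact sum_comm
    _ ≤ ∑ i ∈ range k, (T i).length := sum_le_sum fun i _ => by
        refine (card_le_card fun p hp => ?_).trans (card_range _).le
        exact mem_range.2 (mem_filter.1 hp).2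

end IsTableau

end Tableau

/-! ### Counting permutations by shape -/

section Counting

lemma card_le_sytCount_succ {β : Type*} {B n : ℕ} {μ : ℕ → ℕ} {F : Finset β} (row : β → ℕ)
    (hμ : F.Nonempty → Antitone μ) (hrow : ∀ x ∈ F, row x < B ∧ 0 < μ (row x))
    (hfiber : ∀ l, #{x ∈ F | row x = l} ≤ sytCount B n (μ - rowBox l)) :
    #F ≤ sytCount B (n + 1) μ := by
  rcases F.eq_empty_or_nonempty with rfl | hF
  · simp
  rw [sytCount_succ_of_antitone (hμ hF),
    card_eq_sum_card_fiberwise (f := row) (t := range B) fun x hx => by simpa using (hrow x hx).1]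
  refine sum_le_sum fun l _ => ?_
  split_ifs with hl
  · exact hfiber l
  · refine (card_eq_zero.2 (filter_eq_empty_iff.2 ?_)).le
    rintro x hx rfl
    exact hl (hrow x hx).2

lemma card_le_sytCount_zero {β : Type*} {B : ℕ} {μ : ℕ → ℕ} {F : Finset β}
    (hμ : F.Nonempty → μ = 0) (hF : (F : Set β).Subsingleton) : #F ≤ sytCount B 0 μ := by
  rcases F.eq_empty_or_nonempty with rfl | hne
  · simp
  · rw [sytCount, if_pos (hμ hne)]
    exact card_le_one.2 hF

variable {α : Type*}

/-- The row lengths of a tableau. -/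
def tableauShape (T : ℕ → List α) (i : ℕ) : ℕ := (T i).length

lemma tableauShape_eq_add_rowBox_of_eq_append {T U : ℕ → List α} {l : ℕ} {v : α}
    (h : ∀ i, T i = U i ++ if i = l then [v] else []) :
    tableauShape T = tableauShape U + rowBox l := by
  funext i
  have := congrArg List.length (h i)
  simp only [tableauShape, Pi.add_apply, Pi.single_apply]
  grind

lemma readingWord_filter (T : ℕ → List α) (p : α → Bool) (m : ℕ) :
    readingWord (fun i => (T i).filter p) m = (readingWord T m).filter p := by
  induction m with
  | zero => rfl
  | succ m ih => simp only [readingWord, ih, List.filter_append]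

variable [LinearOrder α] {T T' : ℕ → List α} {u v : α} {w w' R : List α} {m n B : ℕ}

/-- The insertion tableau of the reversal of a word: the head of the list is inserted last. -/
def insertionTableau : List α → ℕ → List α
  | [] => fun _ => []
  | v :: w => tableauInsert (insertionTableau w) v

lemma insertionTableau_spec (h : w.Nodup) :
    GreeneEquiv w.reverse (readingWord (insertionTableau w) w.length) ∧
      IsTableau (insertionTableau w) w.length := by
  induction w with
  | nil => exact ⟨.refl _, ⟨fun _ => .nil, fun _ _ => le_rfl, fun _ _ => rfl, .nil⟩⟩
  | cons v w ih =>
    rw [List.nodup_cons] at h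
    obtain ⟨hequiv, htab⟩ := ih h.2
    have hv : v ∉ readingWord (insertionTableau w) w.length := by
      rw [← hequiv.1.mem_iff, List.mem_reverse]
      exact h.1
    refine ⟨?_, htab.insert hv⟩
    rw [List.reverse_cons]
    exact (hequiv.append [] [v]).trans htab.greeneEquiv_tableauInsert

lemma isTableau_insertionTableau (h : w.Nodup) : IsTableau (insertionTableau w) w.length :=
  (insertionTableau_spec h).2

lemma IsTableau.exists_tableauShape_insert_eq (h : IsTableau T m) (v : α) :
    ∃ l ≤ m, tableauShape (tableauInsert T v) = tableauShape T + rowBox l := by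
  have hex : ∃ l, bumpedInto T v (l + 1) = none :=
    ⟨m, bumpedInto_succ_of_eq_nil (h.eq_nil m le_rfl)⟩
  have before : ∀ i ≤ Nat.find hex, (bumpedInto T v i).toList.length = 1 := by
    intro i hi
    rcases i with _ | i
    · rfl
    · exact Option.length_toList_eq_one_iff.2 (Option.isSome_iff_ne_none.2 (Nat.find_min hex hi))
  have after : ∀ i, Nat.find hex < i → (bumpedInto T v i).toList.length = 0 := by
    intro i hi
    have : bumpedInto T v i = none := by
      induction i, hi using Nat.le_induction with
      | base => exact Nat.find_spec hex
      | succ i _ ih => rw [bumpedInto, ih]; rfl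
    simp [this]
  refine ⟨Nat.find hex, Nat.find_min' hex (bumpedInto_succ_of_eq_nil (h.eq_nil m le_rfl)), ?_⟩
  funext i
  have hlen : (T i).length + (bumpedInto T v i).toList.length =
      (bumpedInto T v (i + 1)).toList.length + (tableauInsert T v i).length := by
    simpa only [List.length_append, bumpedInto, tableauInsert] using
      (rowInsertOption_perm (T i) (bumpedInto T v i)).length_eq
  have hi := before i
  have hi' := before (i + 1)
  have hgt := after i
  have hgt' := after (i + 1)
  simp only [tableauShape, Pi.add_apply, Pi.single_apply]
  grind

lemma IsTableau.eq_and_eq_of_tableauInsert_eq (h : IsTableau T m) (h' : IsTableau T' m)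
    (hshape : tableauShape T = tableauShape T') (heq : tableauInsert T u = tableauInsert T' v) :
    T = T' ∧ u = v := by
  have descend : ∀ i, bumpedInto T u (i + 1) = bumpedInto T' v (i + 1) →
      T i = T' i ∧ bumpedInto T u i = bumpedInto T' v i := fun i hi =>
    rowInsertOption_injective (h.row i) (h'.row i) (congrFun hshape i)
      (Prod.ext (congrFun heq i) hi)
  have below : ∀ i, m ≤ i → bumpedInto T u (i + 1) = bumpedInto T' v (i + 1) := fun i hi => by
    rw [bumpedInto_succ_of_eq_nil (h.eq_nil i hi), bumpedInto_succ_of_eq_nil (h'.eq_nil i hi)]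
  have all : ∀ i, bumpedInto T u (i + 1) = bumpedInto T' v (i + 1) := fun i => by
    rcases le_total m i with hi | hi
    · exact below i hi
    · induction hi using Nat.decreasingInduction with
      | self => exact below m le_rfl
      | of_succ i _ ih => exact (descend (i + 1) ih).2
  exact ⟨funext fun i => (descend i (all i)).1, Option.some.inj (descend 0 (all 0)).2⟩

lemma insertionTableau_cons_inj (hw : w.Nodup) (hw' : w'.Nodup) (hlen : w.length = w'.length)
    (hshape : tableauShape (insertionTableau w) = tableauShape (insertionTableau w'))
    (heq : insertionTableau (u :: w) = insertionTableau (v :: w')) :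
    insertionTableau w = insertionTableau w' ∧ u = v :=
  (isTableau_insertionTableau hw).eq_and_eq_of_tableauInsert_eq
    (hlen ▸ isTableau_insertionTableau hw') hshape heq

lemma exists_tableauShape_eq_tail_add_rowBox (hw : w.Nodup) (hne : w ≠ []) :
    ∃ l < w.length,
      tableauShape (insertionTableau w) = tableauShape (insertionTableau w.tail) + rowBox l := by
  obtain ⟨v, u, rfl⟩ := List.exists_cons_of_ne_nil hne
  obtain ⟨l, hl, hshape⟩ :=
    (isTableau_insertionTableau hw.of_cons).exists_tableauShape_insert_eq v
  exact ⟨l, by simpa [Nat.lt_succ_iff] using hl, hshape⟩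

lemma card_le_sytCount_of_insertionTableau_eq (hn : n ≤ B) {F : Finset (List α)}
    (hF : ∀ w ∈ F, w.Nodup ∧ w.length = n ∧ insertionTableau w = T) :
    #F ≤ sytCount B n (tableauShape T) := by
  induction n generalizing T F with
  | zero =>
    have hnil : ∀ w ∈ F, w = [] := fun w hw => List.length_eq_zero_iff.1 (hF w hw).2.1
    refine card_le_sytCount_zero (fun ⟨w, hw⟩ => ?_) fun w hw w' hw' => by grind
    obtain ⟨_, _, rfl⟩ := hF w hw
    rw [hnil w hw]
    rfl
  | succ n ih =>
    have exists_row : ∀ w ∈ F, ∃ l < B,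
        tableauShape T = tableauShape (insertionTableau w.tail) + rowBox l := fun w hw => by
      obtain ⟨hnodup, hlen, rfl⟩ := hF w hw
      obtain ⟨l, hl, hshape⟩ := exists_tableauShape_eq_tail_add_rowBox hnodup (by grind)
      exact ⟨l, by omega, hshape⟩
    choose! row hrowB hrow using exists_row
    refine card_le_sytCount_succ row (fun ⟨w, hw⟩ => ?_)
      (fun w hw => ⟨hrowB w hw, by rw [hrow w hw]; simp⟩) fun l => ?_
    · obtain ⟨hnodup, _, rfl⟩ := hF w hw
      exact (isTableau_insertionTableau hnodup).antitone_length
    rcases ({w ∈ F | row w = l} : Finset _).eq_empty_or_nonempty with hempty | ⟨w₀, hw₀⟩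
    · simp [hempty]
    obtain ⟨hw₀F, hw₀l⟩ := mem_filter.1 hw₀
    obtain ⟨hnodup₀, hlen₀, hT₀⟩ := hF w₀ hw₀F
    obtain ⟨v, u₀, rfl⟩ := List.exists_cons_of_length_eq_add_one hlen₀
    have hshape₀ : tableauShape T = tableauShape (insertionTableau u₀) + rowBox l :=
      hw₀l ▸ hrow _ hw₀F
    have fiber_cons : ∀ w ∈ F, row w = l → ∃ u, w = v :: u ∧ u.Nodup ∧ u.length = n ∧
        insertionTableau u = insertionTableau u₀ := by
      rintro w hw rfl
      obtain ⟨hnodup, hlen, hT⟩ := hF w hw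
      obtain ⟨v', u, rfl⟩ := List.exists_cons_of_length_eq_add_one hlen
      obtain ⟨htab, rfl⟩ := insertionTableau_cons_inj hnodup.of_cons hnodup₀.of_cons (by grind)
        (add_right_cancel ((hrow _ hw).symm.trans hshape₀)) (hT.trans hT₀.symm)
      exact ⟨u, rfl, hnodup.of_cons, by simpa using hlen, htab⟩
    rw [hshape₀, add_tsub_cancel_right]
    calc #{w ∈ F | row w = l} = #({w ∈ F | row w = l}.image List.tail) :=
          (card_image_of_injOn fun w hw w' hw' _ => by grind).symm
      _ ≤ sytCount B n (tableauShape (insertionTableau u₀)) :=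
          ih (by omega) fun u hu => by grind

lemma IsTableau.filter_lt (h : IsTableau T m) (v : α) :
    IsTableau (fun i => (T i).filter (· < v)) m where
  row i := (h.row i).filter _
  column i x := by
    simp only [countLT, countLE, List.countP_filter]
    rcases lt_or_ge x v with hxv | hvx
    · refine (List.countP_mono_left fun a _ => ?_).trans ((h.column i x).trans
        (List.countP_mono_left fun a _ => ?_)) <;> grind
    · refine (List.countP_mono_left fun a _ => ?_).trans ((h.column i v).trans
        (List.countP_mono_left fun a _ => ?_)) <;> grind
  eq_nil i hi := by simp [h.eq_nil i hi]
  nodup := readingWord_filter T _ m ▸ h.nodup.filter _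

lemma eq_filter_lt_append (hR : R.Pairwise (· < ·)) (hv : ∀ a ∈ R, a ≤ v) :
    R = R.filter (· < v) ++ if v ∈ R then [v] else [] := by
  induction R with
  | nil => simp
  | cons r R ih =>
    obtain ⟨hr, hR⟩ := List.pairwise_cons.1 hR
    have ih := ih hR fun a ha => hv a (List.mem_cons_of_mem r ha)
    rcases (hv r List.mem_cons_self).lt_or_eq with hrv | rfl
    · simpa [hrv, hrv.ne'] using ih
    · obtain rfl : R = [] := List.eq_nil_iff_forall_not_mem.2 fun a ha =>
        (hr a ha).not_ge (hv a (List.mem_cons_of_mem r ha))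
      simp

lemma IsTableau.eq_filter_lt_append_of_mem (h : IsTableau T m) {l : ℕ}
    (hv : ∀ i, ∀ a ∈ T i, a ≤ v) (hl : v ∈ T l) (i : ℕ) :
    T i = (T i).filter (· < v) ++ if i = l then [v] else [] := by
  have hi : v ∈ T i ↔ i = l := ⟨fun hi => h.row_eq_of_mem hi hl, fun hi => hi ▸ hl⟩
  simpa only [hi] using eq_filter_lt_append (h.row i) (hv i)

lemma card_le_sytCount_of_tableauShape_eq (hn : n ≤ B) {V : Finset α} (hV : #V = n)
    {μ : ℕ → ℕ} {F : Finset (ℕ → List α)}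
    (hF : ∀ T ∈ F, IsTableau T B ∧ (∀ a, (∃ i, a ∈ T i) ↔ a ∈ V) ∧ tableauShape T = μ) :
    #F ≤ sytCount B n μ := by
  induction n generalizing V μ F with
  | zero =>
    obtain rfl := card_eq_zero.1 hV
    have hnil : ∀ T ∈ F, T = fun _ => [] := fun T hT => funext fun i =>
      List.eq_nil_iff_forall_not_mem.2 fun a ha => by simpa using ((hF T hT).2.1 a).1 ⟨i, ha⟩
    refine card_le_sytCount_zero (fun ⟨T, hT⟩ => ?_) fun T hT T' hT' => by grind
    rw [← (hF T hT).2.2, hnil T hT]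
    rfl
  | succ n ih =>
    obtain ⟨M, hM, hmax⟩ : ∃ M ∈ V, ∀ a ∈ V, a ≤ M :=
      V.exists_max_image id (card_pos.1 (by omega))
    have exists_row : ∀ T ∈ F, ∃ l, M ∈ T l := fun T hT => ((hF T hT).2.1 M).2 hM
    choose! row hrow using exists_row
    have hdecomp : ∀ T ∈ F, ∀ i, T i = (T i).filter (· < M) ++ if i = row T then [M] else [] :=
      fun T hT => (hF T hT).1.eq_filter_lt_append_of_mem
        (fun i a ha => hmax a (((hF T hT).2.1 a).1 ⟨i, ha⟩)) (hrow T hT)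
    have hshape : ∀ T ∈ F, μ = tableauShape (fun i => (T i).filter (· < M)) + rowBox (row T) :=
      fun T hT => (hF T hT).2.2 ▸ tableauShape_eq_add_rowBox_of_eq_append (hdecomp T hT)
    refine card_le_sytCount_succ row (fun ⟨T, hT⟩ => (hF T hT).2.2 ▸ (hF T hT).1.antitone_length)
      (fun T hT => ⟨(hF T hT).1.lt_of_mem (hrow T hT), by rw [hshape T hT]; simp⟩) fun l => ?_
    calc #{T ∈ F | row T = l}
        = #({T ∈ F | row T = l}.image fun T i => (T i).filter (· < M)) := by
          refine (card_image_of_injOn fun T hT T' hT' h => funext fun i => ?_).symm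
          obtain ⟨hTF, rfl⟩ := mem_filter.1 hT
          obtain ⟨hTF', hl⟩ := mem_filter.1 hT'
          rw [hdecomp T hTF i, hdecomp T' hTF' i, congrFun h i, hl]
      _ ≤ sytCount B n (μ - rowBox l) := by
          refine ih (by omega) (V := V.erase M) (by rw [card_erase_of_mem hM]; omega) fun U hU => ?_
          obtain ⟨T, hT, rfl⟩ := mem_image.1 hU
          obtain ⟨hTF, rfl⟩ := mem_filter.1 hT
          refine ⟨(hF T hTF).1.filter_lt M, fun a => ?_, ?_⟩
          · grind
          · rw [hshape T hTF, add_tsub_cancel_right]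

end Counting

section PermShape

variable {n k m B : ℕ} {σ : Equiv.Perm (Fin n)} {s : Finset (Fin n)}

lemma card_le_maxIncUnion (hs : IsUnionOfChains (fun i j => i < j ∧ σ i < σ j) k s) :
    #s ≤ maxIncUnion k σ := by
  obtain ⟨c, hlt, hc⟩ := hs
  set C : Fin k → Finset (Fin n) := fun t => {i ∈ s | c i = t}
  have hmono : ∀ t, StrictMonoOn (fun i => σ i) (C t : Set (Fin n)) := fun t i hi j hj hij => by
    obtain ⟨his, hit⟩ := mem_filter.1 hi
    obtain ⟨hjs, hjt⟩ := mem_filter.1 hj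
    have := hc i his j hjs hij.ne (hit.trans hjt.symm)
    grind
  have hcover : s ⊆ univ.biUnion C := fun i hi =>
    mem_biUnion.2 ⟨⟨c i, hlt i hi⟩, mem_univ _, mem_filter.2 ⟨hi, rfl⟩⟩
  have hsup := le_sup (f := fun C : Fin k → Finset (Fin n) =>
    if ∀ t, StrictMonoOn (fun i => σ i) (C t : Set (Fin n)) then #(univ.biUnion C) else 0)
    (mem_univ C)
  rw [if_pos hmono] at hsup
  exact (card_le_card hcover).trans hsup

lemma exists_isUnionOfChains_card_eq_maxIncUnion (σ : Equiv.Perm (Fin n)) (k : ℕ) :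
    ∃ s : Finset (Fin n), IsUnionOfChains (fun i j => i < j ∧ σ i < σ j) k s ∧
      #s = maxIncUnion k σ := by
  obtain ⟨C, -, hC⟩ := exists_mem_eq_sup (univ : Finset (Fin k → Finset (Fin n)))
    ⟨fun _ => ∅, mem_univ _⟩ (fun C => if ∀ t, StrictMonoOn (fun i => σ i) (C t : Set (Fin n))
      then #(univ.biUnion C) else 0)
  rw [maxIncUnion, hC]
  split_ifs with hmono
  · refine ⟨univ.biUnion C, ?_, rfl⟩
    have hmem : ∀ i ∈ univ.biUnion C, ∃ t, i ∈ C t := by simp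
    choose c hc using hmem
    refine ⟨fun i => if h : i ∈ univ.biUnion C then (c i h : ℕ) else 0, by grind, ?_⟩
    intro i hi j hj hij hcij
    simp only [dif_pos hi, dif_pos hj] at hcij
    have hit := hc i hi
    rw [Fin.ext hcij] at hit
    exact hij.lt_or_gt.imp (fun h => ⟨h, hmono _ hit (hc j hj) h⟩)
      fun h => ⟨h, hmono _ (hc j hj) hit h⟩
  · exact ⟨∅, ⟨fun _ => 0, by simp, by simp⟩, rfl⟩

lemma pair_sublist_ofFn {α : Type*} (f : Fin n → α) {i j : Fin n} (hij : i < j) :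
    [f i, f j].Sublist (List.ofFn f) := by
  rw [List.ofFn_eq_map]
  exact (pair_sublist_of_pairwise_lt (List.pairwise_lt_finRange n) (List.mem_finRange i)
    (List.mem_finRange j) hij).map f

lemma nodup_ofFn_perm (σ : Equiv.Perm (Fin n)) : (List.ofFn σ).Nodup :=
  List.nodup_ofFn.2 σ.injective

lemma incPair_ofFn_iff {i j : Fin n} :
    IncPair (List.ofFn σ) (σ i) (σ j) ↔ i < j ∧ σ i < σ j := by
  refine ⟨fun ⟨hσ, hpair⟩ => ⟨?_, hσ⟩, fun ⟨hij, hσ⟩ => ⟨hσ, pair_sublist_ofFn σ hij⟩⟩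
  have hne : i ≠ j := by grind
  exact hne.lt_or_gt.resolve_right fun hji =>
    not_pair_sublist_swap (nodup_ofFn_perm σ) hpair (pair_sublist_ofFn σ hji)

lemma hasIncUnion_ofFn_iff : HasIncUnion (List.ofFn σ) k m ↔
    ∃ s : Finset (Fin n), IsUnionOfChains (fun i j => i < j ∧ σ i < σ j) k s ∧ #s = m := by
  constructor
  · rintro ⟨s, -, rfl, c, hlt, hc⟩
    refine ⟨s.map σ.symm.toEmbedding, ⟨fun i => c (σ i), ?_, ?_⟩, card_map _⟩
    all_goals simp only [mem_map_equiv, Equiv.symm_symm]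
    · exact fun i hi => hlt (σ i) hi
    · intro i hi j hj hij hcij
      simpa only [incPair_ofFn_iff] using hc (σ i) hi (σ j) hj (σ.injective.ne hij) hcij
  · rintro ⟨s, ⟨c, hlt, hc⟩, rfl⟩
    refine ⟨s.map σ.toEmbedding, by simp [σ.surjective _], card_map _, fun a => c (σ.symm a),
      ?_, ?_⟩
    all_goals simp only [mem_map_equiv]
    · exact fun a ha => hlt (σ.symm a) ha
    · intro a ha b hb hab hcab
      have := hc (σ.symm a) ha (σ.symm b) hb (σ.symm.injective.ne hab) hcab
      simp only [← incPair_ofFn_iff] at this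
      simpa only [Equiv.apply_symm_apply] using this

/-- The insertion tableau of the word `σ 0, σ 1, …`. -/
def permTableau (σ : Equiv.Perm (Fin n)) : ℕ → List (Fin n) :=
  insertionTableau (List.ofFn σ).reverse

/-- The row lengths of the Robinson–Schensted shape of `σ`, indexed from `0`. -/
def permShape (σ : Equiv.Perm (Fin n)) : ℕ → ℕ := tableauShape (permTableau σ)

lemma permTableau_spec (σ : Equiv.Perm (Fin n)) :
    GreeneEquiv (List.ofFn σ) (readingWord (permTableau σ) n) ∧ IsTableau (permTableau σ) n := by
  simpa [permTableau] using insertionTableau_spec (List.nodup_reverse.2 (nodup_ofFn_perm σ))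

lemma isTableau_permTableau (σ : Equiv.Perm (Fin n)) : IsTableau (permTableau σ) n :=
  (permTableau_spec σ).2

lemma hasIncUnion_permTableau_iff :
    HasIncUnion (readingWord (permTableau σ) n) k m ↔ HasIncUnion (List.ofFn σ) k m := by
  simpa using ((permTableau_spec σ).1.2 [] [] (by simpa using nodup_ofFn_perm σ) k m).symm

lemma maxIncUnion_eq_sum_permShape (σ : Equiv.Perm (Fin n)) (k : ℕ) :
    maxIncUnion k σ = ∑ i ∈ range k, permShape σ i := by
  apply le_antisymm
  · exact (isTableau_permTableau σ).le_sum_length_of_hasIncUnion (hasIncUnion_permTableau_iff.2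
      (hasIncUnion_ofFn_iff.2 (exists_isUnionOfChains_card_eq_maxIncUnion σ k)))
  · obtain ⟨s, hs, hcard⟩ := hasIncUnion_ofFn_iff.1
      (hasIncUnion_permTableau_iff.1 ((isTableau_permTableau σ).hasIncUnion k))
    exact hcard.symm.le.trans (card_le_maxIncUnion hs)

lemma rowLen_succ (σ : Equiv.Perm (Fin n)) (i : ℕ) : rowLen (i + 1) σ = permShape σ i := by
  rw [rowLen, maxIncUnion_eq_sum_permShape, maxIncUnion_eq_sum_permShape, Nat.add_sub_cancel,
    sum_range_succ, Nat.add_sub_cancel_left]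

lemma permShape_eq_zero_of_le (σ : Equiv.Perm (Fin n)) {i : ℕ} (hi : n ≤ i) :
    permShape σ i = 0 := by
  rw [permShape, tableauShape, (isTableau_permTableau σ).eq_nil i hi, List.length_nil]

lemma length_readingWord {α : Type*} (T : ℕ → List α) (m : ℕ) :
    (readingWord T m).length = ∑ i ∈ range m, tableauShape T i := by
  induction m with
  | zero => rfl
  | succ m ih => rw [readingWord, List.length_append, sum_range_succ, ih, tableauShape, add_comm]

lemma permShape_mem_piAntidiag (hB : n ≤ B) (σ : Equiv.Perm (Fin n)) :
    permShape σ ∈ piAntidiag (range B) n := by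
  rw [mem_piAntidiag]
  refine ⟨?_, fun i hi => mem_range.2 (lt_of_not_ge fun hBi =>
    hi (permShape_eq_zero_of_le σ (hB.trans hBi)))⟩
  calc ∑ i ∈ range B, permShape σ i = ∑ i ∈ range n, permShape σ i := by
        refine (sum_subset (range_subset_range.2 hB) fun i _ hi => ?_).symm
        exact permShape_eq_zero_of_le σ (by simpa using hi)
    _ = (readingWord (permTableau σ) n).length := (length_readingWord _ n).symm
    _ = n := by rw [← (permTableau_spec σ).1.1.length_eq, List.length_ofFn]

lemma mem_permTableau (σ : Equiv.Perm (Fin n)) (a : Fin n) : ∃ i, a ∈ permTableau σ i := by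
  rw [← (isTableau_permTableau σ).mem_readingWord_iff, ← (permTableau_spec σ).1.1.mem_iff,
    List.mem_ofFn]
  exact σ.surjective a

lemma card_permTableau_eq_le (hB : n ≤ B) (T : ℕ → List (Fin n)) :
    #{σ : Equiv.Perm (Fin n) | permTableau σ = T} ≤ sytCount B n (tableauShape T) := by
  have hinj : Function.Injective fun σ : Equiv.Perm (Fin n) => (List.ofFn σ).reverse :=
    fun σ τ h => DFunLike.coe_injective (List.ofFn_injective (List.reverse_injective h))
  rw [← card_image_of_injective _ hinj]
  refine card_le_sytCount_of_insertionTableau_eq hB fun w hw => ?_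
  obtain ⟨σ, hσ, rfl⟩ := mem_image.1 hw
  exact ⟨List.nodup_reverse.2 (nodup_ofFn_perm σ), by simp, (mem_filter.1 hσ).2⟩

lemma card_permShape_eq_le (hB : n ≤ B) (μ : ℕ → ℕ) :
    #{σ : Equiv.Perm (Fin n) | permShape σ = μ} ≤ sytCount B n μ ^ 2 := by
  set S : Finset (Equiv.Perm (Fin n)) := {σ | permShape σ = μ}
  have fiber_le : ∀ T ∈ S.image permTableau, #{σ ∈ S | permTableau σ = T} ≤ sytCount B n μ := by
    intro T hT
    obtain ⟨τ, hτ, rfl⟩ := mem_image.1 hT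
    rw [← (mem_filter.1 hτ).2]
    exact (card_le_card (filter_subset_filter _ (subset_univ S))).trans
      (card_permTableau_eq_le hB _)
  have image_le : #(S.image permTableau) ≤ sytCount B n μ := by
    refine card_le_sytCount_of_tableauShape_eq hB (card_fin n) fun T hT => ?_
    obtain ⟨τ, hτ, rfl⟩ := mem_image.1 hT
    exact ⟨(isTableau_permTableau τ).mono hB, fun a => by simp [mem_permTableau τ a],
      (mem_filter.1 hτ).2⟩
  calc #S = ∑ T ∈ S.image permTableau, #{σ ∈ S | permTableau σ = T} :=
        card_eq_sum_card_image permTableau S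
    _ ≤ #(S.image permTableau) * sytCount B n μ := sum_le_card_nsmul _ _ _ fiber_le
    _ ≤ sytCount B n μ ^ 2 := by
        rw [sq]
        exact Nat.mul_le_mul_right _ image_le

lemma card_permShape_eq (hB : n ≤ B) {μ : ℕ → ℕ} (hμ : μ ∈ piAntidiag (range B) n) :
    #{σ : Equiv.Perm (Fin n) | permShape σ = μ} = sytCount B n μ ^ 2 := by
  refine (sum_eq_sum_iff_of_le fun μ _ => card_permShape_eq_le hB μ).1 ?_ μ hμ
  rw [← card_eq_sum_card_fiberwise fun σ _ => permShape_mem_piAntidiag hB σ, card_univ,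
    Fintype.card_perm, Fintype.card_fin]
  exact_mod_cast (sum_sytCount_sq n hB).symm

lemma sum_comp_permShape (hB : n ≤ B) (g : (ℕ → ℕ) → ℝ) :
    ∑ σ : Equiv.Perm (Fin n), g (permShape σ) =
      ∑ μ ∈ piAntidiag (range B) n, g μ * (sytCount B n μ : ℝ) ^ 2 := by
  rw [← sum_fiberwise_of_maps_to fun σ _ => permShape_mem_piAntidiag hB σ]
  refine sum_congr rfl fun μ hμ => ?_
  rw [sum_congr rfl fun σ hσ => congrArg g (mem_filter.1 hσ).2, sum_const,
    card_permShape_eq hB hμ, nsmul_eq_mul, Nat.cast_pow, mul_comm]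

end PermShape

/-! ### Expected row lengths -/

/-- The expected increment of the length of row `i` of the RSK shape when a uniform permutation of
`n` letters is replaced by one of `n + 1` letters. -/
noncomputable def meanRowIncrement (n i : ℕ) : ℝ :=
  𝔼 σ : Equiv.Perm (Fin (n + 1)), (permShape σ i : ℝ) -
    𝔼 σ : Equiv.Perm (Fin n), (permShape σ i : ℝ)

/-- The expected size of a largest union of `k` increasing subsequences of a uniform permutation
of `n` letters. -/
noncomputable def meanMaxInc (k n : ℕ) : ℝ :=
  𝔼 σ : Equiv.Perm (Fin n), (maxIncUnion k σ : ℝ)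

section MeanRow

variable {B n i k : ℕ}

lemma Pn_eq_expect (p : Equiv.Perm (Fin n) → Prop) : Pn p = 𝔼 σ, if p σ then (1 : ℝ) else 0 := by
  rw [Fintype.expect_eq_sum_div_card, sum_boole, Pn]

lemma expect_comp_permShape (hB : n ≤ B) (g : (ℕ → ℕ) → ℝ) :
    𝔼 σ : Equiv.Perm (Fin n), g (permShape σ) = plancherelMean B n g := by
  rw [Fintype.expect_eq_sum_div_card, sum_comp_permShape hB, Fintype.card_perm, Fintype.card_fin,
    plancherelMean]

lemma meanRowIncrement_eq_rowGrowth (hn : n < B) (hi : i < B) :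
    meanRowIncrement n i = rowGrowth B n i := by
  rw [meanRowIncrement, expect_comp_permShape (B := B) hn fun μ => (μ i : ℝ),
    expect_comp_permShape (B := B) hn.le fun μ => (μ i : ℝ),
    plancherelMean_succ_row hn hi fun t => (t : ℝ), add_sub_cancel_left, rowGrowth]
  simp only [Nat.cast_add, Nat.cast_one, add_sub_cancel_left, one_mul]

lemma meanRowIncrement_nonneg (n i : ℕ) : 0 ≤ meanRowIncrement n i := by
  rw [meanRowIncrement_eq_rowGrowth (B := n + i + 1) (by lia) (by lia)]
  exact rowGrowth_nonneg _ _ _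

lemma sqrt_mul_meanRowIncrement_le_one (n i : ℕ) : √(n + 1) * meanRowIncrement n i ≤ 1 := by
  have hn : n < n + i + 1 := by lia
  have hi : i < n + i + 1 := by lia
  rw [meanRowIncrement_eq_rowGrowth hn hi]
  exact sqrt_mul_rowGrowth_le_one hn hi

lemma sum_meanRowIncrement_antitone (k : ℕ) :
    Antitone fun n => ∑ i ∈ range k, meanRowIncrement n i := by
  refine antitone_nat_of_succ_le fun n => ?_
  have heq : ∀ m ≤ n + 1, ∑ i ∈ range k, meanRowIncrement m i =
      ∑ i ∈ range k, rowGrowth (n + k + 2) m i := fun m hm =>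
    sum_congr rfl fun i hi =>
      meanRowIncrement_eq_rowGrowth (by lia) (by have := mem_range.1 hi; lia)
  rw [heq _ le_rfl, heq _ n.le_succ]
  exact sum_rowGrowth_succ_le (by lia) (by lia)

lemma Pn_rowLen_eq_le (n i s : ℕ) : Pn (fun σ : Equiv.Perm (Fin n) => rowLen (i + 1) σ = s) ≤
    meanRowIncrement n i + 2 * √(2 * (1 - √(n + 1) * meanRowIncrement n i)) := by
  have hn : n < n + i + 1 := by lia
  have hi : i < n + i + 1 := by lia
  have hatom := plancherelMean_eq_le hn hi s
  rw [← expect_comp_permShape hn.le, ← meanRowIncrement_eq_rowGrowth hn hi] at hatom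
  simp only [Pn_eq_expect, rowLen_succ]
  convert hatom

lemma meanMaxInc_succ_sub (k n : ℕ) :
    meanMaxInc k (n + 1) - meanMaxInc k n = ∑ i ∈ range k, meanRowIncrement n i := by
  simp only [meanMaxInc, meanRowIncrement, maxIncUnion_eq_sum_permShape, Nat.cast_sum,
    expect_sum_comm, sum_sub_distrib]

end MeanRow

/-! ### A variance bound for functions of a uniform permutation -/

lemma sq_expect_le_expect_sq {ι : Type*} [Fintype ι] (f : ι → ℝ) :
    (𝔼 i, f i) ^ 2 ≤ 𝔼 i, f i ^ 2 := by
  rcases isEmpty_or_nonempty ι with hι | hι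
  · simp
  · simpa using expect_mul_sq_le_sq_mul_sq univ f fun _ => 1

lemma expect_sub_expect_sq {ι : Type*} [Fintype ι] [Nonempty ι] (f : ι → ℝ) :
    𝔼 i, (f i - 𝔼 j, f j) ^ 2 = 𝔼 i, f i ^ 2 - (𝔼 i, f i) ^ 2 := by
  simp only [sub_sq, expect_add_distrib, expect_sub_distrib, ← mul_expect, ← expect_mul,
    Fintype.expect_const]
  ring

lemma expect_sq_sub_sq_expect_le {ι : Type*} [Fintype ι] [Nonempty ι] {g : ι → ℝ}
    {W : ι → ι → ℝ} (hW : ∀ p q, max (g p - g q) 0 ^ 2 ≤ W p q) :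
    𝔼 p, g p ^ 2 - (𝔼 p, g p) ^ 2 ≤ 𝔼 p, 𝔼 q, W p q := by
  have hpairs : 𝔼 p, 𝔼 q, (g p - g q) ^ 2 = 2 * (𝔼 p, g p ^ 2 - (𝔼 p, g p) ^ 2) := by
    simp only [sub_sq, expect_add_distrib, expect_sub_distrib, ← mul_expect, ← expect_mul,
      Fintype.expect_const]
    ring
  have hle : 𝔼 p, 𝔼 q, (g p - g q) ^ 2 ≤ 𝔼 p, 𝔼 q, W p q + 𝔼 p, 𝔼 q, W q p := by
    simp only [← expect_add_distrib]
    refine expect_le_expect fun p _ => expect_le_expect fun q _ => ?_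
    refine le_trans ?_ (add_le_add (hW p q) (hW q p))
    rcases le_total (g p) (g q) with h | h
    · rw [max_eq_right (by linarith), max_eq_left (by linarith)]
      linarith [sub_sq_comm (g p) (g q)]
    · rw [max_eq_left (by linarith), max_eq_right (by linarith)]
      linarith
  rw [expect_comm (f := fun p q => W q p)] at hle
  linarith

lemma expect_perm_succ {n : ℕ} (F : Equiv.Perm (Fin (n + 1)) → ℝ) :
    𝔼 σ, F σ = 𝔼 p, 𝔼 e, F (Equiv.Perm.decomposeFin.symm (p, e)) := by
  rw [← expect_product']
  exact (Fintype.expect_equiv Equiv.Perm.decomposeFin.symm _ _ fun _ => rfl).symm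

lemma sum_decomposeFin_symm {n : ℕ} (F : Equiv.Perm (Fin (n + 1)) → ℝ) (p : Fin (n + 1)) :
    ∑ e, F (Equiv.Perm.decomposeFin.symm (p, e)) = ∑ σ with σ 0 = p, F σ := by
  rw [sum_filter, ← Equiv.sum_comp Equiv.Perm.decomposeFin.symm, Fintype.sum_prod_type]
  simp [Equiv.Perm.decomposeFin_symm_apply_zero]

lemma expect_decomposeFin_symm_swap {n : ℕ} (F : Equiv.Perm (Fin (n + 1)) → ℝ)
    (p q : Fin (n + 1)) :
    𝔼 e, F (Equiv.Perm.decomposeFin.symm (q, e)) =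
      𝔼 e, F (Equiv.swap p q * Equiv.Perm.decomposeFin.symm (p, e)) := by
  simp only [Fintype.expect_eq_sum_div_card, sum_decomposeFin_symm,
    sum_decomposeFin_symm (fun σ => F (Equiv.swap p q * σ))]
  congr 1
  refine (sum_equiv (Equiv.mulLeft (Equiv.swap p q)) (fun σ => ?_) fun σ _ => rfl).symm
  simp only [mem_filter, mem_univ, true_and, Equiv.coe_mulLeft, Equiv.Perm.mul_apply,
    Equiv.swap_apply_eq_iff, Equiv.swap_apply_right]

lemma card_filter_ne_swap_mul_le {α : Type*} [DecidableEq α] (σ : Equiv.Perm α) (a b : α)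
    (s : Finset α) : #{i ∈ s | σ i ≠ (Equiv.swap (σ a) b * σ) i} ≤
      (if a ∈ s then 1 else 0) + if σ.symm b ∈ s.erase a then 1 else 0 := by
  have hsub : {i ∈ s | σ i ≠ (Equiv.swap (σ a) b * σ) i} ⊆ s ∩ {a} ∪ s.erase a ∩ {σ.symm b} := by
    intro i hi
    rw [mem_filter, Equiv.Perm.mul_apply] at hi
    grind [σ.injective.eq_iff, σ.symm_apply_apply]
  refine (card_le_card hsub).trans ((card_union_le _ _).trans (add_le_add ?_ ?_))
  all_goals split_ifs <;> simp_all

lemma expect_ite_symm_mem {α : Type*} [Fintype α] [DecidableEq α] (σ : Equiv.Perm α)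
    (s : Finset α) :
    (𝔼 q, if σ.symm q ∈ s then (1 : ℝ) else 0) = #s / Fintype.card α := by
  rw [Fintype.expect_eq_sum_div_card, Equiv.sum_comp σ.symm fun i => if i ∈ s then (1 : ℝ) else 0]
  simp

section Variance

variable {n : ℕ} {f : Equiv.Perm (Fin (n + 1)) → ℝ}
  {o : Equiv.Perm (Fin (n + 1)) → Finset (Fin (n + 1))}

lemma expect_sq_decomposeFin_sub_le
    (hf : ∀ σ τ, f σ - f τ ≤ #{i ∈ o σ | σ i ≠ τ i}) :
    𝔼 p, (𝔼 e, f (Equiv.Perm.decomposeFin.symm (p, e))) ^ 2 - (𝔼 σ, f σ) ^ 2 ≤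
      2 * (𝔼 σ, if 0 ∈ o σ then (1 : ℝ) else 0) + 2 / (n + 1) * 𝔼 σ, (#((o σ).erase 0) : ℝ) := by
  set dec : Fin (n + 1) → Equiv.Perm (Fin n) → Equiv.Perm (Fin (n + 1)) :=
    fun p e => Equiv.Perm.decomposeFin.symm (p, e)
  set Z : Fin (n + 1) → Equiv.Perm (Fin (n + 1)) → ℝ := fun q σ =>
    (if 0 ∈ o σ then 1 else 0) + if σ.symm q ∈ (o σ).erase 0 then 1 else 0 with hZ
  have hZ_nonneg : ∀ q σ, 0 ≤ Z q σ := fun q σ => by positivity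
  have hdiff : ∀ p q, 𝔼 e, f (dec p e) - 𝔼 e, f (dec q e) ≤ 𝔼 e, Z q (dec p e) := by
    intro p q
    rw [expect_decomposeFin_symm_swap f p q, ← expect_sub_distrib]
    refine expect_le_expect fun e _ => (hf _ _).trans ?_
    have hp : dec p e 0 = p := Equiv.Perm.decomposeFin_symm_apply_zero p e
    have hcard := card_filter_ne_swap_mul_le (dec p e) 0 q (o (dec p e))
    rw [hp] at hcard
    change _ ≤ (if 0 ∈ o (dec p e) then (1 : ℝ) else 0) + _
    exact_mod_cast hcard
  have hpairs := expect_sq_sub_sq_expect_le (W := fun p q => 𝔼 e, Z q (dec p e) ^ 2) fun p q =>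
    (pow_le_pow_left₀ (le_max_right _ _) (max_le (hdiff p q)
      (expect_nonneg fun e _ => hZ_nonneg q (dec p e))) 2).trans (sq_expect_le_expect_sq _)
  rw [← expect_perm_succ f] at hpairs
  refine hpairs.trans ?_
  have hq : ∀ σ, 𝔼 q, Z q σ ^ 2 ≤
      2 * (if 0 ∈ o σ then 1 else 0) + 2 / (n + 1) * (#((o σ).erase 0) : ℝ) := by
    intro σ
    have hsq : ∀ q, Z q σ ^ 2 ≤ 2 * (if 0 ∈ o σ then 1 else 0) +
        2 * (if σ.symm q ∈ (o σ).erase 0 then 1 else 0) := fun q => by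
      simp only [hZ]
      split_ifs <;> norm_num
    refine (expect_le_expect fun q _ => hsq q).trans_eq ?_
    rw [expect_add_distrib, Fintype.expect_const, ← mul_expect, expect_ite_symm_mem,
      Fintype.card_fin]
    push_cast
    ring
  rw [mul_expect, mul_expect, ← expect_add_distrib, expect_perm_succ]
  refine expect_le_expect fun p _ => ?_
  rw [expect_comm]
  exact expect_le_expect fun e _ => hq (dec p e)

lemma card_filter_ne_decomposeFin_le (s : Finset (Fin (n + 1))) (p : Fin (n + 1))
    (e e' : Equiv.Perm (Fin n)) :
    #{i ∈ s | Equiv.Perm.decomposeFin.symm (p, e) i ≠ Equiv.Perm.decomposeFin.symm (p, e') i} ≤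
      #{i : Fin n | i.succ ∈ s ∧ e i ≠ e' i} := by
  rw [← card_map (Fin.succEmb n)]
  refine card_le_card fun i hi => ?_
  obtain ⟨his, hne⟩ := mem_filter.1 hi
  cases i using Fin.cases with
  | zero => simp at hne
  | succ j =>
    refine mem_map_of_mem _ (mem_filter.2 ⟨mem_univ _, his, fun h => hne ?_⟩)
    simp [h]

end Variance

-- Induct on `n` by conditioning on `σ 0`; the terms `2 / (n + 1)` add up to the harmonic number.
lemma expect_sq_sub_sq_expect_le_of_certificate : ∀ {n : ℕ} {f : Equiv.Perm (Fin n) → ℝ}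
    {o : Equiv.Perm (Fin n) → Finset (Fin n)},
    (∀ σ τ, f σ - f τ ≤ #{i ∈ o σ | σ i ≠ τ i}) →
    𝔼 σ, f σ ^ 2 - (𝔼 σ, f σ) ^ 2 ≤ 2 * (1 + (harmonic n : ℝ)) * 𝔼 σ, (#(o σ) : ℝ)
  | 0, f, o, _ => by
    rw [← expect_sub_expect_sq]
    simp [Subsingleton.elim _ (∅ : Finset (Fin 0))]
  | n + 1, f, o, hf => by
    set dec : Fin (n + 1) → Equiv.Perm (Fin n) → Equiv.Perm (Fin (n + 1)) :=
      fun p e => Equiv.Perm.decomposeFin.symm (p, e)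
    have hcard_erase : ∀ σ, #{i : Fin n | i.succ ∈ o σ} = #((o σ).erase 0) := fun σ => by
      rw [← card_map (Fin.succEmb n)]
      congr 1
      ext i
      cases i using Fin.cases <;> simp
    have hcard : ∀ σ, (#(o σ) : ℝ) = (if 0 ∈ o σ then 1 else 0) + #((o σ).erase 0) := fun σ => by
      split_ifs with h0
      · rw [← card_erase_add_one h0]
        push_cast
        ring
      · rw [erase_eq_of_notMem h0, zero_add]
    have hwithin : 𝔼 σ, f σ ^ 2 - 𝔼 p, (𝔼 e, f (dec p e)) ^ 2 ≤
        2 * (1 + (harmonic n : ℝ)) * 𝔼 σ, (#((o σ).erase 0) : ℝ) := by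
      rw [expect_perm_succ, ← expect_sub_distrib, expect_perm_succ, mul_expect]
      refine expect_le_expect fun p _ => ?_
      simp only [← hcard_erase]
      refine expect_sq_sub_sq_expect_le_of_certificate fun e e' => (hf _ _).trans ?_
      rw [filter_filter]
      exact_mod_cast card_filter_ne_decomposeFin_le _ p e e'
    have hbetween := expect_sq_decomposeFin_sub_le hf
    simp only [hcard, expect_add_distrib, harmonic_succ]
    set A := 𝔼 σ, if 0 ∈ o σ then (1 : ℝ) else 0
    set R := 𝔼 σ, (#((o σ).erase 0) : ℝ)
    have hH : (0 : ℝ) ≤ harmonic n := by exact_mod_cast sum_nonneg fun i _ => by positivity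
    push_cast
    have hgap : 0 ≤ 2 * (harmonic n + ((n : ℝ) + 1)⁻¹) * A :=
      mul_nonneg (by positivity) (expect_nonneg fun σ _ => by positivity)
    linear_combination hwithin + hbetween + hgap

lemma exists_certificate_maxIncUnion {n : ℕ} (k : ℕ) (σ : Equiv.Perm (Fin n)) :
    ∃ s : Finset (Fin n), #s = maxIncUnion k σ ∧
      ∀ τ : Equiv.Perm (Fin n), maxIncUnion k σ ≤ maxIncUnion k τ + #{i ∈ s | σ i ≠ τ i} := by
  obtain ⟨s, ⟨c, hlt, hc⟩, hs⟩ := exists_isUnionOfChains_card_eq_maxIncUnion σ k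
  refine ⟨s, hs, fun τ => ?_⟩
  have hagree : #{i ∈ s | σ i = τ i} ≤ maxIncUnion k τ := by
    refine card_le_maxIncUnion ⟨c, fun i hi => hlt i (mem_filter.1 hi).1, fun i hi j hj => ?_⟩
    obtain ⟨his, hi⟩ := mem_filter.1 hi
    obtain ⟨hjs, hj⟩ := mem_filter.1 hj
    simpa only [hi, hj] using hc i his j hjs
  rw [← hs, ← card_filter_add_card_filter_not (s := s) fun i => σ i = τ i]
  exact Nat.add_le_add_right hagree _

lemma expect_maxIncUnion_sub_sq_le (k n : ℕ) :
    𝔼 σ : Equiv.Perm (Fin n), ((maxIncUnion k σ : ℝ) - meanMaxInc k n) ^ 2 ≤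
      2 * (1 + (harmonic n : ℝ)) * meanMaxInc k n := by
  choose o ho_card ho using exists_certificate_maxIncUnion (n := n) k
  have hvar := expect_sq_sub_sq_expect_le_of_certificate
    (f := fun σ => (maxIncUnion k σ : ℝ)) (o := o) fun σ τ =>
      sub_le_iff_le_add'.2 (mod_cast ho σ τ)
  rw [← expect_sub_expect_sq] at hvar
  simpa only [ho_card, meanMaxInc] using hvar

/-! ### Convergence of the normalized mean -/

lemma filter_mem_apply_mem_mul {α : Type*} [DecidableEq α] (A : Finset α) {σ ρ : Equiv.Perm α}
    (hρ : ∀ x ∉ ({i ∈ A | σ i ∈ A} : Finset α), ρ x = x) :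
    ({i ∈ A | (σ * ρ) i ∈ A} : Finset α) = {i ∈ A | σ i ∈ A} := by
  have hmem : ∀ x, ρ x ∈ ({i ∈ A | σ i ∈ A} : Finset α) ↔ x ∈ ({i ∈ A | σ i ∈ A} : Finset α) :=
    fun x => by
      constructor <;> intro hx <;> by_contra hx'
      · exact hx' (hρ x hx' ▸ hx)
      · exact hx' ((ρ.injective (hρ _ hx')).symm ▸ hx)
  ext x
  have := hmem x
  by_cases hx : x ∈ ({i ∈ A | σ i ∈ A} : Finset α)
  · grind [Equiv.Perm.mul_apply]
  · have := hρ x hx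
    grind [Equiv.Perm.mul_apply]

section PermMoments

variable {α : Type*} [Fintype α] [DecidableEq α]

lemma expect_perm_mul_right (f : Equiv.Perm α → ℝ) (τ : Equiv.Perm α) :
    𝔼 σ, f (σ * τ) = 𝔼 σ, f σ :=
  Fintype.expect_equiv (Equiv.mulRight τ) _ _ fun _ => rfl

lemma expect_perm_apply (G : α → ℝ) (i : α) : 𝔼 σ : Equiv.Perm α, G (σ i) = 𝔼 j, G j := by
  have : Nonempty α := ⟨i⟩
  have hconst : ∀ j, 𝔼 σ : Equiv.Perm α, G (σ j) = 𝔼 σ : Equiv.Perm α, G (σ i) := fun j => by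
    rw [← expect_perm_mul_right (fun σ => G (σ j)) (Equiv.swap i j)]
    simp
  have hsum : ∀ σ : Equiv.Perm α, 𝔼 j, G (σ j) = 𝔼 j, G j := fun σ =>
    Fintype.expect_equiv σ _ _ fun _ => rfl
  rw [← Fintype.expect_const (ι := α) (𝔼 σ : Equiv.Perm α, G (σ i)),
    ← expect_congr rfl fun j _ => hconst j, expect_comm]
  simp only [hsum, Fintype.expect_const]

lemma expect_perm_mul_apply {G : α → ℝ} (hG : ∑ j, G j = 0) {i j : α} (hij : i ≠ j) :
    𝔼 σ : Equiv.Perm α, G (σ i) * G (σ j) = -(𝔼 l, G l ^ 2) / (Fintype.card α - 1) := by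
  have hconst : ∀ l ∈ univ.erase i,
      𝔼 σ : Equiv.Perm α, G (σ i) * G (σ l) = 𝔼 σ : Equiv.Perm α, G (σ i) * G (σ j) := by
    intro l hl
    have hli := (mem_erase.1 hl).1
    rw [← expect_perm_mul_right (fun σ => G (σ i) * G (σ l)) (Equiv.swap l j)]
    simp [Equiv.swap_apply_of_ne_of_ne hli.symm hij]
  have hsum : ∑ l, 𝔼 σ : Equiv.Perm α, G (σ i) * G (σ l) = 0 := by
    rw [← expect_sum_comm]
    refine expect_eq_zero fun σ _ => ?_
    rw [← mul_sum, Equiv.sum_comp σ G, hG, mul_zero]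
  have hcard : 1 < Fintype.card α := Fintype.one_lt_card_iff.2 ⟨i, j, hij⟩
  have hcard' : (Fintype.card α : ℝ) - 1 ≠ 0 := sub_ne_zero.2 (mod_cast hcard.ne')
  rw [← add_sum_erase _ _ (mem_univ i), sum_congr rfl hconst, sum_const,
    card_erase_of_mem (mem_univ i), card_univ, nsmul_eq_mul, Nat.cast_pred (by lia)] at hsum
  simp only [← sq] at hsum
  rw [expect_perm_apply fun l => G l ^ 2] at hsum
  rw [eq_div_iff hcard']
  linarith

lemma expect_sum_perm_apply_sq [Nontrivial α] {G : α → ℝ} (hG : ∑ j, G j = 0) (A : Finset α) :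
    𝔼 σ : Equiv.Perm α, (∑ i ∈ A, G (σ i)) ^ 2 =
      #A * (Fintype.card α - #A) / (Fintype.card α - 1) * 𝔼 j, G j ^ 2 := by
  have hrow : ∀ i ∈ A, ∑ j ∈ A, 𝔼 σ : Equiv.Perm α, G (σ i) * G (σ j) =
      𝔼 j, G j ^ 2 + (#A - 1) * (-(𝔼 l, G l ^ 2) / (Fintype.card α - 1)) := by
    intro i hi
    rw [← add_sum_erase _ _ hi,
      sum_congr rfl fun l hl => expect_perm_mul_apply hG (mem_erase.1 hl).1.symm, sum_const,
      card_erase_of_mem hi, nsmul_eq_mul, Nat.cast_pred (card_pos.2 ⟨i, hi⟩)]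
    simp only [← sq]
    rw [expect_perm_apply fun j => G j ^ 2]
  have hcard : (Fintype.card α : ℝ) - 1 ≠ 0 :=
    sub_ne_zero.2 (mod_cast (Fintype.one_lt_card (α := α)).ne')
  simp only [sq (Finset.sum A _), sum_mul_sum, expect_sum_comm]
  rw [sum_congr rfl hrow, sum_const, nsmul_eq_mul]
  field_simp
  ring

-- The variance of the hypergeometric distribution.
lemma expect_card_filter_apply_mem_sub_sq [Nontrivial α] (A B : Finset α) :
    𝔼 σ : Equiv.Perm α, ((#{i ∈ A | σ i ∈ B} : ℝ) - #A * #B / Fintype.card α) ^ 2 =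
      #A * (Fintype.card α - #A) * (#B * (Fintype.card α - #B)) /
        ((Fintype.card α : ℝ) ^ 2 * (Fintype.card α - 1)) := by
  set N : ℝ := (Fintype.card α : ℝ) with hN
  have hN0 : N ≠ 0 := Nat.cast_ne_zero.2 Fintype.card_ne_zero
  have hN1 : N - 1 ≠ 0 :=
    sub_ne_zero.2 (Nat.cast_ne_one.2 (Fintype.one_lt_card (α := α)).ne')
  set G : α → ℝ := fun j => (if j ∈ B then 1 else 0) - #B / N with hG
  have hG_sum : ∑ j, G j = 0 := by
    simp [hG, sum_sub_distrib, mul_div_cancel₀ _ hN0, ← hN]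
  have hG_sq : ∀ j, G j ^ 2 = (1 - 2 * (#B / N)) * (if j ∈ B then 1 else 0) + (#B / N) ^ 2 :=
    fun j => by
      simp only [hG]
      split_ifs <;> ring
  have hG_var : 𝔼 j, G j ^ 2 = #B * (N - #B) / N ^ 2 := by
    simp only [hG_sq, expect_add_distrib, ← mul_expect, Fintype.expect_const]
    rw [Fintype.expect_eq_sum_div_card, sum_boole, filter_univ_mem, ← hN]
    field_simp
    ring
  have hX : ∀ σ : Equiv.Perm α, (#{i ∈ A | σ i ∈ B} : ℝ) - #A * #B / N = ∑ i ∈ A, G (σ i) :=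
    fun σ => by
      simp only [hG, sum_sub_distrib, sum_boole, sum_const, nsmul_eq_mul]
      ring
  simp only [hX, expect_sum_perm_apply_sq hG_sum, hG_var, ← hN]
  field_simp

lemma card_filter_compl_apply_mem_compl (A : Finset α) (σ : Equiv.Perm α) :
    #{i ∈ Aᶜ | σ i ∈ Aᶜ} + 2 * #A = #{i ∈ A | σ i ∈ A} + Fintype.card α := by
  set P : Finset α := {i | σ i ∈ A}
  have hP : #P = #A := by
    rw [← card_map σ.toEmbedding]
    congr 1
    ext i
    simp [P]
  have hinter : {i ∈ A | σ i ∈ A} = A ∩ P := by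
    ext i
    simp [P]
  have hcompl : {i ∈ Aᶜ | σ i ∈ Aᶜ} = (A ∪ P)ᶜ := by
    ext i
    simp [P]
  have := card_union_add_card_inter A P
  have := card_compl_add_card (A ∪ P)
  rw [hinter, hcompl]
  lia

end PermMoments

/-- The pattern of `σ` on the set of positions `I`: the permutation of `Fin #I` ordered like the
restriction of `σ` to `I`. -/
noncomputable def pattern {N : ℕ} (σ : Equiv.Perm (Fin N)) (I : Finset (Fin N)) :
    Equiv.Perm (Fin #I) :=
  (Tuple.sort fun x => σ (I.orderEmbOfFin rfl x))⁻¹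

/-- The permutation that acts on the positions in `I` as `τ` and fixes all others. -/
noncomputable def permOn {N : ℕ} (I : Finset (Fin N)) (τ : Equiv.Perm (Fin #I)) :
    Equiv.Perm (Fin N) :=
  τ.extendDomain (I.orderIsoOfFin rfl).toEquiv

lemma perm_eq_of_lt_iff_lt {m : ℕ} {π π' : Equiv.Perm (Fin m)}
    (h : ∀ x y, π x < π y ↔ π' x < π' y) : π = π' := by
  have hmono : StrictMono (π' ∘ π.symm) := fun a b hab => (h _ _).1 (by simpa using hab)
  have hid : π' ∘ π.symm = id :=
    (hmono.range_inj strictMono_id).1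
      (by rw [(π'.surjective.comp π.symm.surjective).range_eq, Set.range_id])
  ext x
  simpa using congrArg Fin.val (congrFun hid (π x)).symm

namespace IsUnionOfChains

variable {α β : Type*} {r : α → α → Prop} {r' : β → β → Prop} {k : ℕ} {s t : Finset α}

lemma map (h : IsUnionOfChains r k s) (f : α ↪ β) (hf : ∀ a b, r a b → r' (f a) (f b)) :
    IsUnionOfChains r' k (s.map f) := by
  obtain ⟨c, hlt, hc⟩ := h
  refine ⟨Function.extend f c 0, ?_, ?_⟩
  all_goals simp only [forall_mem_map, f.injective.extend_apply]
  · exact hlt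
  · exact fun a ha b hb hab heq =>
      (hc a ha b hb (ne_of_apply_ne f hab) heq).imp (hf a b) (hf b a)

lemma union [DecidableEq α] (hs : IsUnionOfChains r k s) (ht : IsUnionOfChains r k t)
    (hst : ∀ a ∈ s, ∀ b ∈ t, r a b) : IsUnionOfChains r k (s ∪ t) := by
  obtain ⟨c, hlt, hc⟩ := hs
  obtain ⟨d, hlt', hd⟩ := ht
  refine ⟨fun a => if a ∈ s then c a else d a, ?_, ?_⟩ <;> grind

end IsUnionOfChains

section Pattern

variable {N : ℕ} (σ : Equiv.Perm (Fin N)) (I : Finset (Fin N))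

lemma pattern_lt_pattern_iff (x y : Fin #I) :
    pattern σ I x < pattern σ I y ↔
      σ (I.orderEmbOfFin rfl x) < σ (I.orderEmbOfFin rfl y) := by
  set h : Fin #I → Fin N := fun x => σ (I.orderEmbOfFin rfl x) with hh
  have hinj : Function.Injective h := σ.injective.comp (I.orderEmbOfFin rfl).injective
  have hmono : StrictMono (h ∘ Tuple.sort h) :=
    (Tuple.monotone_sort h).strictMono_of_injective (hinj.comp (Tuple.sort h).injective)
  rw [← hmono.lt_iff_lt]
  simp [pattern, hh]

lemma permOn_orderEmbOfFin (τ : Equiv.Perm (Fin #I)) (x : Fin #I) :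
    permOn I τ (I.orderEmbOfFin rfl x) = I.orderEmbOfFin rfl (τ x) := by
  simpa [permOn] using τ.extendDomain_apply_image (I.orderIsoOfFin rfl).toEquiv x

lemma permOn_of_notMem (τ : Equiv.Perm (Fin #I)) {x : Fin N} (hx : x ∉ I) : permOn I τ x = x :=
  τ.extendDomain_apply_not_subtype _ hx

lemma pattern_mul_permOn (τ : Equiv.Perm (Fin #I)) :
    pattern (σ * permOn I τ) I = pattern σ I * τ := by
  refine perm_eq_of_lt_iff_lt fun x y => ?_
  simp only [pattern_lt_pattern_iff, Equiv.Perm.mul_apply, permOn_orderEmbOfFin]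

variable {I} in
lemma sum_pattern_fiber {S : Finset (Equiv.Perm (Fin N))}
    (hS : ∀ σ ∈ S, ∀ ρ : Equiv.Perm (Fin N), (∀ x ∉ I, ρ x = x) → σ * ρ ∈ S)
    (g : Equiv.Perm (Fin #I) → ℝ) :
    ∑ σ ∈ S, g (pattern σ I) = ∑ _σ ∈ S, 𝔼 τ, g τ := by
  have hinv : ∀ τ, ∑ σ ∈ S, g (pattern σ I * τ) = ∑ σ ∈ S, g (pattern σ I) := by
    intro τ
    have hfix : ∀ x ∉ I, (permOn I τ)⁻¹ x = x := fun x hx => by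
      rw [Equiv.Perm.inv_eq_iff_eq, permOn_of_notMem I τ hx]
    refine sum_bij' (fun σ _ => σ * permOn I τ) (fun σ _ => σ * (permOn I τ)⁻¹)
      (fun σ hσ => hS σ hσ _ fun x => permOn_of_notMem I τ) (fun σ hσ => hS σ hσ _ hfix)
      (fun σ _ => mul_inv_cancel_right _ _) (fun σ _ => inv_mul_cancel_right _ _)
      fun σ _ => by rw [pattern_mul_permOn]
  calc ∑ σ ∈ S, g (pattern σ I)
      = 𝔼 τ, ∑ σ ∈ S, g (pattern σ I * τ) := by
        simp only [hinv, Fintype.expect_const]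
    _ = ∑ σ ∈ S, 𝔼 τ, g (pattern σ I * τ) := expect_sum_comm _ _ _
    _ = ∑ _σ ∈ S, 𝔼 τ, g τ := sum_congr rfl fun σ _ =>
        Fintype.expect_equiv (Equiv.mulLeft (pattern σ I)) _ _ fun _ => rfl

lemma expect_pattern {I : Equiv.Perm (Fin N) → Finset (Fin N)}
    (hI : ∀ σ ρ : Equiv.Perm (Fin N), (∀ x ∉ I σ, ρ x = x) → I (σ * ρ) = I σ)
    (g : ∀ m, Equiv.Perm (Fin m) → ℝ) :
    𝔼 σ, g _ (pattern σ (I σ)) = 𝔼 σ, 𝔼 τ : Equiv.Perm (Fin #(I σ)), g _ τ := by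
  simp only [Fintype.expect_eq_sum_div_card (ι := Equiv.Perm (Fin N))]
  congr 1
  rw [← sum_fiberwise (g := I), ← sum_fiberwise (g := I)]
  refine sum_congr rfl fun I₀ _ => ?_
  calc ∑ σ with I σ = I₀, g _ (pattern σ (I σ))
      = ∑ σ with I σ = I₀, g _ (pattern σ I₀) :=
        sum_congr rfl fun σ hσ => by rw [(mem_filter.1 hσ).2]
    _ = ∑ σ with I σ = I₀, 𝔼 τ : Equiv.Perm (Fin #I₀), g _ τ := by
        refine sum_pattern_fiber (fun σ hσ ρ hρ => ?_) _
        obtain rfl := (mem_filter.1 hσ).2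
        exact mem_filter.2 ⟨mem_univ _, hI σ ρ hρ⟩
    _ = ∑ σ with I σ = I₀, 𝔼 τ : Equiv.Perm (Fin #(I σ)), g _ τ :=
        sum_congr rfl fun σ hσ => by rw [(mem_filter.1 hσ).2]

lemma isUnionOfChains_map_pattern {k : ℕ} {s : Finset (Fin #I)}
    (hs : IsUnionOfChains (fun x y => x < y ∧ pattern σ I x < pattern σ I y) k s) :
    IsUnionOfChains (fun i j => i < j ∧ σ i < σ j) k (s.map (I.orderEmbOfFin rfl).toEmbedding) :=
  hs.map _ fun x y hxy => ⟨(I.orderEmbOfFin rfl).strictMono hxy.1,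
    (pattern_lt_pattern_iff σ I x y).1 hxy.2⟩

variable {σ I} in
lemma maxIncUnion_pattern_add_le (k : ℕ) {J : Finset (Fin N)}
    (h : ∀ i ∈ I, ∀ j ∈ J, i < j ∧ σ i < σ j) :
    maxIncUnion k (pattern σ I) + maxIncUnion k (pattern σ J) ≤ maxIncUnion k σ := by
  obtain ⟨s, hs, hs_card⟩ := exists_isUnionOfChains_card_eq_maxIncUnion (pattern σ I) k
  obtain ⟨t, ht, ht_card⟩ := exists_isUnionOfChains_card_eq_maxIncUnion (pattern σ J) k
  have hst : ∀ i ∈ s.map (I.orderEmbOfFin rfl).toEmbedding,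
      ∀ j ∈ t.map (J.orderEmbOfFin rfl).toEmbedding, i < j ∧ σ i < σ j := by
    simp only [forall_mem_map]
    exact fun x _ y _ => h _ (orderEmbOfFin_mem I rfl x) _ (orderEmbOfFin_mem J rfl y)
  have hdisj := disjoint_left.2 fun i hi hj => (hst i hi i hj).1.false
  have hle := card_le_maxIncUnion
    ((isUnionOfChains_map_pattern σ I hs).union (isUnionOfChains_map_pattern σ J ht) hst)
  rwa [card_union_of_disjoint hdisj, card_map, card_map, hs_card, ht_card] at hle

lemma expect_meanMaxInc_block_add_le (k : ℕ) {A : Finset (Fin N)}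
    (hA : IsLowerSet (A : Set (Fin N))) :
    𝔼 σ : Equiv.Perm (Fin N), meanMaxInc k #{i ∈ A | σ i ∈ A} +
      𝔼 σ : Equiv.Perm (Fin N), meanMaxInc k #{i ∈ Aᶜ | σ i ∈ Aᶜ} ≤ meanMaxInc k N := by
  have hblock : ∀ A : Finset (Fin N), 𝔼 σ : Equiv.Perm (Fin N), meanMaxInc k #{i ∈ A | σ i ∈ A} =
      𝔼 σ, (maxIncUnion k (pattern σ {i ∈ A | σ i ∈ A}) : ℝ) := fun A =>
    (expect_pattern (I := fun σ => {i ∈ A | σ i ∈ A}) (fun _ _ => filter_mem_apply_mem_mul A)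
      fun _ τ => (maxIncUnion k τ : ℝ)).symm
  rw [hblock, hblock, ← expect_add_distrib]
  refine expect_le_expect fun σ _ => ?_
  have hlt : ∀ i ∈ A, ∀ j ∈ Aᶜ, i < j := fun i hi j hj =>
    lt_of_not_ge fun hji => mem_compl.1 hj (hA hji hi)
  exact_mod_cast maxIncUnion_pattern_add_le k fun i hi j hj =>
    ⟨hlt i (mem_filter.1 hi).1 j (mem_filter.1 hj).1,
      hlt _ (mem_filter.1 hi).2 _ (mem_filter.1 hj).2⟩

end Pattern

section MeanMaxIncLimit

variable (k : ℕ)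

lemma meanMaxInc_zero : meanMaxInc k 0 = 0 := by
  have hzero : ∀ σ : Equiv.Perm (Fin 0), maxIncUnion k σ = 0 := fun σ => by
    obtain ⟨s, _, hs⟩ := exists_isUnionOfChains_card_eq_maxIncUnion σ k
    rw [← hs, eq_empty_of_isEmpty s, card_empty]
  simp [meanMaxInc, hzero]

lemma meanMaxInc_monotone : Monotone (meanMaxInc k) := monotone_nat_of_le_succ fun n =>
  sub_nonneg.1 (meanMaxInc_succ_sub k n ▸ sum_nonneg fun i _ => meanRowIncrement_nonneg n i)

lemma meanMaxInc_nonneg (n : ℕ) : 0 ≤ meanMaxInc k n :=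
  meanMaxInc_zero k ▸ meanMaxInc_monotone k n.zero_le

lemma meanRowIncrement_le (n i : ℕ) :
    meanRowIncrement n i ≤ 2 * (√((n + 1 : ℕ) : ℝ) - √n) := by
  have hsq := Real.sq_sqrt (show (0 : ℝ) ≤ n + 1 by positivity)
  have hsq' := Real.sq_sqrt (show (0 : ℝ) ≤ n by positivity)
  push_cast
  refine le_of_mul_le_mul_left ((sqrt_mul_meanRowIncrement_le_one n i).trans ?_)
    (show 0 < √(n + 1 : ℝ) by positivity)
  nlinarith [sq_nonneg (√(n + 1 : ℝ) - √n)]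

lemma meanMaxInc_sub_le {m n : ℕ} (hmn : m ≤ n) :
    meanMaxInc k n - meanMaxInc k m ≤ 2 * k * (√n - √m) := by
  induction n, hmn using Nat.le_induction with
  | base => simp
  | succ n _ ih =>
    have hstep : meanMaxInc k (n + 1) - meanMaxInc k n ≤ k * (2 * (√((n + 1 : ℕ) : ℝ) - √n)) := by
      rw [meanMaxInc_succ_sub]
      exact (sum_le_card_nsmul _ _ _ fun i _ => meanRowIncrement_le n i).trans_eq (by simp)
    linarith

lemma meanMaxInc_le (n : ℕ) : meanMaxInc k n ≤ 2 * k * √n := by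
  simpa [meanMaxInc_zero] using meanMaxInc_sub_le k n.zero_le

lemma meanMaxInc_sq_sub_le (m : ℕ) {s : ℕ} (hs : 0 < s) :
    meanMaxInc k (s ^ 2) - 2 * k / s * |(m : ℝ) - s ^ 2| ≤ meanMaxInc k m := by
  rcases le_total (s ^ 2) m with h | h
  · exact (sub_le_self _ (by positivity)).trans (meanMaxInc_monotone k h)
  have hle : (m : ℝ) ≤ s ^ 2 := mod_cast h
  have hsqrt : (s : ℝ) - √m ≤ |(m : ℝ) - s ^ 2| / s := by
    have hm := Real.sq_sqrt (show (0 : ℝ) ≤ m by positivity)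
    have hms : √(m : ℝ) ≤ s := Real.sqrt_le_iff.2 ⟨s.cast_nonneg, hle⟩
    rw [abs_sub_comm, abs_of_nonneg (sub_nonneg.2 hle), le_div_iff₀ (by positivity)]
    nlinarith [Real.sqrt_nonneg (m : ℝ)]
  have hsub := meanMaxInc_sub_le k h
  rw [Nat.cast_pow, Real.sqrt_sq s.cast_nonneg] at hsub
  have hmul := mul_le_mul_of_nonneg_left hsqrt (show (0 : ℝ) ≤ 2 * k by positivity)
  rw [← mul_div_right_comm, mul_div_assoc, sub_le_comm]
  exact hsub.trans hmul

/-- The initial segment of length `s (s + t)` of `Fin ((s + t) ^ 2)`. The number of its points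
that a uniform permutation maps into it has mean `s ^ 2`, and for its complement the mean is
`t ^ 2`. -/
def initialBlock (s t : ℕ) : Finset (Fin ((s + t) ^ 2)) := {i | i.val < s * (s + t)}

lemma card_initialBlock (s t : ℕ) : #(initialBlock s t) = s * (s + t) := by
  rw [initialBlock, Fin.card_filter_val_lt]
  exact min_eq_right (by nlinarith)

lemma expect_abs_card_initialBlock_sub_le {s t : ℕ} (hs : 0 < s) (ht : 0 < t) :
    𝔼 σ : Equiv.Perm (Fin ((s + t) ^ 2)),
      |(#{i ∈ initialBlock s t | σ i ∈ initialBlock s t} : ℝ) - s ^ 2| ≤ min (s : ℝ) t := by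
  have hs' : (1 : ℝ) ≤ s := mod_cast hs
  have ht' : (1 : ℝ) ≤ t := mod_cast ht
  have hN : (0 : ℝ) < (s + t) ^ 2 - 1 := by nlinarith
  have : Nontrivial (Fin ((s + t) ^ 2)) := Fin.nontrivial_iff_two_le.2 (by nlinarith)
  have hvar := expect_card_filter_apply_mem_sub_sq (initialBlock s t) (initialBlock s t)
  have hmean : ((s * (s + t) : ℝ)) * (s * (s + t)) / (s + t) ^ 2 = s ^ 2 := by field_simp
  have hval : (s * (s + t) : ℝ) * ((s + t) ^ 2 - s * (s + t)) *
      (s * (s + t) * ((s + t) ^ 2 - s * (s + t))) / (((s + t) ^ 2) ^ 2 * ((s + t) ^ 2 - 1)) =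
      s ^ 2 * t ^ 2 / ((s + t) ^ 2 - 1) := by
    rw [div_eq_div_iff (by positivity) hN.ne']
    ring
  simp only [card_initialBlock, Fintype.card_fin, Nat.cast_mul, Nat.cast_add, Nat.cast_pow,
    hmean, hval] at hvar
  set D := 𝔼 σ : Equiv.Perm (Fin ((s + t) ^ 2)),
    |(#{i ∈ initialBlock s t | σ i ∈ initialBlock s t} : ℝ) - s ^ 2|
  have hsq : D ^ 2 ≤ s ^ 2 * t ^ 2 / ((s + t) ^ 2 - 1) :=
    hvar ▸ (sq_expect_le_expect_sq _).trans_eq (by simp only [sq_abs])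
  refine le_min (abs_le_of_sq_le_sq' (hsq.trans ?_) (by positivity)).2
    (abs_le_of_sq_le_sq' (hsq.trans ?_) (by positivity)).2
  · rw [div_le_iff₀ hN]
    exact mul_le_mul_of_nonneg_left (by nlinarith) (by positivity)
  · rw [div_le_iff₀ hN, mul_comm]
    exact mul_le_mul_of_nonneg_left (by nlinarith) (by positivity)

lemma card_compl_initialBlock_sub (s t : ℕ) (σ : Equiv.Perm (Fin ((s + t) ^ 2))) :
    (#{i ∈ (initialBlock s t)ᶜ | σ i ∈ (initialBlock s t)ᶜ} : ℝ) - t ^ 2 =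
      #{i ∈ initialBlock s t | σ i ∈ initialBlock s t} - s ^ 2 := by
  have hcard := congrArg (Nat.cast (R := ℝ))
    (card_filter_compl_apply_mem_compl (initialBlock s t) σ)
  rw [card_initialBlock, Fintype.card_fin] at hcard
  push_cast at hcard
  linarith

lemma meanMaxInc_sq_sub_le_expect {N s : ℕ} (hs : 0 < s) {X : Equiv.Perm (Fin N) → ℕ}
    (hX : 𝔼 σ, |(X σ : ℝ) - s ^ 2| ≤ s) :
    meanMaxInc k (s ^ 2) - 2 * k ≤ 𝔼 σ, meanMaxInc k (X σ) := by
  calc meanMaxInc k (s ^ 2) - 2 * k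
      ≤ meanMaxInc k (s ^ 2) - 2 * k / s * 𝔼 σ, |(X σ : ℝ) - s ^ 2| := by
        refine sub_le_sub_left ?_ _
        rw [div_mul_eq_mul_div, div_le_iff₀ (by positivity)]
        gcongr
    _ = 𝔼 σ, (meanMaxInc k (s ^ 2) - 2 * k / s * |(X σ : ℝ) - s ^ 2|) := by
        rw [expect_sub_distrib, mul_expect, Fintype.expect_const]
    _ ≤ 𝔼 σ, meanMaxInc k (X σ) := expect_le_expect fun σ _ => meanMaxInc_sq_sub_le k _ hs

lemma meanMaxInc_sq_add_le {s t : ℕ} (hs : 0 < s) (ht : 0 < t) :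
    meanMaxInc k (s ^ 2) + meanMaxInc k (t ^ 2) - 4 * k ≤ meanMaxInc k ((s + t) ^ 2) := by
  have hdev := expect_abs_card_initialBlock_sub_le hs ht
  have hs_le := meanMaxInc_sq_sub_le_expect k hs (hdev.trans (min_le_left _ _))
  simp only [← card_compl_initialBlock_sub] at hdev
  have ht_le := meanMaxInc_sq_sub_le_expect k ht (hdev.trans (min_le_right _ _))
  have hlower : IsLowerSet (initialBlock s t : Set (Fin ((s + t) ^ 2))) := fun i j hji hi => by
    rw [mem_coe, initialBlock, mem_filter_univ] at hi ⊢
    exact (Fin.le_def.1 hji).trans_lt hi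
  have hblock := expect_meanMaxInc_block_add_le k hlower
  linarith

lemma subadditive_sub_meanMaxInc_sq : Subadditive fun s : ℕ => 4 * k - meanMaxInc k (s ^ 2) := by
  intro s t
  rcases s.eq_zero_or_pos with rfl | hs
  · simp [meanMaxInc_zero]
  rcases t.eq_zero_or_pos with rfl | ht
  · simp [meanMaxInc_zero]
  linarith [meanMaxInc_sq_add_le k hs ht]

lemma exists_tendsto_meanMaxInc_sq_div :
    ∃ c, Tendsto (fun s : ℕ => meanMaxInc k (s ^ 2) / s) atTop (nhds c) := by
  have hbdd : BddBelow (Set.range fun s : ℕ => (4 * k - meanMaxInc k (s ^ 2)) / (s : ℝ)) := by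
    refine ⟨-(2 * k), Set.forall_mem_range.2 fun s => ?_⟩
    rcases s.eq_zero_or_pos with rfl | hs
    · simp
    have hle := meanMaxInc_le k (s ^ 2)
    rw [Nat.cast_pow, Real.sqrt_sq s.cast_nonneg] at hle
    rw [le_div_iff₀ (by positivity)]
    have : (0 : ℝ) ≤ k := k.cast_nonneg
    linarith
  refine ⟨_, ((tendsto_const_div_atTop_nhds_zero_nat (4 * k : ℝ)).sub
    ((subadditive_sub_meanMaxInc_sq k).tendsto_lim hbdd)).congr fun s => ?_⟩
  ring

end MeanMaxIncLimit

lemma tendsto_sqrt_natCast_atTop : Tendsto (fun n : ℕ => √(n : ℝ)) atTop atTop :=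
  Real.tendsto_sqrt_atTop.comp tendsto_natCast_atTop_atTop

lemma tendsto_div_sqrt_of_tendsto_sq_div {f : ℕ → ℝ} {C c : ℝ} (hf : Monotone f)
    (hC : ∀ m n, m ≤ n → f n - f m ≤ C * (√n - √m))
    (hc : Tendsto (fun s : ℕ => f (s ^ 2) / s) atTop (nhds c)) :
    Tendsto (fun n : ℕ => f n / √n) atTop (nhds c) := by
  have hsqrt := tendsto_sqrt_natCast_atTop
  have hratio : Tendsto (fun n : ℕ => (n.sqrt : ℝ) / √n) atTop (nhds 1) :=
    (tendsto_nat_floor_div_atTop.comp hsqrt).congr fun n => by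
      rw [Function.comp_apply, Real.nat_floor_real_sqrt_eq_nat_sqrt]
  have hnatSqrt : Tendsto Nat.sqrt atTop atTop :=
    (tendsto_nat_floor_atTop.comp hsqrt).congr fun n => Real.nat_floor_real_sqrt_eq_nat_sqrt
  have hlower : Tendsto (fun n : ℕ => f (n.sqrt ^ 2) / √n) atTop (nhds c) := by
    refine (mul_one c ▸ (hc.comp hnatSqrt).mul hratio).congr' ?_
    filter_upwards [eventually_gt_atTop 0] with n hn
    have hne : (n.sqrt : ℝ) ≠ 0 := mod_cast (Nat.sqrt_pos.2 hn).ne'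
    exact div_mul_div_cancel₀ hne
  have hupper : Tendsto (fun n : ℕ => f (n.sqrt ^ 2) / √n + C * (1 - n.sqrt / √n)) atTop
      (nhds c) := by
    simpa using hlower.add ((hratio.const_sub 1).const_mul C)
  refine tendsto_of_tendsto_of_tendsto_of_le_of_le' hlower hupper
    (Eventually.of_forall fun n => ?_) ?_
  · gcongr
    exact hf n.sqrt_le'
  · filter_upwards [eventually_gt_atTop 0] with n hn
    have hpos : 0 < √(n : ℝ) := by positivity
    have hle := hC _ _ n.sqrt_le'
    rw [Nat.cast_pow, Real.sqrt_sq n.sqrt.cast_nonneg] at hle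
    rw [div_add' _ _ _ hpos.ne', mul_assoc, sub_mul, div_mul_cancel₀ _ hpos.ne', one_mul]
    gcongr
    linarith

lemma exists_tendsto_meanMaxInc_div_sqrt (k : ℕ) :
    ∃ c, Tendsto (fun n : ℕ => meanMaxInc k n / √n) atTop (nhds c) :=
  (exists_tendsto_meanMaxInc_sq_div k).imp fun _ hc =>
    tendsto_div_sqrt_of_tendsto_sq_div (meanMaxInc_monotone k)
      (fun _ _ => meanMaxInc_sub_le k) hc

section UniformPermutation

variable {n : ℕ} {p q : Equiv.Perm (Fin n) → Prop}

lemma Pn_mono (h : ∀ σ, p σ → q σ) : Pn p ≤ Pn q := by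
  unfold Pn
  gcongr with σ
  exact h σ

lemma Pn_nonneg (p : Equiv.Perm (Fin n) → Prop) : 0 ≤ Pn p := by
  unfold Pn
  positivity

lemma Pn_le_expect_div {f : Equiv.Perm (Fin n) → ℝ} {c : ℝ} (hc : 0 < c) (hf : ∀ σ, 0 ≤ f σ)
    (h : ∀ σ, p σ → c ≤ f σ) : Pn p ≤ (𝔼 σ, f σ) / c := by
  rw [Pn_eq_expect, le_div_iff₀ hc, expect_mul]
  refine expect_le_expect fun σ _ => ?_
  split_ifs with hσ
  · simpa using h σ hσ
  · simpa using hf σ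

lemma Pn_exists_le_sum {ι : Type*} (s : Finset ι) (p : ι → Equiv.Perm (Fin n) → Prop) :
    Pn (fun σ => ∃ i ∈ s, p i σ) ≤ ∑ i ∈ s, Pn (p i) := by
  simp only [Pn, ← sum_div]
  gcongr
  rw [← Nat.cast_sum]
  refine mod_cast (card_le_card fun σ hσ => ?_).trans card_biUnion_le
  simpa using hσ

end UniformPermutation

lemma sub_le_mul_of_antitone_of_sub_eq {f g : ℕ → ℝ} (hg : Antitone g)
    (hfg : ∀ n, f (n + 1) - f n = g n) (n M : ℕ) : f (n + M) - f n ≤ M * g n := by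
  induction M with
  | zero => simp
  | succ M ih =>
    have := hg (Nat.le_add_right n M)
    rw [← add_assoc]
    push_cast
    linarith [hfg (n + M)]

-- The lower half of the monotone density theorem, from the growth of `f` over `[n, (1 + η) n]`.
lemma eventually_lt_sqrt_mul_of_tendsto_div_sqrt {f g : ℕ → ℝ} {L a : ℝ} (hg : Antitone g)
    (hfg : ∀ n, f (n + 1) - f n = g n)
    (hf : Tendsto (fun n : ℕ => f n / √n) atTop (nhds (2 * L))) (ha : a < L) :
    ∀ᶠ n : ℕ in atTop, a < √n * g n := by
  obtain ⟨η, hη, haη⟩ : ∃ η : ℝ, 0 < η ∧ a < 2 * L / (√(1 + η) + 1) := by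
    have hcont : ContinuousAt (fun η : ℝ => 2 * L / (√(1 + η) + 1)) 0 := by
      fun_prop (disch := positivity)
    have hlt : a < 2 * L / (√(1 + 0) + 1) := by simpa [← two_mul, one_add_one_eq_two] using ha
    exact ((eventually_mem_nhdsWithin (a := (0 : ℝ)) (s := Set.Ioi 0)).and
      ((hcont.eventually (lt_mem_nhds hlt)).filter_mono nhdsWithin_le_nhds)).exists
  set M : ℕ → ℕ := fun n => ⌊η * n⌋₊
  have hM : Tendsto (fun n : ℕ => (M n : ℝ) / n) atTop (nhds η) :=
    (tendsto_nat_floor_mul_div_atTop hη.le).comp tendsto_natCast_atTop_atTop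
  have hshift : Tendsto (fun n : ℕ => f (n + M n) / √n) atTop (nhds (2 * L * √(1 + η))) := by
    refine ((hf.comp (tendsto_atTop_mono (fun n => n.le_add_right (M n)) tendsto_id)).mul
      (hM.const_add 1).sqrt).congr' ?_
    filter_upwards [eventually_gt_atTop 0] with n hn
    have hne : √(((n + M n : ℕ)) : ℝ) ≠ 0 := by positivity
    rw [one_add_div (by positivity), Real.sqrt_div (by positivity), ← Nat.cast_add]
    exact div_mul_div_cancel₀ hne
  have hlim := (hshift.sub hf).div hM hη.ne'
  have hval : (2 * L * √(1 + η) - 2 * L) / η = 2 * L / (√(1 + η) + 1) := by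
    have hsq := Real.sq_sqrt (show 0 ≤ 1 + η by positivity)
    rw [div_eq_div_iff hη.ne' (by positivity)]
    linear_combination 2 * L * hsq
  filter_upwards [hlim.eventually (lt_mem_nhds (hval ▸ haη)), hM.eventually (lt_mem_nhds hη),
    eventually_gt_atTop 0] with n hn hMn hpos
  refine hn.trans_le ?_
  rw [Pi.div_apply, div_le_iff₀ hMn, ← sub_div, div_le_iff₀ (by positivity)]
  refine (sub_le_mul_of_antitone_of_sub_eq hg hfg n (M n)).trans_eq ?_
  have hsq := Real.mul_self_sqrt (show (0 : ℝ) ≤ n by positivity)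
  have hne : (n : ℝ) ≠ 0 := by positivity
  field_simp
  linear_combination (-(M n : ℝ) * g n) * hsq

section Dichotomy

variable {k : ℕ}

lemma tendsto_sqrt_mul_meanRowIncrement
    (hc : Tendsto (fun n : ℕ => meanMaxInc k n / √n) atTop (nhds (2 * k))) {i : ℕ} (hi : i < k) :
    Tendsto (fun n : ℕ => √(n + 1) * meanRowIncrement n i) atTop (nhds 1) := by
  refine tendsto_order.2 ⟨fun a ha => ?_, fun a ha =>
    Eventually.of_forall fun n => (sqrt_mul_meanRowIncrement_le_one n i).trans_lt ha⟩
  filter_upwards [eventually_lt_sqrt_mul_of_tendsto_div_sqrt (a := k - 1 + a)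
    (sum_meanRowIncrement_antitone k) (meanMaxInc_succ_sub k) hc (by linarith)] with n hn
  have hle : √(n : ℝ) * ∑ i ∈ range k, meanRowIncrement n i ≤
      √(n + 1) * ∑ i ∈ range k, meanRowIncrement n i := by
    gcongr
    · exact sum_nonneg fun i _ => meanRowIncrement_nonneg n i
    · linarith
  have hrest : √(n + 1 : ℝ) * ∑ j ∈ (range k).erase i, meanRowIncrement n j ≤ k - 1 := by
    rw [mul_sum]
    refine (sum_le_card_nsmul _ _ 1 fun j _ => sqrt_mul_meanRowIncrement_le_one n j).trans_eq ?_
    rw [card_erase_of_mem (mem_range.2 hi), card_range, nsmul_one, Nat.cast_pred (by lia)]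
  have hsplit : √(n + 1 : ℝ) * ∑ j ∈ range k, meanRowIncrement n j = √(n + 1) *
      meanRowIncrement n i + √(n + 1) * ∑ j ∈ (range k).erase i, meanRowIncrement n j := by
    rw [← mul_add, add_sum_erase _ _ (mem_range.2 hi)]
  linarith

lemma tendsto_meanRowIncrement_add_sqrt
    (hc : Tendsto (fun n : ℕ => meanMaxInc k n / √n) atTop (nhds (2 * k))) {i : ℕ} (hi : i < k) :
    Tendsto (fun n : ℕ => meanRowIncrement n i +
      2 * √(2 * (1 - √(n + 1) * meanRowIncrement n i))) atTop (nhds 0) := by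
  have hone := tendsto_sqrt_mul_meanRowIncrement hc hi
  have hzero : Tendsto (fun n : ℕ => meanRowIncrement n i) atTop (nhds 0) := by
    have hsqrt : Tendsto (fun n : ℕ => √(n + 1 : ℝ)) atTop atTop := by
      simpa [Function.comp_def] using tendsto_sqrt_natCast_atTop.comp (tendsto_add_atTop_nat 1)
    exact (hone.div_atTop hsqrt).congr fun n => mul_div_cancel_left₀ _ (by positivity)
  simpa using hzero.add (((hone.const_sub 1).const_mul 2).sqrt.const_mul 2)

lemma Pn_le_maxIncUnion_le {n : ℕ} {t : ℝ} (ht : meanMaxInc k n < t) :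
    Pn (fun σ : Equiv.Perm (Fin n) => t ≤ (maxIncUnion k σ : ℝ)) ≤
      2 * (1 + (harmonic n : ℝ)) * meanMaxInc k n / (t - meanMaxInc k n) ^ 2 := by
  have hpos : 0 < t - meanMaxInc k n := sub_pos.2 ht
  refine (Pn_le_expect_div (pow_pos hpos 2) (fun σ => sq_nonneg _) fun σ hσ => ?_).trans
    (div_le_div_of_nonneg_right (expect_maxIncUnion_sub_sq_le k n) (by positivity))
  gcongr

lemma tendsto_two_add_log_div_sqrt :
    Tendsto (fun n : ℕ => (2 + Real.log n) / √n) atTop (nhds 0) := by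
  have hlog : Tendsto (fun n : ℕ => Real.log n / √n) atTop (nhds 0) := by
    simpa [Function.comp_def, Real.sqrt_eq_rpow] using
      (isLittleO_log_rpow_atTop (r := 1 / 2) (by norm_num)).tendsto_div_nhds_zero.comp
        (tendsto_natCast_atTop_atTop (R := ℝ))
  simpa [add_div] using (tendsto_sqrt_natCast_atTop.const_div_atTop 2).add hlog

lemma tendsto_Pn_mul_sqrt_le_maxIncUnion {b c : ℝ}
    (hc : Tendsto (fun n : ℕ => meanMaxInc k n / √n) atTop (nhds c)) (hcb : c < b) :
    Tendsto (fun n : ℕ => Pn fun σ : Equiv.Perm (Fin n) => b * √n ≤ (maxIncUnion k σ : ℝ))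
      atTop (nhds 0) := by
  obtain ⟨d, hcd, hdb⟩ := exists_between hcb
  have hbd : 0 < b - d := sub_pos.2 hdb
  have hbound : Tendsto (fun n : ℕ => 4 * k / (b - d) ^ 2 * ((2 + Real.log n) / √n)) atTop
      (nhds 0) := by simpa using tendsto_two_add_log_div_sqrt.const_mul (4 * k / (b - d) ^ 2)
  refine tendsto_of_tendsto_of_tendsto_of_le_of_le' tendsto_const_nhds hbound
    (Eventually.of_forall fun n => Pn_nonneg _) ?_
  filter_upwards [hc.eventually (gt_mem_nhds hcd), eventually_gt_atTop 0] with n hmean hn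
  have hs : 0 < √(n : ℝ) := by positivity
  rw [div_lt_iff₀ hs] at hmean
  have hgap : (b - d) * √n ≤ b * √n - meanMaxInc k n := by linarith
  refine (Pn_le_maxIncUnion_le (by nlinarith)).trans ?_
  have hmean_nonneg := meanMaxInc_nonneg k n
  calc 2 * (1 + (harmonic n : ℝ)) * meanMaxInc k n / (b * √n - meanMaxInc k n) ^ 2
      ≤ 2 * (1 + (1 + Real.log n)) * (2 * k * √n) / ((b - d) * √n) ^ 2 := by
        gcongr
        · exact harmonic_le_one_add_log n
        · exact meanMaxInc_le k n
    _ = 4 * k / (b - d) ^ 2 * ((2 + Real.log n) / √n) := by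
        field_simp
        ring

lemma tendsto_Pn_sub_rpow_le_maxIncUnion {c : ℝ}
    (hc : Tendsto (fun n : ℕ => meanMaxInc k n / √n) atTop (nhds c)) (hck : c < 2 * k) (C : ℝ) :
    Tendsto (fun n : ℕ => Pn fun σ : Equiv.Perm (Fin n) =>
      2 * k * √n - C * (n : ℝ) ^ ((1 : ℝ) / 6) ≤ (maxIncUnion k σ : ℝ)) atTop (nhds 0) := by
  obtain ⟨b, hcb, hbk⟩ := exists_between hck
  have hsmall : Tendsto (fun n : ℕ => C * (n : ℝ) ^ (-((1 : ℝ) / 3))) atTop (nhds 0) := by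
    simpa using ((tendsto_rpow_neg_atTop (y := 1 / 3) (by norm_num)).comp
      (tendsto_natCast_atTop_atTop (R := ℝ))).const_mul C
  refine tendsto_of_tendsto_of_tendsto_of_le_of_le' tendsto_const_nhds
    (tendsto_Pn_mul_sqrt_le_maxIncUnion hc hcb) (Eventually.of_forall fun n => Pn_nonneg _) ?_
  filter_upwards [hsmall.eventually (gt_mem_nhds (sub_pos.2 hbk)), eventually_gt_atTop 0]
    with n hlt hn
  refine Pn_mono fun σ hσ => le_trans ?_ hσ
  have hsplit : (n : ℝ) ^ ((1 : ℝ) / 6) = (n : ℝ) ^ (-((1 : ℝ) / 3)) * √n := by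
    rw [Real.sqrt_eq_rpow, ← Real.rpow_add (by positivity)]
    norm_num
  rw [hsplit]
  nlinarith [Real.sqrt_nonneg (n : ℝ)]

end Dichotomy

/-! ### Switching -/

section Switching

variable {α : Type*} [DecidableEq α] {A B : Finset α} {σ : Equiv.Perm α} {a b d : α}

/-- The points of the permutation matrix of `σ` that lie in `A × B`. -/
def pointsIn (A B : Finset α) (σ : Equiv.Perm α) : Finset (α × α) :=
  {p ∈ A ×ˢ B | σ p.1 = p.2}

lemma mem_pointsIn : (a, b) ∈ pointsIn A B σ ↔ a ∈ A ∧ b ∈ B ∧ σ a = b := by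
  simp [pointsIn, and_assoc]

lemma card_pointsIn (A B : Finset α) (σ : Equiv.Perm α) :
    #(pointsIn A B σ) = #{i ∈ A | σ i ∈ B} := by
  refine card_bij' (fun p _ => p.1) (fun i _ => (i, σ i)) ?_ ?_ ?_ fun i _ => rfl
  · rintro ⟨i, j⟩ h
    obtain ⟨hi, hj, rfl⟩ := mem_pointsIn.1 h
    exact mem_filter.2 ⟨hi, hj⟩
  · exact fun i hi => mem_pointsIn.2 ⟨(mem_filter.1 hi).1, (mem_filter.1 hi).2, rfl⟩
  · rintro ⟨i, j⟩ h
    exact Prod.ext rfl (mem_pointsIn.1 h).2.2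

lemma pointsIn_mul_swap (hab : (a, b) ∈ pointsIn A B σ) (hdA : d ∉ A) (hdB : σ d ∉ B) :
    pointsIn A B (σ * Equiv.swap a d) = (pointsIn A B σ).erase (a, b) := by
  ext ⟨i, j⟩
  rw [mem_pointsIn] at hab
  rw [mem_erase, mem_pointsIn, mem_pointsIn, Equiv.Perm.mul_apply, Equiv.swap_apply_def]
  grind

lemma pointsIn_mul_swap_symm (ha : a ∈ A) (hb : b ∈ B) (haB : σ a ∉ B) (hbA : σ.symm b ∉ A) :
    pointsIn A B (σ * Equiv.swap a (σ.symm b)) = insert (a, b) (pointsIn A B σ) := by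
  ext ⟨i, j⟩
  rw [mem_insert, mem_pointsIn, mem_pointsIn, Equiv.Perm.mul_apply, Equiv.swap_apply_def]
  have := σ.apply_symm_apply b
  grind

lemma apply_notMem_of_pointsIn_eq_erase {ρ : Equiv.Perm α} (hab : (a, b) ∈ pointsIn A B σ)
    (hρ : pointsIn A B ρ = (pointsIn A B σ).erase (a, b)) : ρ a ∉ B ∧ ρ.symm b ∉ A := by
  have hmem : ∀ i j, (i ∈ A ∧ j ∈ B ∧ ρ i = j) ↔
      (i, j) ≠ (a, b) ∧ i ∈ A ∧ j ∈ B ∧ σ i = j := fun i j => by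
    rw [← mem_pointsIn, hρ, mem_erase, mem_pointsIn]
  obtain ⟨ha, hb, hσ⟩ := mem_pointsIn.1 hab
  have hρb := ρ.apply_symm_apply b
  have hinj : ∀ i, σ i = b → i = a := fun i hi => σ.injective (hi.trans hσ.symm)
  exact ⟨fun h => by grind, fun h => by grind⟩

/-- The permutations at most one transposition away from `F`. -/
def SwapNhd (F : Equiv.Perm α → Prop) (σ : Equiv.Perm α) : Prop :=
  F σ ∨ ∃ i j, F (σ * Equiv.swap i j)

/-- The permutations at most `R` transpositions away both from `F` and from its complement. -/
def SwapBoundary (R : ℕ) (F : Equiv.Perm α → Prop) (σ : Equiv.Perm α) : Prop :=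
  SwapNhd^[R] F σ ∧ SwapNhd^[R] (fun σ => ¬ F σ) σ

lemma swapNhd_iterate_mono {F : Equiv.Perm α → Prop} {r R : ℕ} (hr : r ≤ R)
    (h : SwapNhd^[r] F σ) : SwapNhd^[R] F σ := by
  induction R, hr using Nat.le_induction with
  | base => exact h
  | succ R _ ih =>
    rw [Function.iterate_succ_apply']
    exact Or.inl ih

lemma swapNhd_iterate_iff_exists {F : Equiv.Perm α → Prop} {R : ℕ} :
    SwapNhd^[R] F σ ↔ ∃ ρ, F ρ ∧ SwapNhd^[R] (fun τ => τ = ρ) σ := by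
  induction R generalizing σ with
  | zero => simp
  | succ R ih =>
    simp only [Function.iterate_succ_apply', SwapNhd]
    constructor
    · rintro (h | ⟨i, j, h⟩) <;> obtain ⟨ρ, hF, hρ⟩ := ih.1 h
      · exact ⟨ρ, hF, Or.inl hρ⟩
      · exact ⟨ρ, hF, Or.inr ⟨i, j, hρ⟩⟩
    · rintro ⟨ρ, hF, hρ | ⟨i, j, hρ⟩⟩
      · exact Or.inl (ih.2 ⟨ρ, hF, hρ⟩)
      · exact Or.inr ⟨i, j, ih.2 ⟨ρ, hF, hρ⟩⟩

lemma abs_sub_le_of_swapNhd_iterate {f : Equiv.Perm α → ℝ} {C : ℝ} (hC : 0 ≤ C)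
    (hf : ∀ σ i j, |f (σ * Equiv.swap i j) - f σ| ≤ C) {ρ : Equiv.Perm α} {R : ℕ}
    (h : SwapNhd^[R] (fun τ => τ = ρ) σ) : |f ρ - f σ| ≤ R * C := by
  induction R generalizing σ with
  | zero => simp_all
  | succ R ih =>
    rw [Function.iterate_succ_apply'] at h
    push_cast
    rcases h with h | ⟨i, j, h⟩
    · linarith [ih h]
    · have htri := abs_sub_le (f ρ) (f (σ * Equiv.swap i j)) (f σ)
      linarith [ih h, hf σ i j]

lemma SwapBoundary.exists_mem {ι : Type*} {s : Finset ι} {F : ι → Equiv.Perm α → Prop} {R : ℕ}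
    (h : SwapBoundary R (fun σ => ∀ a ∈ s, F a σ) σ) : ∃ a ∈ s, SwapBoundary R (F a) σ := by
  obtain ⟨ρ, hFρ, hρ⟩ := swapNhd_iterate_iff_exists.1 h.1
  obtain ⟨τ, hFτ, hτ⟩ := swapNhd_iterate_iff_exists.1 h.2
  push Not at hFτ
  obtain ⟨a, ha, hFa⟩ := hFτ
  exact ⟨a, ha, swapNhd_iterate_iff_exists.2 ⟨ρ, hFρ a ha, hρ⟩,
    swapNhd_iterate_iff_exists.2 ⟨τ, hFa, hτ⟩⟩

lemma SwapBoundary.or_of_and {F G : Equiv.Perm α → Prop} {R : ℕ}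
    (h : SwapBoundary R (fun σ => F σ ∧ G σ) σ) : SwapBoundary R F σ ∨ SwapBoundary R G σ := by
  obtain ⟨ρ, hρ', hρ⟩ := swapNhd_iterate_iff_exists.1 h.1
  obtain ⟨τ, hτ', hτ⟩ := swapNhd_iterate_iff_exists.1 h.2
  exact (not_and_or.1 hτ').imp
    (fun hF => ⟨swapNhd_iterate_iff_exists.2 ⟨ρ, hρ'.1, hρ⟩,
      swapNhd_iterate_iff_exists.2 ⟨τ, hF, hτ⟩⟩)
    fun hG => ⟨swapNhd_iterate_iff_exists.2 ⟨ρ, hρ'.2, hρ⟩,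
      swapNhd_iterate_iff_exists.2 ⟨τ, hG, hτ⟩⟩

lemma SwapBoundary.abs_sub_le {f : Equiv.Perm α → ℝ} {C : ℝ} (hC : 0 ≤ C)
    (hf : ∀ σ i j, |f (σ * Equiv.swap i j) - f σ| ≤ C) {t : ℝ} {R : ℕ}
    (h : SwapBoundary R (fun σ => t < f σ) σ) : |f σ - t| ≤ R * C := by
  obtain ⟨ρ, hFρ, hρ⟩ := swapNhd_iterate_iff_exists.1 h.1
  obtain ⟨τ, hFτ, hτ⟩ := swapNhd_iterate_iff_exists.1 h.2
  have hup := abs_le.1 (abs_sub_le_of_swapNhd_iterate hC hf hρ)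
  have hlo := abs_le.1 (abs_sub_le_of_swapNhd_iterate hC hf hτ)
  exact abs_le.2 ⟨by linarith, by linarith [not_lt.1 hFτ]⟩

variable [Fintype α] {x : Finset (α × α)}

variable (A B x) in
/-- The permutations whose set of points in `A × B` is `x`. -/
def permsWithPoints : Finset (Equiv.Perm α) := {σ | pointsIn A B σ = x}

lemma mem_permsWithPoints : σ ∈ permsWithPoints A B x ↔ pointsIn A B σ = x := by
  simp [permsWithPoints]

lemma card_filter_notMem_add (A B : Finset α) (σ : Equiv.Perm α) :
    #{d | d ∉ A ∧ σ d ∉ B} + #A + #B = Fintype.card α + #(pointsIn A B σ) := by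
  have hB : #{i | σ i ∈ B} = #B := by
    refine card_equiv σ fun i => ?_
    simp
  have hcompl : ({d | d ∉ A ∧ σ d ∉ B} : Finset α) = (A ∪ ({i | σ i ∈ B} : Finset α))ᶜ := by
    ext
    simp
  have hinter : A ∩ ({i | σ i ∈ B} : Finset α) = {i ∈ A | σ i ∈ B} := by
    ext
    simp
  have hunion := card_union_add_card_inter A ({i | σ i ∈ B} : Finset α)
  have hle := card_le_univ (A ∪ ({i | σ i ∈ B} : Finset α))
  rw [hinter, hB] at hunion
  rw [hcompl, card_compl, card_pointsIn]
  lia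

lemma sum_permsWithPoints_erase {M : Type*} [AddCommMonoid M] (hσ : pointsIn A B σ = x)
    (hab : (a, b) ∈ x) (f : Equiv.Perm α → M) :
    ∑ ρ ∈ permsWithPoints A B (x.erase (a, b)), f ρ =
      ∑ τ ∈ permsWithPoints A B x, ∑ d with d ∉ A ∧ τ d ∉ B, f (τ * Equiv.swap a d) := by
  subst hσ
  rw [sum_sigma']
  symm
  refine sum_bij' (fun p _ => p.1 * Equiv.swap a p.2)
    (fun ρ _ => ⟨ρ * Equiv.swap a (ρ.symm b), ρ.symm b⟩) ?_ ?_ ?_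
    (fun ρ _ => by simp [mul_assoc]) fun _ _ => rfl
  · rintro ⟨τ, d⟩ hτ
    simp only [mem_sigma, mem_permsWithPoints, mem_filter_univ] at hτ ⊢
    rw [← hτ.1] at hab ⊢
    exact pointsIn_mul_swap hab hτ.2.1 hτ.2.2
  · intro ρ hρ
    rw [mem_permsWithPoints] at hρ
    obtain ⟨haB, hbA⟩ := apply_notMem_of_pointsIn_eq_erase hab hρ
    obtain ⟨ha, hb, _⟩ := mem_pointsIn.1 hab
    simp only [mem_sigma, mem_permsWithPoints, mem_filter_univ]
    refine ⟨?_, hbA, by simpa using haB⟩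
    rw [pointsIn_mul_swap_symm ha hb haB hbA, hρ, insert_erase hab]
  · rintro ⟨τ, d⟩ hτ
    simp only [mem_sigma, mem_permsWithPoints] at hτ
    rw [← hτ.1, mem_pointsIn] at hab
    have hd : (τ * Equiv.swap a d).symm b = d := by
      rw [Equiv.symm_apply_eq, Equiv.Perm.mul_apply, Equiv.swap_apply_right, hab.2.2]
    simp [hd, mul_assoc]

lemma card_permsWithPoints_erase (hσ : pointsIn A B σ = x) (hab : (a, b) ∈ x) :
    #(permsWithPoints A B (x.erase (a, b))) =
      #(permsWithPoints A B x) * (Fintype.card α + #x - #A - #B) := by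
  rw [card_eq_sum_ones, sum_permsWithPoints_erase hσ hab, ← smul_eq_mul]
  refine sum_const_nat fun τ hτ => ?_
  have := card_filter_notMem_add A B τ
  rw [mem_permsWithPoints.1 hτ] at this
  rw [← card_eq_sum_ones]
  lia

lemma card_filter_permsWithPoints_erase_le (hσ : pointsIn A B σ = x) (hab : (a, b) ∈ x)
    (F : Equiv.Perm α → Prop) :
    #{ρ ∈ permsWithPoints A B (x.erase (a, b)) | F ρ} ≤
      #{τ ∈ permsWithPoints A B x | SwapNhd F τ} * (Fintype.card α + #x - #A - #B) := by
  rw [card_filter, sum_permsWithPoints_erase hσ hab, card_filter, sum_mul]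
  refine sum_le_sum fun τ hτ => ?_
  have hcard := card_filter_notMem_add A B τ
  rw [mem_permsWithPoints.1 hτ] at hcard
  rw [← card_filter]
  split_ifs with hF
  · exact (card_filter_le _ _).trans (by lia)
  · rw [zero_mul, Nat.le_zero, card_eq_zero, filter_eq_empty_iff]
    exact fun d _ hd => hF (Or.inr ⟨a, d, hd⟩)

-- Remove the points of `x` one at a time, each by a transposition.
lemma card_filter_permsWithPoints_empty_mul_le (hAB : #A + #B < Fintype.card α)
    (F : Equiv.Perm α → Prop) (hx : (permsWithPoints A B x).Nonempty) :
    0 < #(permsWithPoints A B ∅) ∧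
    #{ρ ∈ permsWithPoints A B ∅ | F ρ} * #(permsWithPoints A B x) ≤
      #{τ ∈ permsWithPoints A B x | SwapNhd^[#x] F τ} * #(permsWithPoints A B ∅) := by
  induction hr : #x generalizing x with
  | zero =>
    obtain rfl := card_eq_zero.1 hr
    exact ⟨card_pos.2 hx, le_rfl⟩
  | succ r ih =>
    obtain ⟨⟨a, b⟩, hab⟩ : x.Nonempty := card_pos.1 (by lia)
    obtain ⟨σ, hσ⟩ := hx
    have hσ' := mem_permsWithPoints.1 hσ
    have hcard := card_permsWithPoints_erase hσ' hab
    have hstep := card_filter_permsWithPoints_erase_le hσ' hab (SwapNhd^[r] F)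
    set c := Fintype.card α + #x - #A - #B
    have hc : 0 < c := by lia
    have hne : 0 < #(permsWithPoints A B (x.erase (a, b))) :=
      hcard ▸ Nat.mul_pos (card_pos.2 ⟨σ, hσ⟩) hc
    obtain ⟨hpos, hle⟩ := ih (card_pos.1 hne) (by rw [card_erase_of_mem hab]; lia)
    refine ⟨hpos, Nat.le_of_mul_le_mul_right ?_ hc⟩
    rw [mul_assoc, ← hcard, Function.iterate_succ_apply', mul_right_comm]
    exact hle.trans (Nat.mul_le_mul_right _ hstep)

lemma card_filter_permsWithPoints_empty_mul_le_add (hAB : #A + #B < Fintype.card α)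
    (F : Equiv.Perm α → Prop) {R : ℕ} (hxR : #x ≤ R) (hx : (permsWithPoints A B x).Nonempty) :
    #{ρ ∈ permsWithPoints A B ∅ | F ρ} * #(permsWithPoints A B x) ≤
      (#{τ ∈ permsWithPoints A B x | F τ} + #{τ ∈ permsWithPoints A B x | SwapBoundary R F τ}) *
        #(permsWithPoints A B ∅) := by
  refine (card_filter_permsWithPoints_empty_mul_le hAB F hx).2.trans (Nat.mul_le_mul_right _ ?_)
  refine (card_le_card fun τ hτ => ?_).trans (card_union_le _ _)
  simp only [mem_union, mem_filter] at hτ ⊢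
  by_cases hF : F τ
  · exact Or.inl ⟨hτ.1, hF⟩
  · exact Or.inr ⟨hτ.1, swapNhd_iterate_mono hxR hτ.2, swapNhd_iterate_mono R.zero_le hF⟩

lemma abs_card_filter_permsWithPoints_sub_le (hAB : #A + #B < Fintype.card α)
    (F : Equiv.Perm α → Prop) {R : ℕ} (hxR : #x ≤ R) :
    |(#{τ ∈ permsWithPoints A B x | F τ} : ℝ) - #{ρ ∈ permsWithPoints A B ∅ | F ρ} /
      #(permsWithPoints A B ∅) * #(permsWithPoints A B x)| ≤
        #{τ ∈ permsWithPoints A B x | SwapBoundary R F τ} := by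
  rcases (permsWithPoints A B x).eq_empty_or_nonempty with hx | hx
  · simp [hx]
  have hpos : (0 : ℝ) < #(permsWithPoints A B ∅) :=
    mod_cast (card_filter_permsWithPoints_empty_mul_le hAB F hx).1
  have hF : (_ : ℝ) ≤ _ :=
    Nat.cast_le.2 (card_filter_permsWithPoints_empty_mul_le_add hAB F hxR hx)
  have hsymm : SwapBoundary R (fun σ => ¬ F σ) = SwapBoundary R F := by
    funext τ
    simp only [SwapBoundary, not_not, and_comm]
  have hnF : #{ρ ∈ permsWithPoints A B ∅ | ¬ F ρ} * #(permsWithPoints A B x) ≤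
      (#{τ ∈ permsWithPoints A B x | ¬ F τ} + #{τ ∈ permsWithPoints A B x | SwapBoundary R F τ}) *
        #(permsWithPoints A B ∅) := by
    rw [← hsymm]
    convert card_filter_permsWithPoints_empty_mul_le_add hAB (fun σ => ¬ F σ) hxR hx
  have hadd : ∀ y, (#{τ ∈ permsWithPoints A B y | F τ} : ℝ) +
      #{τ ∈ permsWithPoints A B y | ¬ F τ} = #(permsWithPoints A B y) := fun y =>
    mod_cast card_filter_add_card_filter_not (s := permsWithPoints A B y) F
  have hnF' : (_ : ℝ) ≤ _ := Nat.cast_le.2 hnF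
  push_cast at hF hnF'
  rw [eq_sub_iff_add_eq'.2 (hadd x), eq_sub_iff_add_eq'.2 (hadd ∅)] at hnF'
  rw [abs_le, div_mul_eq_mul_div, sub_div' hpos.ne', le_div_iff₀ hpos, div_le_iff₀ hpos]
  constructor <;> linarith

end Switching

section AsymptoticIndependence

variable {n : ℕ} {A B : Finset (Fin n)} {E : Equiv.Perm (Fin n) → Prop}

lemma abs_sum_fiber_sub_le (hAB : #A + #B < n) (F : Equiv.Perm (Fin n) → Prop) (R : ℕ)
    (x : Finset (Fin n × Fin n)) :
    |∑ σ with pointsIn A B σ = x, ((if F σ then (1 : ℝ) else 0) -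
      #{ρ ∈ permsWithPoints A B ∅ | F ρ} / #(permsWithPoints A B ∅))| ≤
    ∑ σ with pointsIn A B σ = x,
      if SwapBoundary R F σ ∨ R < #(pointsIn A B σ) then (1 : ℝ) else 0 := by
  have hAB' : #A + #B < Fintype.card (Fin n) := by simpa using hAB
  set q : ℝ := #{ρ ∈ permsWithPoints A B ∅ | F ρ} / #(permsWithPoints A B ∅)
  have hq0 : 0 ≤ q := by positivity
  have hq1 : q ≤ 1 := div_le_one_of_le₀ (mod_cast card_filter_le _ _) (by positivity)
  rcases le_or_gt #x R with hx | hx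
  · rw [sum_sub_distrib, sum_boole, sum_const, nsmul_eq_mul, mul_comm, sum_boole]
    refine (abs_card_filter_permsWithPoints_sub_le hAB' F hx).trans ?_
    refine Nat.cast_le.2 (card_le_card fun σ hσ => ?_)
    rw [mem_filter, mem_permsWithPoints] at hσ
    simp only [mem_filter, mem_univ, true_and]
    exact ⟨hσ.1, Or.inl hσ.2⟩
  · refine (abs_sum_le_sum_abs _ _).trans (sum_le_sum fun σ hσ => ?_)
    rw [if_pos (Or.inr ((mem_filter.1 hσ).2 ▸ hx)), abs_le]
    constructor <;> split_ifs <;> linarith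

lemma abs_Pn_and_sub_mul_le (hAB : #A + #B < n) (F : Equiv.Perm (Fin n) → Prop) (R : ℕ)
    (hE : ∀ σ τ, pointsIn A B σ = pointsIn A B τ → E σ → E τ) :
    |Pn (fun σ => E σ ∧ F σ) - Pn E *
      (#{ρ ∈ permsWithPoints A B ∅ | F ρ} / #(permsWithPoints A B ∅))| ≤
    Pn fun σ => SwapBoundary R F σ ∨ R < #(pointsIn A B σ) := by
  set q : ℝ := #{ρ ∈ permsWithPoints A B ∅ | F ρ} / #(permsWithPoints A B ∅)
  have hdiff : Pn (fun σ => E σ ∧ F σ) - Pn E * q =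
      𝔼 σ, if E σ then (if F σ then (1 : ℝ) else 0) - q else 0 := by
    rw [Pn_eq_expect, Pn_eq_expect, expect_mul, ← expect_sub_distrib]
    refine expect_congr rfl fun σ _ => ?_
    by_cases hσ : E σ <;> simp [hσ]
  rw [hdiff, Pn_eq_expect, Fintype.expect_eq_sum_div_card, Fintype.expect_eq_sum_div_card,
    abs_div, Nat.abs_cast]
  gcongr
  rw [← sum_fiberwise univ (pointsIn A B), ← sum_fiberwise univ (pointsIn A B)]
  refine (abs_sum_le_sum_abs _ _).trans (sum_le_sum fun x _ => ?_)
  by_cases hx : ∃ τ, pointsIn A B τ = x ∧ E τ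
  · obtain ⟨τ, hτx, hτ⟩ := hx
    rw [sum_congr rfl fun σ hσ =>
      if_pos (hE τ σ (hτx.trans (mem_filter.1 hσ).2.symm) hτ)]
    exact (abs_sum_fiber_sub_le hAB F R x).trans_eq (by congr!)
  · rw [sum_eq_zero fun σ hσ => if_neg fun h => hx ⟨σ, (mem_filter.1 hσ).2, h⟩, abs_zero]
    exact sum_nonneg fun σ _ => by positivity

lemma Pn_le_one (p : Equiv.Perm (Fin n) → Prop) : Pn p ≤ 1 :=
  div_le_one_of_le₀ (mod_cast card_filter_le _ _) (by positivity)

lemma Pn_true : Pn (fun _ : Equiv.Perm (Fin n) => True) = 1 := by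
  simp [Pn_eq_expect]

lemma Pn_or_le (p q : Equiv.Perm (Fin n) → Prop) : Pn (fun σ => p σ ∨ q σ) ≤ Pn p + Pn q := by
  rw [Pn_eq_expect, Pn_eq_expect, Pn_eq_expect, ← expect_add_distrib]
  refine expect_le_expect fun σ _ => ?_
  by_cases hp : p σ <;> by_cases hq : q σ <;> simp [hp, hq]

lemma abs_Pn_and_sub_le (hAB : #A + #B < n) (F : Equiv.Perm (Fin n) → Prop) (R : ℕ)
    (hE : ∀ σ τ, pointsIn A B σ = pointsIn A B τ → E σ → E τ) :
    |Pn (fun σ => E σ ∧ F σ) - Pn E * Pn F| ≤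
      2 * (Pn (SwapBoundary R F) + Pn fun σ : Equiv.Perm (Fin n) => R < #(pointsIn A B σ)) := by
  have hEF := abs_Pn_and_sub_mul_le hAB F R hE
  have hF := abs_Pn_and_sub_mul_le (E := fun _ => True) hAB F R fun _ _ _ _ => trivial
  simp only [true_and, Pn_true, one_mul] at hF
  set q : ℝ := #{ρ ∈ permsWithPoints A B ∅ | F ρ} / #(permsWithPoints A B ∅)
  have hmul : |Pn E * (Pn F - q)| ≤ |Pn F - q| := by
    rw [abs_mul, abs_of_nonneg (Pn_nonneg E)]
    exact mul_le_of_le_one_left (abs_nonneg _) (Pn_le_one E)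
  calc |Pn (fun σ => E σ ∧ F σ) - Pn E * Pn F|
      = |(Pn (fun σ => E σ ∧ F σ) - Pn E * q) - Pn E * (Pn F - q)| := by ring_nf
    _ ≤ 2 * Pn fun σ => SwapBoundary R F σ ∨ R < #(pointsIn A B σ) :=
        (abs_sub _ _).trans (by linarith)
    _ ≤ _ := by
        gcongr
        exact Pn_or_le _ _

end AsymptoticIndependence

/-! ### Rows and columns near a threshold -/

section RowColumn

variable {n : ℕ}

lemma maxDecUnion_eq_maxIncUnion (j : ℕ) (σ : Equiv.Perm (Fin n)) :
    maxDecUnion j σ = maxIncUnion j (Fin.revPerm * σ) := by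
  have hanti : ∀ s : Set (Fin n), StrictAntiOn (fun i => σ i) s ↔
      StrictMonoOn (fun i => (Fin.revPerm * σ : Equiv.Perm (Fin n)) i) s := fun s => by
    simp [StrictAntiOn, StrictMonoOn]
  simp only [maxDecUnion, maxIncUnion, hanti]

lemma colLen_eq_rowLen (j : ℕ) (σ : Equiv.Perm (Fin n)) :
    colLen j σ = rowLen j (Fin.revPerm * σ) := by
  rw [colLen, rowLen, maxDecUnion_eq_maxIncUnion, maxDecUnion_eq_maxIncUnion]

lemma maxIncUnion_le_mul_swap_add (k : ℕ) (σ : Equiv.Perm (Fin n)) (i j : Fin n) :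
    maxIncUnion k σ ≤ maxIncUnion k (σ * Equiv.swap i j) + 2 := by
  obtain ⟨s, -, hs⟩ := exists_certificate_maxIncUnion k σ
  refine (hs _).trans (Nat.add_le_add_left ((card_le_card fun x hx => ?_).trans
    (card_le_two (a := i) (b := j))) _)
  by_contra hne
  rw [mem_insert, mem_singleton, not_or] at hne
  refine (mem_filter.1 hx).2 ?_
  rw [Equiv.Perm.mul_apply, Equiv.swap_apply_of_ne_of_ne hne.1 hne.2]

lemma abs_maxIncUnion_mul_swap_sub_le (k : ℕ) (σ : Equiv.Perm (Fin n)) (i j : Fin n) :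
    |(maxIncUnion k (σ * Equiv.swap i j) : ℝ) - maxIncUnion k σ| ≤ 2 := by
  have hle := maxIncUnion_le_mul_swap_add k σ i j
  have hge := maxIncUnion_le_mul_swap_add k (σ * Equiv.swap i j) i j
  rw [mul_assoc, Equiv.swap_mul_self, mul_one] at hge
  rw [abs_sub_le_iff, sub_le_iff_le_add', sub_le_iff_le_add']
  exact ⟨mod_cast by lia, mod_cast by lia⟩

lemma cast_rowLen_succ (k : ℕ) (σ : Equiv.Perm (Fin n)) :
    (rowLen (k + 1) σ : ℝ) = maxIncUnion (k + 1) σ - maxIncUnion k σ := by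
  rw [rowLen_succ, maxIncUnion_eq_sum_permShape, maxIncUnion_eq_sum_permShape, sum_range_succ]
  push_cast
  ring

lemma abs_rowLen_mul_swap_sub_le (k : ℕ) (σ : Equiv.Perm (Fin n)) (i j : Fin n) :
    |(rowLen (k + 1) (σ * Equiv.swap i j) : ℝ) - rowLen (k + 1) σ| ≤ 4 := by
  have hk := abs_le.1 (abs_maxIncUnion_mul_swap_sub_le k σ i j)
  have hk' := abs_le.1 (abs_maxIncUnion_mul_swap_sub_le (k + 1) σ i j)
  rw [cast_rowLen_succ, cast_rowLen_succ, abs_le]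
  constructor <;> linarith

lemma abs_colLen_mul_swap_sub_le (k : ℕ) (σ : Equiv.Perm (Fin n)) (i j : Fin n) :
    |(colLen (k + 1) (σ * Equiv.swap i j) : ℝ) - colLen (k + 1) σ| ≤ 4 := by
  rw [colLen_eq_rowLen, colLen_eq_rowLen, ← mul_assoc]
  exact abs_rowLen_mul_swap_sub_le k _ i j

lemma Pn_mul_left (p : Equiv.Perm (Fin n) → Prop) (τ : Equiv.Perm (Fin n)) :
    Pn (fun σ => p (τ * σ)) = Pn p := by
  rw [Pn_eq_expect, Pn_eq_expect]
  exact Fintype.expect_equiv (Equiv.mulLeft τ) _ _ fun _ => rfl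

lemma Pn_abs_rowLen_sub_le (n i : ℕ) (t : ℝ) (L : ℕ) :
    Pn (fun σ : Equiv.Perm (Fin n) => |(rowLen (i + 1) σ : ℝ) - t| ≤ L) ≤
      (2 * L + 1) *
        (meanRowIncrement n i + 2 * √(2 * (1 - √(n + 1) * meanRowIncrement n i))) := by
  set m := ⌈t - L⌉₊
  have hIcc : ∀ σ : Equiv.Perm (Fin n), |(rowLen (i + 1) σ : ℝ) - t| ≤ L →
      ∃ s ∈ Icc m (m + 2 * L), rowLen (i + 1) σ = s := fun σ hσ => by
    rw [abs_le] at hσ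
    have hm : t - L ≤ m := Nat.le_ceil _
    refine ⟨_, mem_Icc.2 ⟨Nat.ceil_le.2 (by linarith), ?_⟩, rfl⟩
    suffices (rowLen (i + 1) σ : ℝ) ≤ m + 2 * L by exact_mod_cast this
    linarith
  refine (Pn_mono hIcc).trans ((Pn_exists_le_sum _ _).trans
    ((sum_le_card_nsmul _ _ _ fun s _ => Pn_rowLen_eq_le n i s).trans_eq ?_))
  rw [Nat.card_Icc, nsmul_eq_mul, show m + 2 * L + 1 - m = 2 * L + 1 by lia]
  push_cast
  rfl

end RowColumn

section NearThreshold

variable {i k : ℕ}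

lemma tendsto_Pn_abs_rowLen_sub_le
    (hc : Tendsto (fun n : ℕ => meanMaxInc k n / √n) atTop (nhds (2 * k))) (hi : i < k)
    (t : ℕ → ℝ) (L : ℕ) :
    Tendsto (fun n : ℕ => Pn fun σ : Equiv.Perm (Fin n) => |(rowLen (i + 1) σ : ℝ) - t n| ≤ L)
      atTop (nhds 0) := by
  refine squeeze_zero (fun n => Pn_nonneg _) (fun n => Pn_abs_rowLen_sub_le n i (t n) L) ?_
  simpa using (tendsto_meanRowIncrement_add_sqrt hc hi).const_mul (2 * L + 1 : ℝ)

lemma tendsto_Pn_abs_colLen_sub_le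
    (hc : Tendsto (fun n : ℕ => meanMaxInc k n / √n) atTop (nhds (2 * k))) (hi : i < k)
    (t : ℕ → ℝ) (L : ℕ) :
    Tendsto (fun n : ℕ => Pn fun σ : Equiv.Perm (Fin n) => |(colLen (i + 1) σ : ℝ) - t n| ≤ L)
      atTop (nhds 0) := by
  refine (tendsto_Pn_abs_rowLen_sub_le hc hi t L).congr fun n => ?_
  simp only [colLen_eq_rowLen]
  exact (Pn_mul_left (fun σ => |(rowLen (i + 1) σ : ℝ) - t n| ≤ L) Fin.revPerm).symm

lemma tendsto_Pn_swapBoundary_rowLen_colLen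
    (hc : Tendsto (fun n : ℕ => meanMaxInc k n / √n) atTop (nhds (2 * k)))
    (tI tD : ℕ → ℕ → ℝ) (R : ℕ) :
    Tendsto (fun n : ℕ => Pn (SwapBoundary R fun σ : Equiv.Perm (Fin n) =>
      ∀ j ∈ Icc 1 k, tI n j < rowLen j σ ∧ tD n j < colLen j σ)) atTop (nhds 0) := by
  have hsum : Tendsto (fun n : ℕ => ∑ j ∈ Icc 1 k,
      (Pn (fun σ : Equiv.Perm (Fin n) => |(rowLen j σ : ℝ) - tI n j| ≤ (R * 4 : ℕ)) +
        Pn fun σ : Equiv.Perm (Fin n) => |(colLen j σ : ℝ) - tD n j| ≤ (R * 4 : ℕ)))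
      atTop (nhds (∑ j ∈ Icc 1 k, (0 + 0))) := by
    refine tendsto_finsetSum _ fun j hj => ?_
    obtain ⟨i, rfl⟩ := Nat.exists_eq_add_of_le' (mem_Icc.1 hj).1
    have hi : i < k := (mem_Icc.1 hj).2
    exact (tendsto_Pn_abs_rowLen_sub_le hc hi (fun n => tI n (i + 1)) _).add
      (tendsto_Pn_abs_colLen_sub_le hc hi (fun n => tD n (i + 1)) _)
  simp only [add_zero, sum_const_zero] at hsum
  refine squeeze_zero (fun n => Pn_nonneg _) (fun n => ?_) hsum
  refine le_trans (Pn_mono fun σ hσ => ?_)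
    ((Pn_exists_le_sum _ _).trans (sum_le_sum fun j _ => Pn_or_le _ _))
  obtain ⟨j, hj, hσ⟩ := hσ.exists_mem
  obtain ⟨i, rfl⟩ := Nat.exists_eq_add_of_le' (mem_Icc.1 hj).1
  refine ⟨i + 1, hj, hσ.or_of_and.imp (fun h => ?_) fun h => ?_⟩
  · exact_mod_cast h.abs_sub_le (by norm_num) (abs_rowLen_mul_swap_sub_le i)
  · exact_mod_cast h.abs_sub_le (by norm_num) (abs_colLen_mul_swap_sub_le i)

end NearThreshold

section Normalized

variable {n k : ℕ}

lemma lt_rowLenTilde_iff (hn : 0 < n) {j : ℕ} {σ : Equiv.Perm (Fin n)} {m : ℝ} :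
    m < rowLenTilde j σ ↔ m * (n : ℝ) ^ ((1 : ℝ) / 6) + 2 * √n < rowLen j σ := by
  rw [rowLenTilde, lt_div_iff₀ (by positivity), lt_sub_iff_add_lt]

lemma lt_colLenTilde_iff (hn : 0 < n) {j : ℕ} {σ : Equiv.Perm (Fin n)} {m : ℝ} :
    m < colLenTilde j σ ↔ m * (n : ℝ) ^ ((1 : ℝ) / 6) + 2 * √n < colLen j σ := by
  rw [colLenTilde, lt_div_iff₀ (by positivity), lt_sub_iff_add_lt]

lemma tendsto_Pn_swapBoundary_lt_tilde
    (hc : Tendsto (fun n : ℕ => meanMaxInc k n / √n) atTop (nhds (2 * k))) (mI mD : ℕ → ℝ)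
    (R : ℕ) :
    Tendsto (fun n : ℕ => Pn (SwapBoundary R fun σ : Equiv.Perm (Fin n) =>
      ∀ j ∈ Icc 1 k, mI j < rowLenTilde j σ ∧ mD j < colLenTilde j σ)) atTop (nhds 0) := by
  refine (tendsto_Pn_swapBoundary_rowLen_colLen hc
    (fun n j => mI j * (n : ℝ) ^ ((1 : ℝ) / 6) + 2 * √n)
    (fun n j => mD j * (n : ℝ) ^ ((1 : ℝ) / 6) + 2 * √n) R).congr' ?_
  filter_upwards [eventually_gt_atTop 0] with n hn
  simp only [lt_rowLenTilde_iff hn, lt_colLenTilde_iff hn]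

lemma tendsto_Pn_lt_tilde_of_lt {c : ℝ}
    (hc : Tendsto (fun n : ℕ => meanMaxInc k n / √n) atTop (nhds c)) (hck : c < 2 * k)
    (mI mD : ℕ → ℝ) :
    Tendsto (fun n : ℕ => Pn fun σ : Equiv.Perm (Fin n) =>
      ∀ j ∈ Icc 1 k, mI j < rowLenTilde j σ ∧ mD j < colLenTilde j σ) atTop (nhds 0) := by
  refine tendsto_of_tendsto_of_tendsto_of_le_of_le' tendsto_const_nhds
    (tendsto_Pn_sub_rpow_le_maxIncUnion hc hck (-∑ i ∈ range k, mI (i + 1)))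
    (Eventually.of_forall fun n => Pn_nonneg _) ?_
  filter_upwards [eventually_gt_atTop 0] with n hn
  refine Pn_mono fun σ hσ => ?_
  have hrow : ∀ i ∈ range k,
      mI (i + 1) * (n : ℝ) ^ ((1 : ℝ) / 6) + 2 * √n ≤ (permShape σ i : ℝ) := fun i hi => by
    rw [← rowLen_succ]
    have hi' := mem_range.1 hi
    exact ((lt_rowLenTilde_iff hn).1 (hσ (i + 1) (mem_Icc.2 ⟨by lia, by lia⟩)).1).le
  have hsum := sum_le_sum hrow
  rw [sum_add_distrib, sum_const, card_range, nsmul_eq_mul, ← sum_mul] at hsum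
  rw [maxIncUnion_eq_sum_permShape]
  push_cast
  linarith

end Normalized

/-! ### Spearman's uniform metric -/

section Spearman

variable {n : ℕ}

/-- The indices at distance less than `M` from one of the two ends of `Fin n`. A permutation with
`ρ_∞ > n - M` is witnessed by a point with both coordinates in this set. -/
def nearEnds (n M : ℕ) : Finset (Fin n) := {i | (i : ℕ) < M ∨ n ≤ i + M}

lemma mem_nearEnds {M : ℕ} {i : Fin n} : i ∈ nearEnds n M ↔ (i : ℕ) < M ∨ n ≤ i + M := by
  simp [nearEnds]

lemma card_nearEnds_le (n M : ℕ) : #(nearEnds n M) ≤ 2 * M := by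
  have hlow : #{i : Fin n | (i : ℕ) < M} ≤ M := by
    rw [Fin.card_filter_val_lt]
    exact min_le_right _ _
  have hhigh : #{i : Fin n | n ≤ i + M} ≤ M := by
    refine (card_le_card_of_injOn Fin.rev (fun i hi => ?_) Fin.rev_injective.injOn).trans hlow
    simp only [coe_filter, mem_univ, true_and, Set.mem_ofPred_eq, Fin.val_rev] at hi ⊢
    lia
  rw [nearEnds, filter_or, two_mul]
  exact (card_union_le _ _).trans (add_le_add hlow hhigh)

lemma rhoInfTilde_lt_iff (hn : 0 < n) {m : ℝ} {σ : Equiv.Perm (Fin n)} : rhoInfTilde σ < m ↔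
    ∃ i, (n : ℝ) - m * √n < ((((σ i : ℕ) : ℤ) - ((i : ℕ) : ℤ)).natAbs : ℝ) := by
  rw [rhoInfTilde, div_lt_iff₀ (by positivity), sub_lt_comm]
  constructor
  · intro h
    obtain ⟨i, -, hi⟩ := exists_mem_eq_sup (univ : Finset (Fin n)) ⟨⟨0, hn⟩, mem_univ _⟩
      fun i : Fin n => (((σ i : ℕ) : ℤ) - ((i : ℕ) : ℤ)).natAbs
    exact ⟨i, hi ▸ h⟩
  · rintro ⟨i, hi⟩
    exact hi.trans_le (Nat.cast_le.2 (le_sup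
      (f := fun i : Fin n => (((σ i : ℕ) : ℤ) - ((i : ℕ) : ℤ)).natAbs) (mem_univ i)))

lemma rhoInfTilde_lt_of_pointsIn_eq (hn : 0 < n) {m : ℝ} {M : ℕ} (hM : m * √n ≤ M)
    {σ τ : Equiv.Perm (Fin n)}
    (h : pointsIn (nearEnds n M) (nearEnds n M) σ = pointsIn (nearEnds n M) (nearEnds n M) τ)
    (hσ : rhoInfTilde σ < m) : rhoInfTilde τ < m := by
  rw [rhoInfTilde_lt_iff hn] at hσ ⊢
  obtain ⟨i, hi⟩ := hσ
  have hfar : n < (((σ i : ℕ) : ℤ) - ((i : ℕ) : ℤ)).natAbs + M := by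
    suffices (n : ℝ) < ((((σ i : ℕ) : ℤ) - ((i : ℕ) : ℤ)).natAbs : ℝ) + M by exact_mod_cast this
    linarith
  have hmem : (i, σ i) ∈ pointsIn (nearEnds n M) (nearEnds n M) σ := by
    rw [mem_pointsIn, mem_nearEnds, mem_nearEnds]
    exact ⟨by omega, by omega, rfl⟩
  rw [h, mem_pointsIn] at hmem
  exact ⟨i, hmem.2.2 ▸ hi⟩

lemma expect_card_pointsIn (A B : Finset (Fin n)) :
    𝔼 σ : Equiv.Perm (Fin n), (#(pointsIn A B σ) : ℝ) = #A * #B / n := by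
  have happly : ∀ i ∈ A, 𝔼 σ : Equiv.Perm (Fin n), (if σ i ∈ B then (1 : ℝ) else 0) = #B / n :=
    fun i _ => by
      rw [expect_perm_apply (fun j => if j ∈ B then (1 : ℝ) else 0) i,
        Fintype.expect_eq_sum_div_card, sum_boole, filter_univ_mem, Fintype.card_fin]
  simp only [card_pointsIn, ← sum_boole, expect_sum_comm, sum_congr rfl happly, sum_const,
    nsmul_eq_mul, mul_div_assoc]

lemma Pn_lt_card_pointsIn_le (A B : Finset (Fin n)) (R : ℕ) :
    Pn (fun σ : Equiv.Perm (Fin n) => R < #(pointsIn A B σ)) ≤ #A * #B / n / (R + 1) := by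
  rw [← expect_card_pointsIn]
  exact Pn_le_expect_div (by positivity) (fun σ => by positivity) fun σ hσ => mod_cast hσ

lemma eventually_exists_mul_sqrt_le (m : ℝ) : ∀ᶠ n : ℕ in atTop, ∃ M : ℕ,
    m * √n ≤ M ∧ 2 * M + 2 * M < n ∧ (2 * M : ℝ) ^ 2 ≤ 4 * (|m| + 1) ^ 2 * n := by
  filter_upwards [tendsto_sqrt_natCast_atTop.eventually_gt_atTop (4 * (|m| + 1))] with n hn
  have hs : 1 ≤ √(n : ℝ) := by linarith [abs_nonneg m]
  have hsq : √(n : ℝ) * √n = n := Real.mul_self_sqrt n.cast_nonneg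
  have hM : (⌈|m| * √n⌉₊ : ℝ) ≤ (|m| + 1) * √n := by
    linarith [Nat.ceil_lt_add_one (show 0 ≤ |m| * √n by positivity)]
  refine ⟨⌈|m| * √n⌉₊, (by gcongr; exact le_abs_self m : m * √n ≤ |m| * √n).trans
    (Nat.le_ceil _), ?_, ?_⟩
  · suffices (2 * ⌈|m| * √n⌉₊ + 2 * ⌈|m| * √n⌉₊ : ℝ) < n by exact_mod_cast this
    nlinarith
  · calc (2 * ⌈|m| * √n⌉₊ : ℝ) ^ 2 ≤ (2 * ((|m| + 1) * √n)) ^ 2 := by gcongr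
      _ = 4 * (|m| + 1) ^ 2 * (√n * √n) := by ring
      _ = 4 * (|m| + 1) ^ 2 * n := by rw [hsq]

end Spearman

section Independence

variable {F : ∀ n : ℕ, Equiv.Perm (Fin n) → Prop}

lemma eventually_abs_Pn_rhoInfTilde_and_sub_mul_le (m : ℝ) (R : ℕ) : ∀ᶠ n : ℕ in atTop,
    |Pn (fun σ => rhoInfTilde σ < m ∧ F n σ) -
      Pn (fun σ : Equiv.Perm (Fin n) => rhoInfTilde σ < m) * Pn (F n)| ≤
      2 * (Pn (SwapBoundary R (F n)) + 4 * (|m| + 1) ^ 2 / (R + 1)) := by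
  filter_upwards [eventually_exists_mul_sqrt_le m, eventually_gt_atTop 0] with n ⟨M, hm, hMn, hM⟩ hn
  have hcard := card_nearEnds_le n M
  have hcard' : (#(nearEnds n M) : ℝ) ≤ 2 * M := mod_cast hcard
  refine (abs_Pn_and_sub_le (A := nearEnds n M) (B := nearEnds n M) (by lia) (F n) R
    fun σ τ h hσ => rhoInfTilde_lt_of_pointsIn_eq hn hm h hσ).trans ?_
  gcongr
  refine (Pn_lt_card_pointsIn_le _ _ R).trans ?_
  gcongr
  rw [div_le_iff₀ (by positivity), ← sq]
  exact le_trans (by gcongr) hM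

lemma tendsto_Pn_rhoInfTilde_and_sub_mul_of_swapBoundary (m : ℝ)
    (hF : ∀ R, Tendsto (fun n => Pn (SwapBoundary R (F n))) atTop (nhds 0)) :
    Tendsto (fun n : ℕ => Pn (fun σ => rhoInfTilde σ < m ∧ F n σ) -
      Pn (fun σ : Equiv.Perm (Fin n) => rhoInfTilde σ < m) * Pn (F n)) atTop (nhds 0) := by
  refine Metric.tendsto_nhds.2 fun ε hε => ?_
  have htail : Tendsto (fun R : ℕ => 4 * (|m| + 1) ^ 2 / (R + 1 : ℝ)) atTop (nhds 0) :=
    tendsto_const_nhds.div_atTop (tendsto_natCast_atTop_atTop.atTop_add tendsto_const_nhds)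
  obtain ⟨R, hR⟩ := (htail.eventually (gt_mem_nhds (show 0 < ε / 4 by positivity))).exists
  filter_upwards [eventually_abs_Pn_rhoInfTilde_and_sub_mul_le (F := F) m R,
    (hF R).eventually (gt_mem_nhds (show 0 < ε / 4 by positivity))] with n hn hFn
  rw [Real.dist_eq, sub_zero]
  linarith

lemma tendsto_Pn_and_sub_mul_of_tendsto_zero {E : ∀ n : ℕ, Equiv.Perm (Fin n) → Prop}
    (hF : Tendsto (fun n => Pn (F n)) atTop (nhds 0)) :
    Tendsto (fun n : ℕ => Pn (fun σ => E n σ ∧ F n σ) - Pn (E n) * Pn (F n)) atTop (nhds 0) := by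
  refine squeeze_zero_norm (fun n => ?_) hF
  have hand : Pn (fun σ => E n σ ∧ F n σ) ≤ Pn (F n) := Pn_mono fun σ h => h.2
  have hmul : Pn (E n) * Pn (F n) ≤ Pn (F n) :=
    mul_le_of_le_one_left (Pn_nonneg _) (Pn_le_one _)
  rw [Real.norm_eq_abs]
  exact abs_sub_le_of_nonneg_of_le (Pn_nonneg _) hand (mul_nonneg (Pn_nonneg _) (Pn_nonneg _)) hmul

end Independence

/-- `ρ̃_∞` is asymptotically independent of the random vector
`(I_1, …, I_k, D_1, …, D_k)` of the first `k` rows and columns of the RSK shape. -/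
theorem rhoInfTilde_asymp_indep_RSK (k : ℕ) (mρ : ℝ) (mI mD : ℕ → ℝ) :
    Tendsto (fun n : ℕ =>
        Pn (fun σ : Equiv.Perm (Fin n) =>
            rhoInfTilde σ < mρ ∧
              ∀ j ∈ Finset.Icc 1 k, mI j < rowLenTilde j σ ∧ mD j < colLenTilde j σ) -
          Pn (fun σ : Equiv.Perm (Fin n) => rhoInfTilde σ < mρ) *
            Pn (fun σ : Equiv.Perm (Fin n) =>
              ∀ j ∈ Finset.Icc 1 k, mI j < rowLenTilde j σ ∧ mD j < colLenTilde j σ))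
      atTop (nhds 0) := by
  obtain ⟨c, hc⟩ := exists_tendsto_meanMaxInc_div_sqrt k
  have hc_le : c ≤ 2 * k := by
    refine le_of_tendsto hc ?_
    filter_upwards [eventually_gt_atTop 0] with n hn
    exact div_le_of_le_mul₀ (by positivity) (by positivity) (meanMaxInc_le k n)
  rcases hc_le.lt_or_eq with hlt | rfl
  · exact tendsto_Pn_and_sub_mul_of_tendsto_zero (tendsto_Pn_lt_tilde_of_lt hc hlt mI mD)
  · exact tendsto_Pn_rhoInfTilde_and_sub_mul_of_swapBoundary mρ
      (tendsto_Pn_swapBoundary_lt_tilde hc mI mD)
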